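/- arXiv:2506.04187 — 7 statements merged into one kernel-verified Lean document; each statement's English description precedes it below -/
import Mathlib

section
/- Let γ=(γ_q)_{q≥1} be a sequence of real numbers contained in a finite set {σ_1, σ_2, …, σ_ℓ} ⊂ ℝ, and let ψ:ℕ→ℝ≥0 be decreasing with ∑_{q=1}^∞ ψ(q) = ∞. Then there exists σ ∈ {σ_1, …, σ_ℓ} such that meas(W(𝟙_{{q : γ_q = σ}}·ψ, γ)) = 1, where 𝟙_{{q : γ_q = σ}}·ψ equals ψ(q) when γ_q = σ and 0 otherwise. In particular meas(W(ψ,γ)) = 1. -/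
open MeasureTheory

/-- Distance from a real number to the nearest integer. -/
noncomputable def distNearestInt (x : ℝ) : ℝ := |x - round x|

/-- The set of `α ∈ [0,1]` with `‖qα - γ_q‖ < ψ q` for infinitely many `q ≥ 1`. -/
def WSet (ψ : ℕ → ℝ) (γ : ℕ → ℝ) : Set ℝ :=
  {α | α ∈ Set.Icc (0:ℝ) 1 ∧
    {q : ℕ | 1 ≤ q ∧ distNearestInt (q * α - γ q) < ψ q}.Infinite}


lemma cell_bad (σ : ℝ) (Q K : ℕ) (hK : 1 ≤ K) (hQ : 1 ≤ Q) (T : Finset (ℕ × ℤ))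
    (hT : ∀ t ∈ T, Q ≤ t.1 ∧ t.1 < 2 * Q)
    (hcell : ∀ s ∈ T, ∀ t ∈ T, |(t.1 : ℝ) * (s.2 + σ) - s.1 * (t.2 + σ)| < 1 / 4)
    (hcard : K + 1 ≤ T.card) :
    ∃ (h : ℕ) (p : ℤ), 1 ≤ h ∧ h * K ≤ Q ∧ IsCoprime (h : ℤ) p ∧
      ∀ t ∈ T, (K : ℝ) * |h * (t.2 + σ) - p * t.1| ≤ 1 := by
  have hinj : ∀ s ∈ T, ∀ t ∈ T, s.1 = t.1 → s = t := by
    intro s hs t ht hst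
    have h1 := hcell s hs t ht
    rw [hst] at h1
    have h2 : (t.1 : ℝ) * (s.2 + σ) - t.1 * (t.2 + σ) = ((t.1 * (s.2 - t.2) : ℤ) : ℝ) := by
      push_cast; ring
    rw [h2, ← Int.cast_abs] at h1
    have h3 : |(t.1 * (s.2 - t.2) : ℤ)| < 1 := by
      have : ((|(t.1 * (s.2 - t.2) : ℤ)| : ℤ) : ℝ) < ((1 : ℤ) : ℝ) := by
        push_cast at h1 ⊢; linarith
      exact_mod_cast this
    have h4 := Int.abs_lt_one_iff.mp h3
    have h5 := (hT t ht).1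
    rcases mul_eq_zero.mp h4 with h | h
    · exfalso; omega
    · exact Prod.ext hst (by omega)
  have hne : T.Nonempty := Finset.card_pos.mp (by omega)
  obtain ⟨t0, ht0, hmin⟩ := T.exists_min_image Prod.fst hne
  obtain ⟨t1, ht1, hmax⟩ := T.exists_max_image Prod.fst hne
  have hlt : t0.1 < t1.1 := by
    by_contra hcon
    have : T.card ≤ 1 := Finset.card_le_one.mpr (fun a ha b hb => hinj a ha b hb (by
      have := hmin a ha; have := hmin b hb; have := hmax a ha; have := hmax b hb; omega))
    omega
  obtain ⟨n, hn⟩ : ∃ n : ℕ, t1.1 = t0.1 + n := ⟨t1.1 - t0.1, by omega⟩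
  have hnpos : 0 < n := by omega
  set P : ℤ := t1.2 - t0.2 with hP
  have hnR : (t1.1 : ℝ) = t0.1 + n := by exact_mod_cast hn
  have hPR : (P : ℝ) = t1.2 - t0.2 := by rw [hP]; push_cast; ring
  have hdet : ∀ t ∈ T, (n : ℤ) * (t.2 - t0.2) = ((t.1 : ℤ) - t0.1) * P := by
    intro t ht
    have h1 := hcell t ht t1 ht1
    have h2 := hcell t ht t0 ht0
    have h3 := hcell t0 ht0 t1 ht1
    have h4 : |(n : ℤ) * (t.2 - t0.2) - ((t.1 : ℤ) - t0.1) * P| < 1 := by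
      have : ((|(n : ℤ) * (t.2 - t0.2) - ((t.1 : ℤ) - t0.1) * P| : ℤ) : ℝ) < ((1 : ℤ) : ℝ) := by
        push_cast
        rw [hPR]
        rw [hnR] at h1 h3
        rw [abs_lt] at *
        constructor <;> linarith
      exact_mod_cast this
    have := Int.abs_lt_one_iff.mp h4
    linarith
  obtain ⟨g, h, p, hgpos, hcop, hgn, hgP⟩ : ∃ (g h : ℕ) (p : ℤ), 0 < g ∧ IsCoprime (h : ℤ) p ∧
      n = g * h ∧ P = g * p := by
    have hg : 0 < Int.gcd n P := Int.gcd_pos_of_ne_zero_left _ (by omega)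
    obtain ⟨n', P', h1, h2, h3⟩ := Int.exists_gcd_one hg
    have hn' : 0 ≤ n' := by
      by_contra hc
      push Not at hc
      have : (n : ℤ) < 0 := by rw [h2]; exact mul_neg_of_neg_of_pos hc (by exact_mod_cast hg)
      omega
    refine ⟨Int.gcd n P, n'.toNat, P', hg, ?_, ?_, ?_⟩
    · rw [Int.toNat_of_nonneg hn']; exact Int.isCoprime_iff_gcd_eq_one.mpr h1
    · zify; rw [Int.toNat_of_nonneg hn']; linarith
    · linarith
  have hhpos : 0 < h := by
    rcases Nat.eq_zero_or_pos h with h0 | h0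
    · rw [h0] at hgn; omega
    · exact h0
  have hdvd : ∀ t ∈ T, h ∣ t.1 - t0.1 := by
    intro t ht
    have h1 := hdet t ht
    rw [hgn, hgP] at h1
    push_cast at h1
    have h2 : (h : ℤ) * (t.2 - t0.2) = ((t.1 : ℤ) - t0.1) * p := by
      have : (g : ℤ) ≠ 0 := by omega
      apply mul_left_cancel₀ this
      linarith
    have h3 : (h : ℤ) ∣ (t.1 : ℤ) - t0.1 := hcop.dvd_of_dvd_mul_right ⟨_, h2.symm⟩
    have h4 := hmin t ht
    have h5 : ((t.1 - t0.1 : ℕ) : ℤ) = (t.1 : ℤ) - t0.1 := by omega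
    rw [← h5] at h3
    exact_mod_cast h3
  have hKg : K ≤ g := by
    have : T.card ≤ (Finset.range (g + 1)).card := by
      apply Finset.card_le_card_of_injOn (fun t => (t.1 - t0.1) / h)
      · intro t ht
        have h1 := hmax t ht
        simp only [Finset.coe_range, Set.mem_Iio]
        have : (t.1 - t0.1) / h ≤ (g * h) / h := Nat.div_le_div_right (by omega)
        rw [Nat.mul_div_cancel _ hhpos] at this
        omega
      · intro s hs t ht hst
        apply hinj s hs t ht
        obtain ⟨a, ha⟩ := hdvd s hs
        obtain ⟨b, hb⟩ := hdvd t ht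
        simp only [ha, hb, Nat.mul_div_cancel_left _ hhpos] at hst
        have := hmin s hs
        have := hmin t ht
        rw [hst] at ha
        omega
    rw [Finset.card_range] at this
    omega
  refine ⟨h, p, hhpos, ?_, hcop, ?_⟩
  · have h1 := (hT t0 ht0).1
    have h2 := (hT t1 ht1).2
    calc h * K ≤ h * g := Nat.mul_le_mul_left _ hKg
      _ = n := by rw [hgn, mul_comm]
      _ ≤ Q := by omega
  · intro t ht
    have h1 := hcell t ht t1 ht1
    have h2 := hcell t ht t0 ht0
    have h3 : (g : ℝ) * |h * (t.2 + σ) - p * t.1| ≤ 1 := by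
      have : (g : ℝ) = |(g : ℝ)| := (abs_of_nonneg (by positivity)).symm
      rw [this, ← abs_mul]
      have hn2 : (n : ℝ) = g * h := by exact_mod_cast hgn
      have hP2 : (P : ℝ) = g * p := by exact_mod_cast hgP
      have : (g : ℝ) * (h * (t.2 + σ) - p * t.1) = n * (t.2 + σ) - P * t.1 := by
        rw [hn2, hP2]; ring
      rw [this, hPR]
      rw [hnR] at h1
      rw [abs_lt] at *
      rw [abs_le]
      constructor <;> linarith
    refine le_trans ?_ h3
    gcongr

lemma fiber_count (σ : ℝ) (Q K : ℕ) (hK : 3 ≤ K) (P : Finset (ℕ × ℤ))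
    (hP : ∀ t ∈ P, Q ≤ t.1 ∧ t.1 < 2 * Q) (h : ℕ) (hh : 1 ≤ h) (hhQ : h ≤ Q) (p : ℤ)
    (hcop : IsCoprime (h : ℤ) p)
    (hb : ∀ t ∈ P, (K : ℝ) * |h * (t.2 + σ) - p * t.1| ≤ 1) :
    (P.card : ℝ) ≤ 3 * Q / h := by
  have hK' : (3 : ℝ) ≤ K := by exact_mod_cast hK
  have hle : ∀ t ∈ P, |(h : ℝ) * (t.2 + σ) - p * t.1| ≤ 1 / 3 := by
    intro t ht
    have := hb t ht
    have h0 := abs_nonneg ((h : ℝ) * (t.2 + σ) - p * t.1)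
    nlinarith
  have hkey : ∀ s ∈ P, ∀ t ∈ P, (h : ℤ) * (s.2 - t.2) = p * ((s.1 : ℤ) - t.1) := by
    intro s hs t ht
    have h1 := hle s hs
    have h2 := hle t ht
    have h4 : |(h : ℤ) * (s.2 - t.2) - p * ((s.1 : ℤ) - t.1)| < 1 := by
      have : ((|(h : ℤ) * (s.2 - t.2) - p * ((s.1 : ℤ) - t.1)| : ℤ) : ℝ) < ((1 : ℤ) : ℝ) := by
        push_cast
        rw [abs_le] at *
        rw [abs_lt]
        constructor <;> linarith
      exact_mod_cast this
    have := Int.abs_lt_one_iff.mp h4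
    linarith
  have hc : P.card ≤ (Finset.Icc (Q / h) (2 * Q / h)).card := by
    apply Finset.card_le_card_of_injOn (fun t => t.1 / h)
    · intro t ht
      have := hP t ht
      simp only [Finset.coe_Icc, Set.mem_Icc]
      exact ⟨Nat.div_le_div_right this.1, Nat.div_le_div_right this.2.le⟩
    · intro s hs t ht hst
      have h1 := hkey s hs t ht
      have h2 : (h : ℤ) ∣ (s.1 : ℤ) - t.1 := hcop.dvd_of_dvd_mul_left ⟨_, h1.symm⟩
      have h3 : t.1 % h = s.1 % h := (Nat.modEq_iff_dvd.mpr h2)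
      have h4 : s.1 = t.1 := by
        have e1 := Nat.div_add_mod s.1 h
        have e2 := Nat.div_add_mod t.1 h
        simp only at hst
        rw [hst, ← h3] at e1
        omega
      rw [h4] at h1
      have h5 : s.2 - t.2 = 0 := by
        have h0 : (h : ℤ) ≠ 0 := by omega
        have : (h : ℤ) * (s.2 - t.2) = 0 := by rw [h1]; ring
        exact (mul_eq_zero.mp this).resolve_left h0
      exact Prod.ext h4 (by omega)
  rw [Nat.card_Icc] at hc
  have h1 : 2 * Q / h + 1 - Q / h ≤ Q / h + 2 := by
    have : 2 * Q / h ≤ Q / h + Q / h + 1 := by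
      rw [two_mul, Nat.add_div (by omega)]
      split_ifs <;> omega
    generalize 2 * Q / h = A at *
    generalize Q / h = B at *
    omega
  have h2 : (P.card : ℝ) ≤ ((Q / h : ℕ) : ℝ) + 2 := by exact_mod_cast hc.trans h1
  have h3 : ((Q / h : ℕ) : ℝ) ≤ (Q : ℝ) / h := Nat.cast_div_le
  have hpos : (0 : ℝ) < h := by exact_mod_cast hh
  have h4 : (1 : ℝ) ≤ (Q : ℝ) / h := by
    rw [le_div_iff₀ hpos]; exact_mod_cast (by omega : 1 * h ≤ Q)
  have h5 : 3 * (Q : ℝ) / h = 3 * ((Q : ℝ) / h) := by ring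
  rw [h5]; linarith

lemma int_Icc_card (x y : ℝ) (hxy : 0 ≤ y - x + 1) :
    ((Finset.Icc ⌈x⌉ ⌊y⌋).card : ℝ) ≤ y - x + 1 := by
  rw [Int.card_Icc]
  rcases le_total 0 (⌊y⌋ + 1 - ⌈x⌉) with h | h
  · have : (((⌊y⌋ + 1 - ⌈x⌉).toNat : ℤ) : ℝ) = ((⌊y⌋ + 1 - ⌈x⌉ : ℤ) : ℝ) := by
      rw [Int.toNat_of_nonneg h]
    have h2 : (((⌊y⌋ + 1 - ⌈x⌉).toNat : ℕ) : ℝ) = (⌊y⌋ : ℝ) + 1 - ⌈x⌉ := by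
      rw [← Int.cast_natCast, this]; push_cast; ring
    rw [h2]
    have := Int.floor_le y
    have := Int.le_ceil x
    linarith
  · rw [Int.toNat_of_nonpos h]; simpa using hxy

open Classical in
lemma bad_count (σ u v : ℝ) (huv : u < v) (Q K : ℕ) (hK : 3 ≤ K) (P : Finset (ℕ × ℤ))
    (hP : ∀ t ∈ P, Q ≤ t.1 ∧ t.1 < 2 * Q)
    (hPu : ∀ t ∈ P, (t.1 : ℝ) * u ≤ t.2 + σ ∧ (t.2 + σ : ℝ) < t.1 * v) 
    (hb : ∀ t ∈ P, ∃ (h : ℕ) (p : ℤ), 1 ≤ h ∧ h * K ≤ Q ∧ IsCoprime (h : ℤ) p ∧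
      (K : ℝ) * |h * (t.2 + σ) - p * t.1| ≤ 1) :
    (P.card : ℝ) ≤ ∑ h ∈ Finset.Icc 1 (Q / K), (h * (v - u) + 3) * (3 * (Q : ℝ) / h) := by
  have hsub : P ⊆ (Finset.Icc 1 (Q / K)).biUnion (fun h =>
      (Finset.Icc ⌈(h : ℝ) * u - 1⌉ ⌊(h : ℝ) * v + 1⌋).biUnion (fun p =>
        P.filter (fun t => IsCoprime (h : ℤ) p ∧ (K : ℝ) * |h * (t.2 + σ) - p * t.1| ≤ 1))) := by
    intro t ht
    obtain ⟨h, p, h1, h2, h3, h4⟩ := hb t ht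
    simp only [Finset.mem_biUnion, Finset.mem_filter, Finset.mem_Icc]
    refine ⟨h, ⟨h1, (Nat.le_div_iff_mul_le (by omega)).mpr h2⟩, p, ?_, ht, h3, h4⟩
    have hK' : (3 : ℝ) ≤ K := by exact_mod_cast hK
    have h0 := abs_nonneg ((h : ℝ) * (t.2 + σ) - p * t.1)
    have h5 : |(h : ℝ) * (t.2 + σ) - p * t.1| ≤ 1 := by nlinarith
    have h6 : (1 : ℝ) ≤ t.1 := by
      have := hP t ht
      have : 1 ≤ t.1 := by omega
      exact_mod_cast this
    have h7 := hPu t ht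
    have hh : (0 : ℝ) ≤ h := by positivity
    rw [abs_le] at h5
    rw [Int.ceil_le, Int.le_floor]
    have h8 : (h : ℝ) * (t.1 * u) ≤ h * (t.2 + σ) := mul_le_mul_of_nonneg_left h7.1 hh
    have h9 : (h : ℝ) * (t.2 + σ) ≤ h * (t.1 * v) := mul_le_mul_of_nonneg_left h7.2.le hh
    have hpos : (0 : ℝ) < t.1 := by linarith
    constructor
    · apply le_of_mul_le_mul_right _ hpos
      nlinarith
    · apply le_of_mul_le_mul_right _ hpos
      nlinarith
  have hc := (Finset.card_le_card hsub).trans Finset.card_biUnion_le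
  have hc' : (P.card : ℝ) ≤ ∑ h ∈ Finset.Icc 1 (Q / K),
    (((Finset.Icc ⌈(h : ℝ) * u - 1⌉ ⌊(h : ℝ) * v + 1⌋).biUnion (fun p =>
        P.filter (fun t => IsCoprime (h : ℤ) p ∧
          (K : ℝ) * |h * (t.2 + σ) - p * t.1| ≤ 1))).card : ℝ) := by
    exact_mod_cast hc
  refine hc'.trans (Finset.sum_le_sum ?_)
  intro h hh
  rw [Finset.mem_Icc] at hh
  have hhQ : h ≤ Q := hh.2.trans (Nat.div_le_self _ _)
  have hc2 : (((Finset.Icc ⌈(h : ℝ) * u - 1⌉ ⌊(h : ℝ) * v + 1⌋).biUnion (fun p =>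
        P.filter (fun t => IsCoprime (h : ℤ) p ∧
          (K : ℝ) * |h * (t.2 + σ) - p * t.1| ≤ 1))).card : ℝ) ≤ 
      ∑ p ∈ Finset.Icc ⌈(h : ℝ) * u - 1⌉ ⌊(h : ℝ) * v + 1⌋,
        ((P.filter (fun t => IsCoprime (h : ℤ) p ∧
          (K : ℝ) * |h * (t.2 + σ) - p * t.1| ≤ 1)).card : ℝ) := by
    exact_mod_cast Finset.card_biUnion_le
  refine hc2.trans ?_
  have hnn : (0 : ℝ) ≤ 3 * (Q : ℝ) / h := by positivity
  have hc3 : ∀ p ∈ Finset.Icc ⌈(h : ℝ) * u - 1⌉ ⌊(h : ℝ) * v + 1⌋,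
      ((P.filter (fun t => IsCoprime (h : ℤ) p ∧
          (K : ℝ) * |h * (t.2 + σ) - p * t.1| ≤ 1)).card : ℝ) ≤ 3 * (Q : ℝ) / h := by
    intro p _
    by_cases hcop : IsCoprime (h : ℤ) p
    · apply fiber_count σ Q K hK _ _ h hh.1 hhQ p hcop
      · intro t ht
        exact (Finset.mem_filter.mp ht).2.2
      · intro t ht
        exact hP t (Finset.mem_filter.mp ht).1
    · simp only [hcop, false_and, Finset.filter_false, Finset.card_empty, Nat.cast_zero]
      exact hnn
  refine (Finset.sum_le_card_nsmul _ _ _ hc3).trans ?_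
  rw [nsmul_eq_mul]
  apply mul_le_mul_of_nonneg_right _ hnn
  have hD : 0 ≤ (h : ℝ) * (v - u) := mul_nonneg (by positivity) (by linarith)
  refine (int_Icc_card _ _ (by linarith)).trans (by linarith)

lemma large_Q (D : ℝ) (hD : 0 < D) (ℓ : ℕ) (hℓ : 1 ≤ ℓ) : ∃ Q0 : ℕ, 1 ≤ Q0 ∧ ∀ Q : ℕ, Q0 ≤ Q →
    1 / (ℓ : ℝ) + 9 * ∑ h ∈ Finset.Icc 1 (Q / (12 * ℓ)), (1 / (h : ℝ)) ≤ Q * D / (4 * ℓ) := by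
  have hl : (0 : ℝ) < ℓ := by exact_mod_cast hℓ
  set ε : ℝ := D / (4 * ℓ) with hε
  have hεpos : 0 < ε := by positivity
  have h1 : ∀ᶠ x : ℝ in Filter.atTop, Real.log x ≤ ε / 18 * x := by
    have := Real.isLittleO_log_id_atTop.bound (show 0 < ε / 18 by positivity)
    filter_upwards [this, Filter.eventually_ge_atTop 0] with x hx hx0
    simp only [id, Real.norm_eq_abs, abs_of_nonneg hx0] at hx
    exact (le_abs_self _).trans hx
  have h2 : ∀ᶠ x : ℝ in Filter.atTop, 10 * 2 / ε ≤ x := Filter.eventually_ge_atTop _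
  have h3 := (tendsto_natCast_atTop_atTop (R := ℝ)).eventually (h1.and h2)
  obtain ⟨N, hN⟩ := Filter.eventually_atTop.mp h3
  refine ⟨max N 1, le_max_right _ _, ?_⟩
  intro Q hQ
  have hQN := hN Q ((le_max_left _ _).trans hQ)
  have hQ1 : 1 ≤ Q := (le_max_right _ _).trans hQ
  have hs : ∑ h ∈ Finset.Icc 1 (Q / (12 * ℓ)), (1 / (h : ℝ)) ≤ 1 + Real.log Q := by
    have h4 := harmonic_le_one_add_log Q
    rw [harmonic_eq_sum_Icc] at h4
    push_cast at h4
    refine le_trans ?_ h4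
    simp only [one_div]
    apply Finset.sum_le_sum_of_subset_of_nonneg
    · exact Finset.Icc_subset_Icc_right (Nat.div_le_self _ _)
    · intros; positivity
  have h5 : 1 / (ℓ : ℝ) ≤ 1 := by
    rw [div_le_one hl]; exact_mod_cast hℓ
  have h6 : (Q : ℝ) * D / (4 * ℓ) = ε * Q := by rw [hε]; ring
  rw [h6]
  have h7 : 10 * 2 ≤ ε * Q := by
    have := hQN.2
    rw [div_le_iff₀ hεpos] at this
    linarith
  linarith [hQN.1]

open Classical in
lemma hit_cells (ℓ : ℕ) (hℓ : 1 ≤ ℓ) (u v : ℝ) (huv : u < v) : ∃ Q0 : ℕ, ∀ Q : ℕ, Q0 ≤ Q →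
    ∀ (σ : ℝ) (S : Finset ℕ), (∀ q ∈ S, Q ≤ q ∧ q < 2 * Q) → Q ≤ ℓ * S.card →
    ∃ (M : Finset ℤ) (x : ℤ → ℝ), (Q : ℝ) ^ 2 * (v - u) ≤ 24 * ℓ ^ 2 * M.card ∧
      ∀ m ∈ M, u ≤ x m ∧ x m < v ∧ ⌊16 * (Q : ℝ) ^ 2 * x m⌋ = m ∧
        ∃ q ∈ S, ∃ a : ℤ, x m = (a + σ) / q := by
  obtain ⟨Q0, hQ0, hbig⟩ := large_Q (v - u) (by linarith) ℓ hℓ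
  refine ⟨Q0, ?_⟩
  intro Q hQ σ S hS hcard
  have hQ1 : 1 ≤ Q := hQ0.trans hQ
  have hbigQ := hbig Q hQ
  set K := 12 * ℓ with hKdef
  have hl : (0 : ℝ) < ℓ := by exact_mod_cast hℓ
  have hQR : (1 : ℝ) ≤ Q := by exact_mod_cast hQ1
  -- all points
  set P : Finset (ℕ × ℤ) := S.biUnion (fun q =>
    (Finset.Ico ⌈(q : ℝ) * u - σ⌉ ⌈(q : ℝ) * v - σ⌉).image (fun a => (q, a))) with hPdef
  have hmemP : ∀ t ∈ P, t.1 ∈ S ∧ (t.1 : ℝ) * u ≤ t.2 + σ ∧ (t.2 + σ : ℝ) < t.1 * v := by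
    intro t ht
    simp only [hPdef, Finset.mem_biUnion, Finset.mem_image, Finset.mem_Ico] at ht
    obtain ⟨q, hq, a, ⟨ha1, ha2⟩, rfl⟩ := ht
    rw [Int.ceil_le] at ha1
    rw [Int.lt_ceil] at ha2
    exact ⟨hq, by simp only; linarith, by simp only; linarith⟩
  have hPcard : (S.card : ℝ) * (Q * (v - u) - 1) ≤ P.card := by
    rw [hPdef, Finset.card_biUnion]
    · push_cast
      rw [← nsmul_eq_mul]
      apply Finset.card_nsmul_le_sum
      intro q hq
      rw [Finset.card_image_of_injective _ (fun a b h => (Prod.ext_iff.mp h).2), Int.card_Ico]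
      have h1 : ((⌈(q : ℝ) * v - σ⌉ - ⌈(q : ℝ) * u - σ⌉ : ℤ) : ℝ) ≤
          (((⌈(q : ℝ) * v - σ⌉ - ⌈(q : ℝ) * u - σ⌉).toNat : ℤ) : ℝ) := by
        exact_mod_cast Int.self_le_toNat _
      rw [Int.cast_natCast] at h1
      refine le_trans ?_ h1
      push_cast
      have h2 := Int.le_ceil ((q : ℝ) * v - σ)
      have h3 := Int.ceil_lt_add_one ((q : ℝ) * u - σ)
      have h4 : (Q : ℝ) ≤ q := by exact_mod_cast (hS q hq).1
      nlinarith
    · intro q _ r _ hqr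
      rw [Function.onFun, Finset.disjoint_left]
      intro t ht ht'
      simp only [Finset.mem_image] at ht ht'
      obtain ⟨a, _, rfl⟩ := ht
      obtain ⟨b, _, hb⟩ := ht'
      exact hqr (Prod.ext_iff.mp hb).1.symm
  set bad : ℕ × ℤ → Prop := fun t => ∃ (h : ℕ) (p : ℤ), 1 ≤ h ∧ h * K ≤ Q ∧
    IsCoprime (h : ℤ) p ∧ (K : ℝ) * |h * (t.2 + σ) - p * t.1| ≤ 1 with hbad
  have hBcard := bad_count σ u v huv Q K (by omega) (P.filter bad)
    (fun t ht => hS _ (hmemP t (Finset.mem_filter.mp ht).1).1)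
    (fun t ht => (hmemP t (Finset.mem_filter.mp ht).1).2)
    (fun t ht => (Finset.mem_filter.mp ht).2)
  have hBsum : ∑ h ∈ Finset.Icc 1 (Q / K), (h * (v - u) + 3) * (3 * (Q : ℝ) / h) ≤
      Q ^ 2 * (v - u) / (4 * ℓ) + 9 * Q * ∑ h ∈ Finset.Icc 1 (Q / K), (1 / (h : ℝ)) := by
    have h1 : ∑ h ∈ Finset.Icc 1 (Q / K), (h * (v - u) + 3) * (3 * (Q : ℝ) / h) =
        ∑ h ∈ Finset.Icc 1 (Q / K), (3 * Q * (v - u) + 9 * Q * (1 / (h : ℝ))) := by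
      apply Finset.sum_congr rfl
      intro h hh
      have : (h : ℝ) ≠ 0 := by
        have := (Finset.mem_Icc.mp hh).1
        positivity
      field_simp
      ring
    rw [h1, Finset.sum_add_distrib, Finset.sum_const, Nat.card_Icc, nsmul_eq_mul, ← Finset.mul_sum]
    have h2 : ((Q / K + 1 - 1 : ℕ) : ℝ) ≤ Q / (12 * ℓ) := by
      rw [Nat.add_sub_cancel]
      refine Nat.cast_div_le.trans ?_
      rw [hKdef]; push_cast; exact le_rfl
    have h3 : ((Q / K + 1 - 1 : ℕ) : ℝ) * (3 * Q * (v - u)) ≤ Q / (12 * ℓ) * (3 * Q * (v - u)) := by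
      apply mul_le_mul_of_nonneg_right h2
      have : 0 < v - u := by linarith
      positivity
    have h4 : (Q : ℝ) / (12 * ℓ) * (3 * Q * (v - u)) = Q ^ 2 * (v - u) / (4 * ℓ) := by
      field_simp
      ring
    linarith
  set G := P.filter (fun t => ¬ bad t) with hG
  have hsplit : ((P.filter bad).card : ℝ) + G.card = P.card := by
    exact_mod_cast Finset.card_filter_add_card_filter_not (s := P) bad
  set cell : ℕ × ℤ → ℤ := fun t => ⌊16 * (Q : ℝ) ^ 2 * ((t.2 + σ) / t.1)⌋ with hcelldef
  have hGcell : G.card ≤ K * (G.image cell).card := by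
    apply Finset.card_le_mul_card_image
    intro m hm
    by_contra hcon
    push Not at hcon
    obtain ⟨h, p, h1, h2, h3, h4⟩ := cell_bad σ Q K (by omega) hQ1 (G.filter (fun a => cell a = m))
      (fun t ht => hS _ (hmemP t (Finset.mem_filter.mp (Finset.mem_filter.mp ht).1).1).1)
      (by
        intro s hs t ht
        have es := (Finset.mem_filter.mp hs).2
        have et := (Finset.mem_filter.mp ht).2
        have e := Int.abs_sub_lt_one_of_floor_eq_floor (es.trans et.symm)
        have qs := hS _ (hmemP s (Finset.mem_filter.mp (Finset.mem_filter.mp hs).1).1).1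
        have qt := hS _ (hmemP t (Finset.mem_filter.mp (Finset.mem_filter.mp ht).1).1).1
        have s0 : (0 : ℝ) < s.1 := by exact_mod_cast (by omega : 0 < s.1)
        have t0 : (0 : ℝ) < t.1 := by exact_mod_cast (by omega : 0 < t.1)
        have s2 : (s.1 : ℝ) ≤ 2 * Q := by exact_mod_cast qs.2.le
        have t2 : (t.1 : ℝ) ≤ 2 * Q := by exact_mod_cast qt.2.le
        set X := (s.2 + σ) / (s.1 : ℝ) with hX
        set Y := (t.2 + σ) / (t.1 : ℝ) with hY
        have hX' : (s.2 + σ : ℝ) = X * s.1 := by rw [hX]; field_simp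
        have hY' : (t.2 + σ : ℝ) = Y * t.1 := by rw [hY]; field_simp
        rw [hX', hY']
        have e2 : (t.1 : ℝ) * (X * s.1) - s.1 * (Y * t.1) = (t.1 * s.1) * (X - Y) := by ring
        rw [e2, abs_mul, abs_of_pos (by positivity : (0 : ℝ) < t.1 * s.1)]
        rw [← mul_sub, abs_mul, abs_of_pos (by positivity : (0 : ℝ) < 16 * (Q : ℝ) ^ 2)] at e
        have e3 : (t.1 : ℝ) * s.1 ≤ (2 * Q) * (2 * Q) := by gcongr
        have e4 := mul_le_mul_of_nonneg_right e3 (abs_nonneg (X - Y))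
        nlinarith) (by omega)
    have hne : (G.filter (fun a => cell a = m)).Nonempty := Finset.card_pos.mp (by omega)
    obtain ⟨t, ht⟩ := hne
    have := (Finset.mem_filter.mp (Finset.mem_filter.mp ht).1).2
    exact this ⟨h, p, h1, h2, h3, h4 t ht⟩
  have hex : ∀ m : ℤ, ∃ y : ℝ, m ∈ G.image cell → (u ≤ y ∧ y < v ∧ ⌊16 * (Q : ℝ) ^ 2 * y⌋ = m ∧
        ∃ q ∈ S, ∃ a : ℤ, y = (a + σ) / q) := by
    intro m
    by_cases hm : m ∈ G.image cell
    · obtain ⟨t, ht, htm⟩ := Finset.mem_image.mp hm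
      have h1 := hmemP t (Finset.mem_filter.mp ht).1
      have h2 := hS _ h1.1
      have t0 : (0 : ℝ) < t.1 := by exact_mod_cast (by omega : 0 < t.1)
      refine ⟨(t.2 + σ) / t.1, fun _ => ⟨?_, ?_, htm, t.1, h1.1, t.2, rfl⟩⟩
      · rw [le_div_iff₀ t0]; linarith
      · rw [div_lt_iff₀ t0]; linarith
    · exact ⟨0, fun h => absurd h hm⟩
  choose x hx using hex
  refine ⟨G.image cell, x, ?_, hx⟩
  have hGc : (G.card : ℝ) ≤ 12 * ℓ * (G.image cell).card := by
    have : (G.card : ℝ) ≤ ((K * (G.image cell).card : ℕ) : ℝ) := by exact_mod_cast hGcell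
    rw [hKdef] at this
    push_cast at this
    exact this
  -- final arithmetic
  have hD : 0 < v - u := by linarith
  have hSc : (Q : ℝ) / ℓ ≤ S.card := by
    rw [div_le_iff₀ hl]
    have : (Q : ℝ) ≤ ((ℓ * S.card : ℕ) : ℝ) := by exact_mod_cast hcard
    push_cast at this; linarith
  have hsumnn : 0 ≤ ∑ h ∈ Finset.Icc 1 (Q / K), (1 / (h : ℝ)) :=
    Finset.sum_nonneg (fun _ _ => by positivity)
  set H := ∑ h ∈ Finset.Icc 1 (Q / K), (1 / (h : ℝ)) with hH
  have hQD : 0 ≤ Q * (v - u) - 1 := by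
    have h1 : 1 / (ℓ : ℝ) ≤ Q * (v - u) / (4 * ℓ) := by linarith
    have h2 : (Q : ℝ) * (v - u) / (4 * ℓ) = (Q * (v - u) / 4) * (1 / ℓ) := by field_simp
    rw [h2] at h1
    have h3 : (0 : ℝ) < 1 / ℓ := by positivity
    have h4 : 1 ≤ Q * (v - u) / 4 := by
      by_contra hc
      push Not at hc
      nlinarith
    linarith
  have hP1 : (Q : ℝ) / ℓ * (Q * (v - u) - 1) ≤ P.card :=
    (mul_le_mul_of_nonneg_right hSc hQD).trans hPcard
  have hQmul : (Q : ℝ) * (1 / ℓ + 9 * H) ≤ Q * (Q * (v - u) / (4 * ℓ)) :=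
    mul_le_mul_of_nonneg_left hbigQ (by linarith)
  have hfin : (Q : ℝ) ^ 2 * (v - u) / (2 * ℓ) ≤ G.card := by
    have e1 : (Q : ℝ) / ℓ * (Q * (v - u) - 1) = 4 * (Q ^ 2 * (v - u) / (4 * ℓ)) - Q * (1 / ℓ) := by
      field_simp
    have e2 : (Q : ℝ) ^ 2 * (v - u) / (2 * ℓ) = 2 * (Q ^ 2 * (v - u) / (4 * ℓ)) := by
      field_simp; norm_num
    have e3 : (Q : ℝ) * (Q * (v - u) / (4 * ℓ)) = Q ^ 2 * (v - u) / (4 * ℓ) := by ring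
    rw [e2]; rw [e1] at hP1; rw [e3] at hQmul
    linarith
  have h2 := hfin.trans hGc
  rw [div_le_iff₀ (by positivity)] at h2
  calc (Q : ℝ) ^ 2 * (v - u) ≤ _ := h2
    _ = _ := by ring

lemma cs_sets {ι : Type*} (I : Finset ι) (A : ι → Set ℝ) (hA : ∀ i, MeasurableSet (A i))
    (E : Set ℝ) (hE : MeasurableSet E) (hEf : volume E ≠ ⊤) (hsub : ∀ i ∈ I, A i ⊆ E) :
    (∑ i ∈ I, volume.real (A i)) ^ 2 ≤
      volume.real E * ∑ i ∈ I, ∑ j ∈ I, volume.real (A i ∩ A j) := by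
  have hfin : ∀ i ∈ I, volume (A i) ≠ ⊤ := fun i hi =>
    ne_top_of_le_ne_top hEf (measure_mono (hsub i hi))
  have hIntble : ∀ B : Set ℝ, MeasurableSet B → volume B ≠ ⊤ →
      Integrable (B.indicator (fun _ => (1 : ℝ))) volume := fun B hB hBf =>
    (integrable_indicator_iff hB).mpr (integrableOn_const hBf)
  have hval : ∀ B : Set ℝ, MeasurableSet B →
      ∫ x, B.indicator (fun _ => (1 : ℝ)) x = volume.real B := fun B hB => by
    rw [integral_indicator hB]; simp
  have key : ∀ t : ℝ, 0 ≤ volume.real E * (t * t) + (-2 * ∑ i ∈ I, volume.real (A i)) * t +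
      ∑ i ∈ I, ∑ j ∈ I, volume.real (A i ∩ A j) := by
    intro t
    have hpt : ∀ x : ℝ, (∑ i ∈ I, (A i).indicator (fun _ => (1 : ℝ)) x -
        t * E.indicator (fun _ => (1 : ℝ)) x) ^ 2 =
        (t * t) * E.indicator (fun _ => (1 : ℝ)) x +
        (-2 * t) * ∑ i ∈ I, (A i).indicator (fun _ => (1 : ℝ)) x +
        ∑ i ∈ I, ∑ j ∈ I, (A i ∩ A j).indicator (fun _ => (1 : ℝ)) x := by
      intro x
      have h1 : ∑ i ∈ I, ∑ j ∈ I, (A i ∩ A j).indicator (fun _ => (1 : ℝ)) x =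
          (∑ i ∈ I, (A i).indicator (fun _ => (1 : ℝ)) x) *
          (∑ i ∈ I, (A i).indicator (fun _ => (1 : ℝ)) x) := by
        rw [Finset.sum_mul_sum]
        refine Finset.sum_congr rfl (fun i _ => Finset.sum_congr rfl (fun j _ => ?_))
        by_cases h1 : x ∈ A i <;> by_cases h2 : x ∈ A j <;> simp [h1, h2]
      rw [h1]
      by_cases hx : x ∈ E
      · simp only [hx, Set.indicator_of_mem]; ring
      · have : ∑ i ∈ I, (A i).indicator (fun _ => (1 : ℝ)) x = 0 :=
          Finset.sum_eq_zero (fun i hi =>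
            Set.indicator_of_notMem (fun h => hx (hsub i hi h)) _)
        rw [this]; simp [hx]
    have h0 : 0 ≤ ∫ x : ℝ, (∑ i ∈ I, (A i).indicator (fun _ => (1 : ℝ)) x -
        t * E.indicator (fun _ => (1 : ℝ)) x) ^ 2 := integral_nonneg (fun x => sq_nonneg _)
    simp_rw [hpt] at h0
    have i1 := (hIntble E hE hEf).const_mul (t * t)
    have i2 : Integrable (fun x => ∑ i ∈ I, (A i).indicator (fun _ => (1 : ℝ)) x) volume :=
      integrable_finsetSum _ (fun i hi => hIntble _ (hA i) (hfin i hi))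
    have i3' : ∀ i ∈ I, ∀ j ∈ I,
        Integrable ((A i ∩ A j).indicator (fun _ => (1 : ℝ))) volume := fun i hi j _ =>
      hIntble _ ((hA i).inter (hA j))
        (ne_top_of_le_ne_top (hfin i hi) (measure_mono Set.inter_subset_left))
    have i3 : Integrable (fun x => ∑ i ∈ I, ∑ j ∈ I,
        (A i ∩ A j).indicator (fun _ => (1 : ℝ)) x) volume :=
      integrable_finsetSum _ (fun i hi => integrable_finsetSum _ (fun j hj => i3' i hi j hj))
    have i12 : Integrable (fun x => (t * t) * E.indicator (fun _ => (1 : ℝ)) x +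
        (-2 * t) * ∑ i ∈ I, (A i).indicator (fun _ => (1 : ℝ)) x) volume :=
      i1.add (i2.const_mul (-2 * t))
    rw [integral_add i12 i3,
      integral_add i1 (i2.const_mul (-2 * t)), integral_const_mul, integral_const_mul,
      hval E hE, integral_finsetSum _ (fun i hi => hIntble _ (hA i) (hfin i hi)),
      integral_finsetSum _ (fun i hi => integrable_finsetSum _ (fun j hj => i3' i hi j hj))] at h0
    have e1 : ∑ i ∈ I, ∫ x, (A i).indicator (fun _ => (1 : ℝ)) x =
        ∑ i ∈ I, volume.real (A i) := Finset.sum_congr rfl (fun i _ => hval _ (hA i))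
    have e2 : ∑ i ∈ I, ∫ x, ∑ j ∈ I, (A i ∩ A j).indicator (fun _ => (1 : ℝ)) x =
        ∑ i ∈ I, ∑ j ∈ I, volume.real (A i ∩ A j) := by
      refine Finset.sum_congr rfl (fun i hi => ?_)
      rw [integral_finsetSum _ (fun j hj => i3' i hi j hj)]
      exact Finset.sum_congr rfl (fun j _ => hval _ ((hA i).inter (hA j)))
    rw [e1, e2] at h0
    linarith
  have hd := discrim_le_zero key
  rw [discrim] at hd
  nlinarith

lemma full_of_local (U : Set ℝ) (hU : MeasurableSet U) (c : ℝ) (hc : 0 < c)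
    (h : ∀ x r : ℝ, 0 < r → c * r ≤ volume.real (U ∩ Metric.closedBall x r)) :
    ∀ᵐ x : ℝ, x ∈ U := by
  filter_upwards [Besicovitch.ae_tendsto_measure_inter_div_of_measurableSet volume hU] with x hx
  by_contra hxU
  rw [Set.indicator_of_notMem hxU] at hx
  have h1 : ENNReal.ofReal (c / 2) ≤ 0 := by
    refine ge_of_tendsto hx ?_
    filter_upwards [self_mem_nhdsWithin] with r hr
    have hr' : (0 : ℝ) < r := hr
    have h2 := h x r hr'
    rw [Real.volume_closedBall, ENNReal.le_div_iff_mul_le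
      (Or.inl (by simpa using hr')) (Or.inl ENNReal.ofReal_ne_top),
      ← ENNReal.ofReal_mul (by positivity)]
    apply ENNReal.ofReal_le_of_le_toReal
    refine le_trans (by linarith) h2
  simp only [nonpos_iff_eq_zero, ENNReal.ofReal_eq_zero] at h1
  linarith

lemma count_cells (M : Finset ℤ) (x : ℤ → ℝ) (N a b : ℝ) (hN : 0 < N) (hab : a ≤ b)
    (hx : ∀ m ∈ M, ⌊N * x m⌋ = m) (hab' : ∀ m ∈ M, a ≤ x m ∧ x m ≤ b) :
    (M.card : ℝ) ≤ N * (b - a) + 2 := by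
  have hsub : M ⊆ Finset.Icc ⌈N * a - 1⌉ ⌊N * b⌋ := by
    intro m hm
    rw [Finset.mem_Icc, Int.ceil_le, Int.le_floor]
    have h1 := hx m hm
    have h2 := Int.floor_le (N * x m)
    have h3 := Int.lt_floor_add_one (N * x m)
    rw [h1] at h2 h3
    have h4 := mul_le_mul_of_nonneg_left (hab' m hm).1 hN.le
    have h5 := mul_le_mul_of_nonneg_left (hab' m hm).2 hN.le
    constructor <;> linarith
  have h1 : (M.card : ℝ) ≤ (Finset.Icc ⌈N * a - 1⌉ ⌊N * b⌋).card := by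
    exact_mod_cast Finset.card_le_card hsub
  have h2 : 0 ≤ N * (b - a) := mul_nonneg hN.le (by linarith)
  refine h1.trans ((int_Icc_card _ _ (by linarith)).trans (by linarith))

open Classical in
lemma overlap (M1 M2 : Finset ℤ) (x1 x2 : ℤ → ℝ) (N ρ1 ρ2 : ℝ) (hN : 0 < N) (h1 : 0 ≤ ρ1)
    (h2 : 0 ≤ ρ2) (hx2 : ∀ m ∈ M2, ⌊N * x2 m⌋ = m) :
    ∑ m ∈ M1, ∑ n ∈ M2, volume.real (Metric.ball (x1 m) ρ1 ∩ Metric.ball (x2 n) ρ2) ≤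
      M1.card * (2 * ρ2 * (N * (2 * (ρ1 + ρ2)) + 2)) := by
  rw [← nsmul_eq_mul]
  apply Finset.sum_le_card_nsmul
  intro m _
  have hz : ∀ n ∈ M2, volume.real (Metric.ball (x1 m) ρ1 ∩ Metric.ball (x2 n) ρ2) ≤
      if |x2 n - x1 m| ≤ ρ1 + ρ2 then 2 * ρ2 else 0 := by
    intro n _
    split_ifs with hd
    · refine (measureReal_mono Set.inter_subset_right measure_ball_lt_top.ne).trans ?_
      rw [Real.volume_real_ball h2]
    · have : Metric.ball (x1 m) ρ1 ∩ Metric.ball (x2 n) ρ2 = ∅ := by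
        apply Set.eq_empty_of_forall_notMem
        rintro y ⟨hy1, hy2⟩
        rw [Metric.mem_ball, Real.dist_eq, abs_lt] at hy1 hy2
        apply hd
        rw [abs_le]
        constructor <;> linarith
      rw [this]; simp
  refine (Finset.sum_le_sum hz).trans ?_
  rw [← Finset.sum_filter, Finset.sum_const, nsmul_eq_mul, mul_comm]
  apply mul_le_mul_of_nonneg_left _ (by positivity)
  have := count_cells (M2.filter (fun n => |x2 n - x1 m| ≤ ρ1 + ρ2)) x2 N
    (x1 m - (ρ1 + ρ2)) (x1 m + (ρ1 + ρ2)) hN (by linarith)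
    (fun n hn => hx2 n (Finset.mem_filter.mp hn).1)
    (fun n hn => by
      have := (Finset.mem_filter.mp hn).2
      rw [abs_le] at this
      constructor <;> linarith)
  refine this.trans (le_of_eq (by ring))

lemma geom_sum_le (F : Finset ℕ) (k : ℕ) :
    ∑ j ∈ F, (if j ≤ k then (4 : ℝ) ^ j / 4 ^ k else 0) ≤ 2 := by
  have h1 : ∑ j ∈ F, (if j ≤ k then (4 : ℝ) ^ j / 4 ^ k else 0) ≤
      ∑ j ∈ Finset.range (k + 1), (4 : ℝ) ^ j / 4 ^ k := by
    rw [← Finset.sum_filter]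
    apply Finset.sum_le_sum_of_subset_of_nonneg
    · intro j hj
      rw [Finset.mem_filter] at hj
      rw [Finset.mem_range]; omega
    · intros; positivity
  refine h1.trans ?_
  rw [← Finset.sum_div, div_le_iff₀ (by positivity), geom_sum_eq (by norm_num)]
  have : (0 : ℝ) < 4 ^ k := by positivity
  rw [pow_succ]
  linarith

lemma local_bound (ℓ : ℕ) (hℓ : 1 ≤ ℓ) (σ : ℝ) (S : Set ℕ) (ψ : ℕ → ℝ)
    (hψdec : ∀ q r : ℕ, 1 ≤ q → q ≤ r → ψ r ≤ ψ q) (κ : Set ℕ)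
    (hdens : ∀ k ∈ κ, ∃ T : Finset ℕ, (∀ q ∈ T, 2 ^ k ≤ q ∧ q < 2 * 2 ^ k ∧ q ∈ S) ∧
      2 ^ k ≤ ℓ * T.card)
    (w : ℕ → ℝ) (hw0 : ∀ k, 0 ≤ w k) (hw1 : ∀ k, w k ≤ 1)
    (hwψ : ∀ k, w k ≤ 2 ^ k * ψ (2 ^ (k + 1)))
    (hdiv : ∀ k1 : ℕ, ∃ F : Finset ℕ, (∀ k ∈ F, k1 ≤ k ∧ k ∈ κ) ∧ 1 ≤ ∑ k ∈ F, w k)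
    (k1 : ℕ) (x0 r : ℝ) (hr : 0 < r) :
    1 / (912384 * (ℓ : ℝ) ^ 4) * r ≤ volume.real
      ({α : ℝ | ∃ q : ℕ, k1 ≤ q ∧ q ∈ S ∧ ∃ a : ℤ, |q * α - σ - a| < ψ q} ∩
        Metric.closedBall x0 r) := by
  obtain ⟨Q0, hQ0⟩ := hit_cells ℓ hℓ (x0 - r / 2) (x0 + r / 2) (by linarith)
  have hpow : ∃ k3 : ℕ, ∀ k, k3 ≤ k → 1 ≤ 4 ^ k * r := by
    obtain ⟨k3, hk3⟩ := pow_unbounded_of_one_lt (1 / r) (by norm_num : (1 : ℝ) < 4)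
    refine ⟨k3, fun k hk => ?_⟩
    have h1 : (4 : ℝ) ^ k3 ≤ 4 ^ k := pow_le_pow_right₀ (by norm_num) hk
    rw [div_lt_iff₀ hr] at hk3
    nlinarith
  obtain ⟨k3, hk3⟩ := hpow
  obtain ⟨F, hF, hW⟩ := hdiv (max k1 (max Q0 k3))
  have hFk1 : ∀ k ∈ F, k1 ≤ k := fun k hk => (le_max_left _ _).trans (hF k hk).1
  have hFQ0 : ∀ k ∈ F, Q0 ≤ k := fun k hk =>
    (le_max_left _ _).trans ((le_max_right _ _).trans (hF k hk).1)
  have hFk3 : ∀ k ∈ F, 1 ≤ 4 ^ k * r := fun k hk =>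
    hk3 k ((le_max_right _ _).trans ((le_max_right _ _).trans (hF k hk).1))
  have hex : ∀ k ∈ F, ∃ (M : Finset ℤ) (x : ℤ → ℝ), (4 : ℝ) ^ k * r ≤ 24 * ℓ ^ 2 * M.card ∧
      ∀ m ∈ M, x0 - r / 2 ≤ x m ∧ x m < x0 + r / 2 ∧ ⌊16 * (4 : ℝ) ^ k * x m⌋ = m ∧
        ∃ q : ℕ, (2 ^ k ≤ q ∧ q < 2 * 2 ^ k ∧ q ∈ S) ∧ ∃ a : ℤ, x m = (a + σ) / q := by
    intro k hk
    obtain ⟨T, hT1, hT2⟩ := hdens k (hF k hk).2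
    obtain ⟨M, x, hM1, hM2⟩ := hQ0 (2 ^ k) ((hFQ0 k hk).trans Nat.lt_two_pow_self.le) σ T
      (fun q hq => ⟨(hT1 q hq).1, (hT1 q hq).2.1⟩) hT2
    have e : (((2 ^ k : ℕ) : ℝ)) ^ 2 = 4 ^ k := by
      push_cast; rw [← pow_mul, mul_comm, pow_mul]; norm_num
    rw [e] at hM1 hM2
    refine ⟨M, x, ?_, ?_⟩
    · have : x0 + r / 2 - (x0 - r / 2) = r := by ring
      rw [this] at hM1; exact hM1
    · intro m hm
      obtain ⟨a1, a2, a3, q, hq, a, ha⟩ := hM2 m hm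
      exact ⟨a1, a2, a3, q, hT1 q hq, a, ha⟩
  choose! M x hM hx using hex
  set ρ : ℕ → ℝ := fun k => w k / (2 * 4 ^ k) with hρ
  have hρ0 : ∀ k, 0 ≤ ρ k := fun k => div_nonneg (hw0 k) (by positivity)
  have hρw : ∀ k, 2 * ρ k * 4 ^ k = w k := fun k => by
    simp only [hρ]; field_simp
  set U := {α : ℝ | ∃ q : ℕ, k1 ≤ q ∧ q ∈ S ∧ ∃ a : ℤ, |q * α - σ - a| < ψ q} with hU
  set A : (Σ _ : ℕ, ℤ) → Set ℝ := fun i => Metric.ball (x i.1 i.2) (ρ i.1) with hA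
  have hUopen : IsOpen U := by
    have : U = ⋃ q : ℕ, ⋃ (_ : k1 ≤ q ∧ q ∈ S), ⋃ a : ℤ, {α : ℝ | |q * α - σ - a| < ψ q} := by
      ext α
      simp [hU, and_assoc]
    rw [this]
    refine isOpen_iUnion (fun q => isOpen_iUnion (fun _ => isOpen_iUnion (fun a => ?_)))
    exact isOpen_lt (by fun_prop) continuous_const
  have hE : MeasurableSet (U ∩ Metric.closedBall x0 r) :=
    hUopen.measurableSet.inter measurableSet_closedBall
  have hEf : volume (U ∩ Metric.closedBall x0 r) ≠ ⊤ :=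
    ne_top_of_le_ne_top measure_closedBall_lt_top.ne (measure_mono Set.inter_subset_right)
  have hsub : ∀ i ∈ F.sigma M, A i ⊆ U ∩ Metric.closedBall x0 r := by
    rintro ⟨k, m⟩ hi y hy
    obtain ⟨hk, hm⟩ := Finset.mem_sigma.mp hi
    simp only at hk hm
    simp only [hA, Metric.mem_ball, Real.dist_eq] at hy
    obtain ⟨b1, b2, b3, q, ⟨hq1, hq2, hq3⟩, a, ha⟩ := hx k hk m hm
    have h4pos : (0 : ℝ) < 4 ^ k := by positivity
    constructor
    · refine ⟨q, ?_, hq3, a, ?_⟩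
      · exact (hFk1 k hk).trans (Nat.lt_two_pow_self.le.trans hq1)
      · have hqpos : 0 < q := lt_of_lt_of_le (by positivity) hq1
        have hqR : (0 : ℝ) < q := by exact_mod_cast hqpos
        have e1 : (q : ℝ) * y - σ - a = q * (y - x k m) := by
          rw [ha]; field_simp; ring
        rw [e1, abs_mul, abs_of_pos hqR]
        have hq2' : (q : ℝ) ≤ 2 * 2 ^ k := by exact_mod_cast hq2.le
        have h1 : (q : ℝ) * |y - x k m| < q * ρ k := mul_lt_mul_of_pos_left hy hqR
        have h2 : (q : ℝ) * ρ k ≤ 2 * 2 ^ k * ρ k := mul_le_mul_of_nonneg_right hq2' (hρ0 k)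
        have h3 : 2 * 2 ^ k * ρ k ≤ ψ (2 ^ (k + 1)) := by
          have e2 : (4 : ℝ) ^ k = 2 ^ k * 2 ^ k := by rw [← mul_pow]; norm_num
          have h5 := hρw k
          have h6 := hwψ k
          rw [← h5, e2] at h6
          have h7 : (0 : ℝ) < 2 ^ k := by positivity
          have h8 : (2 : ℝ) ^ k * (2 * 2 ^ k * ρ k) ≤ 2 ^ k * ψ (2 ^ (k + 1)) := by linarith
          exact le_of_mul_le_mul_left h8 h7
        have h4 : ψ (2 ^ (k + 1)) ≤ ψ q := hψdec q _ hqpos (by rw [pow_succ]; omega)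
        linarith
    · rw [Metric.mem_closedBall, Real.dist_eq]
      have h1 : ρ k ≤ r / 2 := by
        simp only [hρ]
        rw [div_le_iff₀ (by positivity)]
        have := hw1 k
        have := hFk3 k hk
        linarith
      rw [abs_lt] at hy
      rw [abs_le]
      constructor <;> linarith
  have hcs := cs_sets (F.sigma M) A (fun i => measurableSet_ball) _ hE hEf hsub
  set e := volume.real (U ∩ Metric.closedBall x0 r) with he
  set W := ∑ k ∈ F, w k with hWdef
  have hl : (0 : ℝ) < ℓ := by exact_mod_cast hℓ
  -- first moment
  have hfirst : r * W / (24 * ℓ ^ 2) ≤ ∑ i ∈ F.sigma M, volume.real (A i) := by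
    rw [Finset.sum_sigma, hWdef, Finset.mul_sum, Finset.sum_div]
    apply Finset.sum_le_sum
    intro k hk
    simp only [hA]
    simp_rw [Real.volume_real_ball (hρ0 k)]
    rw [Finset.sum_const, nsmul_eq_mul,
      div_le_iff₀ (by positivity), ← hρw k]
    have := mul_le_mul_of_nonneg_left (hM k hk) (by linarith [hρ0 k] : 0 ≤ 2 * ρ k)
    linarith
  -- second moment
  set V : ℕ → ℕ → ℝ := fun k j => ∑ m ∈ M k, ∑ n ∈ M j,
    volume.real (Metric.ball (x k m) (ρ k) ∩ Metric.ball (x j n) (ρ j)) with hV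
  have hVsymm : ∀ k j, V k j = V j k := by
    intro k j
    simp only [hV]
    rw [Finset.sum_comm]
    simp_rw [Set.inter_comm]
  have hVle : ∀ k ∈ F, ∀ j ∈ F, j ≤ k →
      V k j ≤ 288 * r * (w k * w j) + 324 * r * (w k * (4 ^ j / 4 ^ k)) := by
    intro k hk j hj hjk
    rw [hVsymm]
    have h4k : (0 : ℝ) < 4 ^ k := by positivity
    have h4j : (0 : ℝ) < 4 ^ j := by positivity
    have h1 := overlap (M j) (M k) (x j) (x k) (16 * 4 ^ k) (ρ j) (ρ k) (by positivity)
      (hρ0 j) (hρ0 k) (fun m hm => (hx k hk m hm).2.2.1)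
    refine h1.trans ?_
    have h2 := count_cells (M j) (x j) (16 * 4 ^ j) (x0 - r / 2) (x0 + r / 2) (by positivity)
      (by linarith) (fun m hm => (hx j hj m hm).2.2.1)
      (fun m hm => ⟨(hx j hj m hm).1, (hx j hj m hm).2.1.le⟩)
    have h3 := hFk3 j hj
    have h4 : ((M j).card : ℝ) ≤ 18 * (4 ^ j * r) := by
      have : 16 * (4 : ℝ) ^ j * (x0 + r / 2 - (x0 - r / 2)) = 16 * (4 ^ j * r) := by ring
      linarith
    have h5 : 16 * 4 ^ k * (2 * (ρ j + ρ k)) + 2 ≤ 32 * 4 ^ k * ρ j + 18 := by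
      have a1 := hρw k
      have a2 := hw1 k
      nlinarith
    have h6 : ((M j).card : ℝ) * (2 * ρ k * (16 * 4 ^ k * (2 * (ρ j + ρ k)) + 2)) ≤
        18 * (4 ^ j * r) * (2 * ρ k * (32 * 4 ^ k * ρ j + 18)) := by
      have := hρ0 k
      have := hρ0 j
      gcongr
    refine h6.trans (le_of_eq ?_)
    simp only [hρ]
    field_simp
    ring
  have hVle2 : ∀ k ∈ F, ∀ j ∈ F, V k j ≤ 288 * r * (w k * w j) +
      324 * r * (w k * (if j ≤ k then (4 : ℝ) ^ j / 4 ^ k else 0)) +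
      324 * r * (w j * (if k ≤ j then (4 : ℝ) ^ k / 4 ^ j else 0)) := by
    intro k hk j hj
    rcases le_total j k with h | h
    · have h1 := hVle k hk j hj h
      have h2 : 0 ≤ 324 * r * (w j * (if k ≤ j then (4 : ℝ) ^ k / 4 ^ j else 0)) := by
        have := hw0 j
        split_ifs <;> positivity
      rw [if_pos h]
      linarith
    · have h1 := hVle j hj k hk h
      rw [hVsymm] at h1
      have h2 : 0 ≤ 324 * r * (w k * (if j ≤ k then (4 : ℝ) ^ j / 4 ^ k else 0)) := by
        have := hw0 k
        split_ifs <;> positivity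
      rw [if_pos h]
      linarith
  have hW0 : 0 ≤ W := by linarith
  have hsumg : ∑ k ∈ F, w k * ∑ j ∈ F, (if j ≤ k then (4 : ℝ) ^ j / 4 ^ k else 0) ≤ W * 2 := by
    rw [hWdef, Finset.sum_mul]
    apply Finset.sum_le_sum
    intro k _
    exact mul_le_mul_of_nonneg_left (geom_sum_le F k) (hw0 k)
  have hsecond : ∑ i ∈ F.sigma M, ∑ j ∈ F.sigma M, volume.real (A i ∩ A j) ≤
      1584 * r * W ^ 2 := by
    have e1 : ∑ i ∈ F.sigma M, ∑ j ∈ F.sigma M, volume.real (A i ∩ A j) =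
        ∑ k ∈ F, ∑ j ∈ F, V k j := by
      rw [Finset.sum_sigma]
      refine Finset.sum_congr rfl (fun k _ => ?_)
      simp_rw [Finset.sum_sigma]
      rw [Finset.sum_comm]
    rw [e1]
    refine (Finset.sum_le_sum (fun k hk => Finset.sum_le_sum (fun j hj => hVle2 k hk j hj))).trans ?_
    simp_rw [Finset.sum_add_distrib]
    have s1 : ∑ k ∈ F, ∑ j ∈ F, 288 * r * (w k * w j) = 288 * r * W ^ 2 := by
      rw [sq, hWdef, Finset.sum_mul_sum]
      simp_rw [Finset.mul_sum]
    have s2 : ∑ k ∈ F, ∑ j ∈ F,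
        324 * r * (w k * (if j ≤ k then (4 : ℝ) ^ j / 4 ^ k else 0)) ≤ 324 * r * (W * 2) := by
      simp_rw [← Finset.mul_sum]
      exact mul_le_mul_of_nonneg_left hsumg (by positivity)
    have s3 : ∑ k ∈ F, ∑ j ∈ F,
        324 * r * (w j * (if k ≤ j then (4 : ℝ) ^ k / 4 ^ j else 0)) ≤ 324 * r * (W * 2) := by
      rw [Finset.sum_comm]
      exact s2
    rw [s1]
    have : r * W ≤ r * W ^ 2 := by
      apply mul_le_mul_of_nonneg_left _ hr.le
      nlinarith
    linarith
  have he0 : 0 ≤ e := measureReal_nonneg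
  have hfin1 : (r * W / (24 * ℓ ^ 2)) ^ 2 ≤ e * (1584 * r * W ^ 2) :=
    (pow_le_pow_left₀ (by positivity) hfirst 2).trans
      (hcs.trans (mul_le_mul_of_nonneg_left hsecond he0))
  have hWpos : 0 < W := by linarith
  have e2 : (r * W / (24 * ℓ ^ 2)) ^ 2 =
      (1 / (912384 * (ℓ : ℝ) ^ 4) * r) * (1584 * r * W ^ 2) := by
    field_simp; norm_num
  rw [e2] at hfin1
  exact le_of_mul_le_mul_right hfin1 (by positivity)

lemma colour (ℓ : ℕ) (c : ℕ → Fin ℓ) (w : ℕ → ℝ) (hw : ¬ Summable w) (hw0 : ∀ k, 0 ≤ w k) :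
    ∃ i : Fin ℓ, ∀ k1 : ℕ, ∃ F : Finset ℕ, (∀ k ∈ F, k1 ≤ k ∧ k ∈ {k | c k = i}) ∧
      1 ≤ ∑ k ∈ F, w k := by
  classical
  by_contra hcon
  push Not at hcon
  apply hw
  have hs : ∀ i : Fin ℓ, Summable ({k | c k = i}.indicator w) := by
    intro i
    obtain ⟨k1, hk1⟩ := hcon i
    rw [← summable_nat_add_iff k1]
    apply summable_of_sum_le (c := 1)
    · intro n; exact Set.indicator_nonneg (fun k _ => hw0 k) _
    · intro u
      have h1 := hk1 ((u.map (addRightEmbedding k1)).filter (fun k => c k = i)) (by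
        intro k hk
        rw [Finset.mem_filter, Finset.mem_map] at hk
        obtain ⟨⟨a, _, rfl⟩, h⟩ := hk
        exact ⟨by simp, h⟩)
      rw [Finset.sum_filter, Finset.sum_map] at h1
      refine le_trans (le_of_eq ?_) h1.le
      refine Finset.sum_congr rfl (fun n _ => ?_)
      simp [Set.indicator_apply]
  have h2 : w = fun k => ∑ i : Fin ℓ, ({k | c k = i}.indicator w) k := by
    ext k
    simp [Set.indicator_apply]
  rw [h2]
  exact summable_sum (fun i _ => hs i)

lemma diverge (ψ : ℕ → ℝ) (hψ0 : ∀ q, 0 ≤ ψ q)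
    (hψdec : ∀ q r : ℕ, 1 ≤ q → q ≤ r → ψ r ≤ ψ q) (hdiv : ¬ Summable ψ) :
    ¬ Summable (fun k : ℕ => min ((2 : ℝ) ^ k * ψ (2 ^ (k + 1))) 1) := by
  intro hs
  apply hdiv
  rw [← summable_condensed_iff_of_nonneg hψ0 (fun m n hm hmn => hψdec m n hm hmn)]
  rw [← summable_nat_add_iff 1]
  have h1 : Summable (fun k : ℕ => (2 : ℝ) ^ k * ψ (2 ^ (k + 1))) := by
    have h0 := hs.tendsto_atTop_zero
    have h2 : ∀ᶠ k : ℕ in Filter.atTop, min ((2 : ℝ) ^ k * ψ (2 ^ (k + 1))) 1 < 1 :=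
      h0.eventually (gt_mem_nhds one_pos)
    obtain ⟨N, hN⟩ := Filter.eventually_atTop.mp h2
    rw [← summable_nat_add_iff N] at hs ⊢
    refine hs.congr (fun k => ?_)
    have := hN (k + N) (by omega)
    rcases min_lt_iff.mp this with h | h
    · exact min_eq_left h.le
    · exact absurd h (lt_irrefl _)
  refine (h1.mul_left 2).congr (fun k => ?_)
  rw [pow_succ (2 : ℝ)]; ring

lemma pigeon (ℓ : ℕ) (σ : Fin ℓ → ℝ) (γ : ℕ → ℝ)
    (hγ : ∀ q : ℕ, 1 ≤ q → ∃ k : Fin ℓ, γ q = σ k) (k : ℕ) :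
    ∃ i : Fin ℓ, ∃ T : Finset ℕ, (∀ q ∈ T, 2 ^ k ≤ q ∧ q < 2 * 2 ^ k ∧ q ∈ {q | γ q = σ i}) ∧
      2 ^ k ≤ ℓ * T.card := by
  classical
  by_contra hcon
  push Not at hcon
  have hsub : Finset.Ico (2 ^ k) (2 * 2 ^ k) ⊆ (Finset.univ : Finset (Fin ℓ)).biUnion
      (fun i => (Finset.Ico (2 ^ k) (2 * 2 ^ k)).filter (fun q => γ q = σ i)) := by
    intro q hq
    have h1 := Finset.mem_Ico.mp hq
    obtain ⟨i, hi⟩ := hγ q (le_trans Nat.one_le_two_pow h1.1)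
    rw [Finset.mem_biUnion]
    exact ⟨i, Finset.mem_univ _, Finset.mem_filter.mpr ⟨hq, hi⟩⟩
  have h1 := (Finset.card_le_card hsub).trans Finset.card_biUnion_le
  rw [Nat.card_Ico] at h1
  obtain ⟨i0, _⟩ := hγ 1 le_rfl
  have hlpos : 0 < ℓ := i0.pos
  have h2 : ∀ i : Fin ℓ, ℓ * ((Finset.Ico (2 ^ k) (2 * 2 ^ k)).filter
      (fun q => γ q = σ i)).card < 2 ^ k := fun i => hcon i _ (by
    intro q hq
    rw [Finset.mem_filter, Finset.mem_Ico] at hq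
    exact ⟨hq.1.1, hq.1.2, hq.2⟩)
  have h3 : ∑ i : Fin ℓ, ℓ * ((Finset.Ico (2 ^ k) (2 * 2 ^ k)).filter
      (fun q => γ q = σ i)).card < ∑ _i : Fin ℓ, 2 ^ k :=
    Finset.sum_lt_sum_of_nonempty ⟨i0, Finset.mem_univ _⟩ (fun i _ => h2 i)
  rw [← Finset.mul_sum, Finset.sum_const, Finset.card_univ, Fintype.card_fin, smul_eq_mul] at h3
  have h4 := Nat.lt_of_mul_lt_mul_left h3
  omega

theorem stmt3 (ℓ : ℕ) (σ : Fin ℓ → ℝ) (γ : ℕ → ℝ)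
    (hγ : ∀ q : ℕ, 1 ≤ q → ∃ k : Fin ℓ, γ q = σ k)
    (ψ : ℕ → ℝ) (hψ0 : ∀ q, 0 ≤ ψ q)
    (hψdec : ∀ q r : ℕ, 1 ≤ q → q ≤ r → ψ r ≤ ψ q)
    (hdiv : ¬ Summable ψ) :
    (∃ k : Fin ℓ, volume (WSet ({q : ℕ | γ q = σ k}.indicator ψ) γ) = 1) ∧
      volume (WSet ψ γ) = 1 := by
  have hIcc : volume (Set.Icc (0 : ℝ) 1) = 1 := by simp
  have hmain : ∃ k : Fin ℓ, volume (WSet ({q : ℕ | γ q = σ k}.indicator ψ) γ) = 1 := by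
    obtain ⟨i0, _⟩ := hγ 1 le_rfl
    have hℓ : 1 ≤ ℓ := i0.pos
    choose c hc using pigeon ℓ σ γ hγ
    have hw0 : ∀ k : ℕ, 0 ≤ min ((2 : ℝ) ^ k * ψ (2 ^ (k + 1))) 1 := fun k =>
      le_min (mul_nonneg (by positivity) (hψ0 _)) zero_le_one
    obtain ⟨i, hi⟩ := colour ℓ c _ (diverge ψ hψ0 hψdec hdiv) hw0
    refine ⟨i, ?_⟩
    have hae : ∀ k1 : ℕ, ∀ᵐ α : ℝ, α ∈ {α : ℝ | ∃ q : ℕ, k1 ≤ q ∧ q ∈ {q | γ q = σ i} ∧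
        ∃ a : ℤ, |q * α - σ i - a| < ψ q} := by
      intro k1
      have hl : (0 : ℝ) < ℓ := by exact_mod_cast hℓ
      refine full_of_local _ ?_ (1 / (912384 * (ℓ : ℝ) ^ 4)) (by positivity) ?_
      · apply IsOpen.measurableSet
        have : {α : ℝ | ∃ q : ℕ, k1 ≤ q ∧ q ∈ {q | γ q = σ i} ∧
            ∃ a : ℤ, |q * α - σ i - a| < ψ q} =
            ⋃ q : ℕ, ⋃ (_ : k1 ≤ q ∧ q ∈ {q | γ q = σ i}), ⋃ a : ℤ,
              {α : ℝ | |q * α - σ i - a| < ψ q} := by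
          ext α
          simp [and_assoc]
        rw [this]
        refine isOpen_iUnion (fun q => isOpen_iUnion (fun _ => isOpen_iUnion (fun a => ?_)))
        exact isOpen_lt (by fun_prop) continuous_const
      · intro x0 r hr
        refine local_bound ℓ hℓ (σ i) {q | γ q = σ i} ψ hψdec {k | c k = i} ?_ _ hw0
          (fun k => min_le_right _ _) (fun k => min_le_left _ _) hi k1 x0 r hr
        intro k hk
        have hk' : c k = i := hk
        rw [← hk']
        exact hc k
    have hall := ae_all_iff.mpr hae
    rw [← hIcc]
    apply measure_congr
    filter_upwards [hall] with α hα
    apply propext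
    constructor
    · intro h
      exact h.1
    · intro h
      refine ⟨h, ?_⟩
      rw [Set.infinite_iff_exists_gt]
      intro n
      obtain ⟨q, hq1, hq2, a, ha⟩ := hα (n + 1)
      have hq2' : γ q = σ i := hq2
      refine ⟨q, ⟨by omega, ?_⟩, by omega⟩
      have hq3 : {q : ℕ | γ q = σ i}.indicator ψ q = ψ q :=
        Set.indicator_of_mem (s := {q : ℕ | γ q = σ i}) hq2' ψ
      rw [hq3, hq2', distNearestInt]
      exact (round_le _ a).trans_lt ha
  refine ⟨hmain, ?_⟩
  obtain ⟨k, hk⟩ := hmain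
  apply le_antisymm
  · rw [← hIcc]
    exact measure_mono (fun α hα => hα.1)
  · rw [← hk]
    apply measure_mono
    intro α hα
    refine ⟨hα.1, hα.2.mono ?_⟩
    intro q hq
    exact ⟨hq.1, hq.2.trans_le (Set.indicator_le_self' (fun _ _ => hψ0 _) q)⟩
end

section
/- Let γ ∈ ℝ, let {π_1, …, π_ℓ} be a partition of ℕ, and let ψ:ℕ→ℝ≥0 be decreasing with ∑_{q=1}^∞ ψ(q) = ∞. Then there exists a partition element π ∈ {π_1, …, π_ℓ} such that meas(W(𝟙_{π}·ψ, γ)) = 1, where 𝟙_{π}·ψ equals ψ(q) for q ∈ π and 0 otherwise. -/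
open MeasureTheory

theorem aux_geom (m n : ℕ) : ∑ k ∈ Finset.Ico m n, (2:ℝ) / 4096 ^ (n - k) ≤ 1/800 := by
  induction n with
  | zero => simp
  | succ n ih =>
    by_cases h : m ≤ n
    · rw [Finset.sum_Ico_succ_top h]
      have : ∑ k ∈ Finset.Ico m n, (2:ℝ) / 4096 ^ (n + 1 - k) =
          (∑ k ∈ Finset.Ico m n, (2:ℝ) / 4096 ^ (n - k)) / 4096 := by
        rw [Finset.sum_div]
        apply Finset.sum_congr rfl
        intro k hk
        rw [Finset.mem_Ico] at hk
        rw [show n + 1 - k = (n - k) + 1 by omega, pow_succ, div_div]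
      rw [this]
      simp
      linarith
    · rw [Finset.Ico_eq_empty (by omega)]; simp

theorem aux_union (A : ℕ → Set ℝ) (hA : ∀ n, MeasurableSet (A n)) (hsub : ∀ n, A n ⊆ Set.Icc 0 1)
    (v : ℕ → ℝ) (hv : ∀ n, 0 ≤ v n)
    (h1 : ∀ n, v n / 200 ≤ volume.real (A n))
    (h2 : ∀ k n, k < n → volume.real (A k ∩ A n) ≤ v n * (v k + 2 / 4096 ^ (n - k)))
    (m n : ℕ) (hmn : m ≤ n) (hT : ∀ j < n, ∑ k ∈ Finset.Ico m j, v k ≤ 1/400) :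
    (∑ k ∈ Finset.Ico m n, v k) / 800 ≤ volume.real (⋃ k ∈ Finset.Ico m n, A k) := by
  have hfin : ∀ s : Set ℝ, s ⊆ Set.Icc 0 1 → volume s ≠ ⊤ := fun s hs =>
    ne_top_of_le_ne_top (by simp) (measure_mono hs)
  induction n, hmn using Nat.le_induction with
  | base => simp
  | succ n hmn ih =>
    have ih := ih (fun j hj => hT j (by omega))
    rw [Finset.sum_Ico_succ_top hmn]
    have hU : (⋃ k ∈ Finset.Ico m (n+1), A k) = (⋃ k ∈ Finset.Ico m n, A k) ∪ A n := by
      rw [← Finset.insert_Ico_right_eq_Ico_add_one hmn, Finset.set_biUnion_insert, Set.union_comm]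
    rw [hU]
    set U := ⋃ k ∈ Finset.Ico m n, A k with hUdef
    have hUs : U ⊆ Set.Icc 0 1 := Set.iUnion₂_subset fun k _ => hsub k
    have e1 := measureReal_union_add_inter (μ := volume) (s := U) (hA n) (hfin _ hUs) (hfin _ (hsub n))
    have e2 : volume.real (U ∩ A n) ≤ v n * (1/400 + 1/800) := by
      calc volume.real (U ∩ A n) = volume.real (⋃ k ∈ Finset.Ico m n, (A k ∩ A n)) := by
            rw [hUdef, Set.iUnion₂_inter]
        _ ≤ ∑ k ∈ Finset.Ico m n, volume.real (A k ∩ A n) := measureReal_biUnion_finset_le _ _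
        _ ≤ ∑ k ∈ Finset.Ico m n, v n * (v k + 2 / 4096 ^ (n - k)) := 
            Finset.sum_le_sum fun k hk => h2 k n (Finset.mem_Ico.1 hk).2
        _ = v n * (∑ k ∈ Finset.Ico m n, v k + ∑ k ∈ Finset.Ico m n, (2:ℝ) / 4096 ^ (n - k)) := by
            rw [← Finset.mul_sum, Finset.sum_add_distrib]
        _ ≤ _ := by
            apply mul_le_mul_of_nonneg_left _ (hv n)
            have := hT n (by omega)
            have := aux_geom m n
            linarith
    have := h1 n
    linarith

theorem aux_limsup (A : ℕ → Set ℝ) (hA : ∀ n, MeasurableSet (A n)) (hsub : ∀ n, A n ⊆ Set.Icc 0 1)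
    (v : ℕ → ℝ) (hv : ∀ n, 0 ≤ v n) (hdiv : ¬ Summable v)
    (h1 : ∀ n, v n / 200 ≤ volume.real (A n))
    (h2 : ∀ k n, k < n → volume.real (A k ∩ A n) ≤ v n * (v k + 2 / 4096 ^ (n - k))) :
    ENNReal.ofReal (1/320000) ≤ volume (⋂ m : ℕ, ⋃ k ≥ m, A k) := by
  have key : ∀ m, ENNReal.ofReal (1/320000) ≤ volume (⋃ k ≥ m, A k) := by
    intro m
    have hex : ∃ n, 1/400 < ∑ k ∈ Finset.Ico m n, v k := by
      by_contra hcon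
      push Not at hcon
      apply hdiv
      rw [← summable_nat_add_iff m]
      apply summable_of_sum_range_le (c := 1/400) (fun n => hv _)
      intro n
      have := hcon (m + n)
      rw [Finset.sum_Ico_eq_sum_range] at this
      simpa [add_comm] using this
    classical
    have hn := Nat.find_spec hex
    set n := Nat.find hex with hndef
    have hmn : m ≤ n := by
      by_contra hlt
      rw [Finset.Ico_eq_empty (by omega)] at hn
      norm_num at hn
    have := aux_union A hA hsub v hv h1 h2 m n hmn (fun j hj => not_lt.1 (Nat.find_min hex hj))
    have h3 : (1:ℝ)/320000 ≤ volume.real (⋃ k ∈ Finset.Ico m n, A k) := by linarith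
    calc ENNReal.ofReal (1/320000) ≤ ENNReal.ofReal (volume.real (⋃ k ∈ Finset.Ico m n, A k)) :=
          ENNReal.ofReal_le_ofReal h3
      _ ≤ volume (⋃ k ∈ Finset.Ico m n, A k) := ENNReal.ofReal_toReal_le
      _ ≤ _ := by
        apply measure_mono
        apply Set.iUnion₂_subset
        intro k hk
        exact Set.subset_biUnion_of_mem (u := A) (s := {k | k ≥ m}) (Finset.mem_Ico.1 hk).1
  have ht := tendsto_measure_iInter_atTop (μ := volume) (s := fun m : ℕ => ⋃ k ≥ m, A k)
    (fun m => (MeasurableSet.iUnion fun k => MeasurableSet.iUnion fun _ => hA k).nullMeasurableSet)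
    (fun a b hab => Set.biUnion_subset_biUnion_left fun k hk => le_trans hab hk)
    ⟨0, ne_top_of_le_ne_top (by simp) (measure_mono (Set.iUnion₂_subset fun k _ => hsub k) : _ ≤ volume (Set.Icc (0:ℝ) 1))⟩
  exact ge_of_tendsto' ht key

/-- inhomogeneous approximation -/
theorem aux_approx (γ α : ℝ) (Q : ℕ) (hQ : 0 < Q) (p : ℚ) (hp : |α - p| ≤ 1 / (Q * p.den))
    (h1 : p.den ≤ Q) (h2 : Q ≤ 16 * p.den) :
    ∃ (q : ℕ) (a : ℤ), Q ≤ q ∧ q ≤ 2 * Q ∧ |α - (a + γ) / q| ≤ 40 / (Q:ℝ)^2 := by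
  set s := p.den with hs
  have hs0 : 0 < s := p.pos
  have hsR : (0:ℝ) < s := by exact_mod_cast hs0
  have hQR : (0:ℝ) < Q := by exact_mod_cast hQ
  set m : ℤ := round (γ * s) with hm
  -- find q
  have hcop : IsCoprime p.num (s:ℤ) := by
    rw [Int.isCoprime_iff_gcd_eq_one]; exact p.reduced
  obtain ⟨u, w, huw⟩ := hcop
  set d : ℤ := (m * u - Q) % s with hd
  have hd0 : 0 ≤ d := Int.emod_nonneg _ (by omega)
  have hd1 : d < s := Int.emod_lt_of_pos _ (by omega)
  have hdm : d = (m*u - Q) - s * ((m * u - Q) / s) := by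
    rw [hd, Int.emod_def]
  set t := (m * u - Q) / (s:ℤ)
  have hq : ((Q + d.toNat : ℕ):ℤ) = m * u - s * t := by push_cast; rw [Int.toNat_of_nonneg hd0, hdm]; ring
  refine ⟨Q + d.toNat, -m * w - p.num * t, by omega, by omega, ?_⟩
  set q : ℕ := Q + d.toNat
  have hqR : (q:ℝ) = m * u - s * t := by exact_mod_cast hq
  have hq1 : (Q:ℝ) ≤ q := by exact_mod_cast (by omega : Q ≤ q)
  have hq2 : (q:ℝ) ≤ 2 * Q := by exact_mod_cast (by omega : q ≤ 2 * Q)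
  have hq0 : (0:ℝ) < q := by linarith
  have huwR : (u:ℝ) * p.num + w * s = 1 := by exact_mod_cast huw
  have hpR : (p:ℝ) = p.num / s := by rw [hs]; exact Rat.cast_def p
  have hmr : |γ * s - m| ≤ 1/2 := abs_sub_round _
  have e1 : (p:ℝ) - ((-m * w - p.num * t : ℤ) + γ) / q = (m - γ * s) / (s * q) := by
    rw [hpR]
    field_simp
    push_cast
    rw [hqR]
    linear_combination (m:ℝ) * huwR
  have e2 : |(m - γ * s) / (s * q)| ≤ 1 / (2 * (s * Q)) := by
    rw [abs_div, abs_of_pos (mul_pos hsR hq0), abs_sub_comm]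
    calc |γ * s - m| / (s * q) ≤ (1/2) / (s * Q) := by gcongr
      _ = _ := by field_simp
  have hsQ : (Q:ℝ) ≤ 16 * s := by exact_mod_cast h2
  have e3 : 1 / ((Q:ℝ) * s) ≤ 16 / (Q:ℝ)^2 := by
    rw [div_le_div_iff₀ (by positivity) (by positivity)]
    nlinarith
  calc |α - ((-m * w - p.num * t : ℤ) + γ) / q| = |(α - p) + ((p:ℝ) - ((-m * w - p.num * t : ℤ) + γ) / q)| := by ring_nf
    _ ≤ |α - p| + |(p:ℝ) - ((-m * w - p.num * t : ℤ) + γ) / q| := abs_add_le _ _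
    _ ≤ 1 / (Q * s) + 1 / (2 * (s * Q)) := by rw [e1]; exact add_le_add hp e2
    _ = (1 / (Q * s)) * (3/2) := by field_simp; norm_num
    _ ≤ (16 / (Q:ℝ)^2) * (3/2) := by gcongr
    _ ≤ 40 / (Q:ℝ)^2 := by rw [div_mul_eq_mul_div]; gcongr; norm_num

def badSet (R : ℕ) : Set ℝ := ⋃ s ∈ Finset.Ico 1 R, ⋃ b ∈ Finset.range (s+1),
  Set.Icc ((b:ℝ)/s - 1/((16*R)*s)) ((b:ℝ)/s + 1/((16*R)*s))

theorem vol_badSet (R : ℕ) (hR : 0 < R) : volume.real (badSet R) ≤ 1/4 := by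
  have hRR : (0:ℝ) < R := by exact_mod_cast hR
  calc volume.real (badSet R) ≤ ∑ s ∈ Finset.Ico 1 R, volume.real (⋃ b ∈ Finset.range (s+1),
        Set.Icc ((b:ℝ)/s - 1/((16*R)*s)) ((b:ℝ)/s + 1/((16*R)*s))) := measureReal_biUnion_finset_le _ _
    _ ≤ ∑ s ∈ Finset.Ico 1 R, ∑ b ∈ Finset.range (s+1), volume.real (
        Set.Icc ((b:ℝ)/s - 1/((16*R)*s)) ((b:ℝ)/s + 1/((16*R)*s))) := 
        Finset.sum_le_sum fun s _ => measureReal_biUnion_finset_le _ _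
    _ ≤ ∑ s ∈ Finset.Ico 1 R, 1/(4 * (R:ℝ)) := by
        apply Finset.sum_le_sum
        intro s hs
        have hs1 : (1:ℝ) ≤ s := by exact_mod_cast (Finset.mem_Ico.1 hs).1
        have : ∀ b ∈ Finset.range (s+1), volume.real (
          Set.Icc ((b:ℝ)/s - 1/((16*R)*s)) ((b:ℝ)/s + 1/((16*R)*s))) = 2/((16*R)*s) := by
          intro b _
          rw [Real.volume_real_Icc_of_le]
          · ring
          · have : 0 ≤ 1/((16*(R:ℝ))*s) := by positivity
            linarith
        rw [Finset.sum_congr rfl this, Finset.sum_const, Finset.card_range, nsmul_eq_mul]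
        push_cast
        rw [← mul_div_assoc, div_le_div_iff₀ (by positivity) (by positivity)]
        nlinarith
    _ ≤ 1/4 := by
        rw [Finset.sum_const, Nat.card_Ico, nsmul_eq_mul]
        calc ((R-1:ℕ):ℝ) * (1/(4 * (R:ℝ))) ≤ R * (1/(4 * (R:ℝ))) := by
              gcongr; omega
          _ = 1/4 := by field_simp

theorem good_of_not_bad (γ α : ℝ) (R : ℕ) (hR : 0 < R) (hα : α ∈ Set.Icc (0:ℝ) 1)
    (hb : α ∉ badSet R) :
    ∃ (q : ℕ) (a : ℤ), 16*R ≤ q ∧ q ≤ 2 * (16*R) ∧ |α - (a + γ) / q| ≤ 40 / ((16*R:ℕ):ℝ)^2 := by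
  obtain ⟨p, hp, hden⟩ := Real.exists_rat_abs_sub_le_and_den_le α (n := 16 * R) (by omega)
  have hRR : (0:ℝ) < R := by exact_mod_cast hR
  have hs0 : (0:ℝ) < p.den := by exact_mod_cast p.pos
  have hp' : |α - p| ≤ 1 / ((16*R:ℕ) * p.den) := by
    refine hp.trans ?_
    push_cast
    gcongr
    linarith
  refine aux_approx γ α (16*R) (by omega) p hp' hden ?_
  by_contra hlt
  apply hb
  have hpR : (p:ℝ) = p.num / p.den := Rat.cast_def p
  have hpd : |α - p| * p.den < 1 := by
    calc |α - p| * p.den ≤ 1 / ((16*R:ℕ) * p.den) * p.den := by gcongr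
      _ = 1 / (16*R:ℕ) := by field_simp
      _ < 1 := by
        rw [div_lt_one (by positivity)]
        exact_mod_cast (by omega : 1 < 16 * R)
  have hpd2 : |α * p.den - p.num| < 1 := by
    have : α * p.den - p.num = (α - p) * p.den := by rw [hpR]; field_simp
    rw [this, abs_mul, abs_of_pos hs0]; exact hpd
  rw [abs_lt] at hpd2
  have hα1 : α * p.den ≤ p.den := by nlinarith [hα.2]
  have hα0 : 0 ≤ α * p.den := mul_nonneg hα.1 hs0.le
  have hn0 : 0 ≤ p.num := by
    have : (-1:ℝ) < p.num := by linarith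
    have : (-1:ℤ) < p.num := by exact_mod_cast this
    omega
  have hn1 : p.num < p.den + 1 := by
    have : (p.num:ℝ) < p.den + 1 := by linarith
    exact_mod_cast this
  simp only [badSet, Set.mem_iUnion]
  refine ⟨p.den, Finset.mem_Ico.2 ⟨p.pos, by omega⟩, p.num.toNat, Finset.mem_range.2 (by omega), ?_⟩
  have hc : ((p.num.toNat:ℕ):ℝ) = p.num := by
    exact_mod_cast Int.toNat_of_nonneg hn0
  rw [hc, ← hpR]
  rw [abs_le] at hp'
  push_cast at hp'
  exact ⟨by linarith, by linarith⟩

theorem exists_points (γ : ℝ) (R : ℕ) (hR : 4 ≤ R) :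
    ∃ (J : Finset ℕ) (x : ℕ → ℝ), (((16*R)^2 : ℕ):ℝ) / 200 ≤ (J.card : ℝ) ∧
      ∀ j ∈ J, (j < (16*R)^2) ∧ (j:ℝ) / ((16*R)^2 : ℕ) ≤ x j ∧ x j < ((j:ℝ)+1) / ((16*R)^2 : ℕ) ∧
        ∃ (q : ℕ) (a : ℤ), 16*R ≤ q ∧ q ≤ 2 * (16*R) ∧ x j = (a + γ) / q := by
  classical
  set M : ℕ := (16*R)^2 with hM
  have hM1 : 4096 ≤ M := by rw [hM]; nlinarith
  have hMR : (4096:ℝ) ≤ M := by exact_mod_cast hM1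
  have hM0 : (0:ℝ) < M := by linarith
  let P : ℕ → ℝ → Prop := fun j y => (j:ℝ) / M ≤ y ∧ y < ((j:ℝ)+1) / M ∧
        ∃ (q : ℕ) (a : ℤ), 16*R ≤ q ∧ q ≤ 2 * (16*R) ∧ y = (a + γ) / q
  let J := (Finset.range M).filter (fun j => ∃ y, P j y)
  have hJ : ∀ j ∈ J, ∃ y, P j y := fun j hj => (Finset.mem_filter.1 hj).2
  let x : ℕ → ℝ := fun j => if h : ∃ y, P j y then h.choose else 0
  have hx : ∀ j ∈ J, P j (x j) := by
    intro j hj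
    have h := hJ j hj
    simp only [x, dif_pos h]
    exact h.choose_spec
  refine ⟨J, x, ?_, fun j hj => ⟨Finset.mem_range.1 (Finset.mem_filter.1 hj).1, hx j hj⟩⟩
  have hcover : Set.Icc (0:ℝ) 1 ⊆ badSet R ∪ ((⋃ j ∈ J, Set.Icc (((j:ℝ) - 40)/M) (((j:ℝ)+41)/M)) ∪
      (Set.Icc 0 (40/(M:ℝ)) ∪ Set.Icc (1 - 40/(M:ℝ)) 1)) := by
    intro α hα
    by_cases hb : α ∈ badSet R
    · exact Or.inl hb
    right
    obtain ⟨q, a, h1, h2, h3⟩ := good_of_not_bad γ α R (by omega) hα hb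
    have hMc : ((16*R:ℕ):ℝ)^2 = M := by rw [hM]; push_cast; ring
    rw [hMc, abs_le] at h3
    set p : ℝ := (a + γ) / q with hp
    by_cases hp0 : p < 0
    · right; left
      exact ⟨hα.1, by linarith⟩
    by_cases hp1 : 1 ≤ p
    · right; right
      exact ⟨by linarith, hα.2⟩
    push Not at hp0 hp1
    left
    have hf1 : ((⌊p * M⌋₊:ℕ):ℝ) ≤ p * M := Nat.floor_le (by positivity)
    have hf2 : p * M < (⌊p * M⌋₊:ℕ) + 1 := Nat.lt_floor_add_one _
    set j := ⌊p * M⌋₊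
    have hj1 : (j:ℝ)/M ≤ p := by rwa [div_le_iff₀ hM0]
    have hj2 : p < ((j:ℝ)+1)/M := by rwa [lt_div_iff₀ hM0]
    have hjJ : j ∈ J := by
      refine Finset.mem_filter.2 ⟨Finset.mem_range.2 ?_, p, hj1, hj2, q, a, h1, h2, rfl⟩
      have : (j:ℝ) < M := by nlinarith
      exact_mod_cast this
    simp only [Set.mem_iUnion]
    refine ⟨j, hjJ, ?_, ?_⟩
    · rw [sub_div]; linarith
    · have : ((j:ℝ)+41)/M = ((j:ℝ)+1)/M + 40/M := by ring
      linarith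
  have hvol := measureReal_mono (μ := volume) hcover (by
    refine measure_union_ne_top ?_ (measure_union_ne_top ?_ (measure_union_ne_top (by simp) (by simp)))
    · unfold badSet
      refine ((measure_biUnion_lt_top (Finset.finite_toSet _) ?_)).ne
      intro s _
      refine ((measure_biUnion_lt_top (Finset.finite_toSet _) ?_))
      intro b _
      simp
    · refine ((measure_biUnion_lt_top (Finset.finite_toSet _) ?_)).ne
      intro s _
      simp)
  have hu1 := measureReal_union_le (μ := volume) (badSet R) ((⋃ j ∈ J, Set.Icc (((j:ℝ) - 40)/M) (((j:ℝ)+41)/M)) ∪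
      (Set.Icc 0 (40/(M:ℝ)) ∪ Set.Icc (1 - 40/(M:ℝ)) 1))
  have hu2 := measureReal_union_le (μ := volume) ((⋃ j ∈ J, Set.Icc (((j:ℝ) - 40)/M) (((j:ℝ)+41)/M))) 
      (Set.Icc 0 (40/(M:ℝ)) ∪ Set.Icc (1 - 40/(M:ℝ)) 1)
  have hu3 := measureReal_union_le (μ := volume) (Set.Icc 0 (40/(M:ℝ))) (Set.Icc (1 - 40/(M:ℝ)) 1)
  have hu4 : volume.real (⋃ j ∈ J, Set.Icc (((j:ℝ) - 40)/M) (((j:ℝ)+41)/M)) ≤ J.card * (81/M) := by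
    refine (measureReal_biUnion_finset_le _ _).trans ?_
    rw [← nsmul_eq_mul]
    apply Finset.sum_le_card_nsmul
    intro j _
    rw [Real.volume_real_Icc_of_le (by gcongr; linarith)]
    apply le_of_eq; ring
  have hb := vol_badSet R (by omega)
  have h40 : (0:ℝ) ≤ 40/M := by positivity
  rw [Real.volume_real_Icc_of_le (by linarith)] at hvol
  rw [Real.volume_real_Icc_of_le (by linarith), Real.volume_real_Icc_of_le (by linarith)] at hu3
  have hfin : (3:ℝ)/4 ≤ J.card * (81/M) + 80 / M := by
    have : (80:ℝ)/M = 40/M+40/M := by ring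
    linarith
  have : (3:ℝ)/4 * M ≤ J.card * 81 + 80 := by
    have := mul_le_mul_of_nonneg_right hfin hM0.le
    rwa [add_mul, mul_assoc, div_mul_cancel₀ _ hM0.ne', div_mul_cancel₀ _ hM0.ne'] at this
  linarith

theorem exists_intervals (γ : ℝ) (R : ℕ) (hR : 4 ≤ R) (r : ℝ) (hr : 0 ≤ r)
    (hr2 : r ≤ 1 / (2 * ((16*R)^2 : ℕ))) :
    ∃ (J : Finset ℕ) (y : ℕ → ℝ), (((16*R)^2 : ℕ):ℝ) / 200 ≤ (J.card : ℝ) ∧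
      ∀ j ∈ J, (j < (16*R)^2) ∧ (j:ℝ) / ((16*R)^2 : ℕ) ≤ y j ∧ y j + r ≤ ((j:ℝ)+1) / ((16*R)^2 : ℕ) ∧
        ∀ α ∈ Set.Ioo (y j) (y j + r), 
        ∃ (q : ℕ) (a : ℤ), 16*R ≤ q ∧ q ≤ 2 * (16*R) ∧ |q * α - γ - a| < 2 * (16 * R) * r := by
  obtain ⟨J, x, hJ, hx⟩ := exists_points γ R hR
  set M : ℕ := (16*R)^2 with hM
  have hM0 : (0:ℝ) < M := by 
    have : 0 < M := by positivity
    exact_mod_cast this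
  refine ⟨J, fun j => if x j + r ≤ ((j:ℝ)+1) / M then x j else x j - r, hJ, ?_⟩
  intro j hj
  obtain ⟨h0, h1, h2, q, a, hq1, hq2, hxa⟩ := hx j hj
  have hq0 : (0:ℝ) < q := by exact_mod_cast (by omega : 0 < q)
  have hq2' : (q:ℝ) ≤ 2 * (16 * R) := by exact_mod_cast hq2
  have fin : ∀ α, |α - x j| < r → ∃ (q : ℕ) (a : ℤ), 16*R ≤ q ∧ q ≤ 2 * (16*R) ∧ |q * α - γ - a| < 2 * (16 * R) * r := by
    intro α hα
    refine ⟨q, a, hq1, hq2, ?_⟩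
    have : q * α - γ - a = q * (α - x j) := by rw [hxa]; field_simp; ring
    rw [this, abs_mul, abs_of_pos hq0]
    calc q * |α - x j| < q * r := by gcongr
      _ ≤ _ := by gcongr
  have hsplit : ((j:ℝ)+1)/M = j/M + 2 * (1 / (2 * M)) := by field_simp
  refine ⟨h0, ?_⟩
  dsimp only
  split_ifs with hc
  · refine ⟨h1, hc, fun α hα => fin α ?_⟩
    rw [abs_lt]; exact ⟨by linarith [hα.1], by linarith [hα.2]⟩
  · refine ⟨by push Not at hc; linarith, by linarith, fun α hα => fin α ?_⟩
    rw [abs_lt]; exact ⟨by linarith [hα.1], by linarith [hα.2]⟩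

/-- union of small intervals -/
def lev (J : Finset ℕ) (y : ℕ → ℝ) (r : ℝ) : Set ℝ := ⋃ j ∈ J, Set.Ioo (y j) (y j + r)

theorem lev_meas (J : Finset ℕ) (y : ℕ → ℝ) (r : ℝ) : MeasurableSet (lev J y r) :=
  Finset.measurableSet_biUnion _ fun _ _ => measurableSet_Ioo

theorem lev_vol (J : Finset ℕ) (y : ℕ → ℝ) (r : ℝ) (hr : 0 ≤ r) (M : ℕ) (hM : 0 < M)
    (h : ∀ j ∈ J, (j:ℝ) / M ≤ y j ∧ y j + r ≤ ((j:ℝ)+1) / M) :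
    volume.real (lev J y r) = J.card * r := by
  unfold lev
  have hM0 : (0:ℝ) < M := by exact_mod_cast hM
  rw [measureReal_biUnion_finset (h := fun j _ => (measure_Ioo_lt_top).ne)]
  · rw [Finset.sum_congr rfl (g := fun _ => r)]
    · simp
    · intro j _
      rw [Real.volume_real_Ioo_of_le (by linarith)]; ring
  · have key : ∀ i ∈ J, ∀ j ∈ J, i < j → Disjoint (Set.Ioo (y i) (y i + r)) (Set.Ioo (y j) (y j + r)) := by
      intro i hi j hj hij
      rw [Set.disjoint_left]
      intro α h1 h2
      have e1 := (h i hi).2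
      have e2 := (h j hj).1
      have : ((i:ℝ)+1)/M ≤ j/M := by
        gcongr; exact_mod_cast hij
      linarith [h1.2, h2.1]
    intro i hi j hj hij
    rcases lt_or_gt_of_ne hij with h' | h'
    · exact key i hi j hj h'
    · exact (key j hj i hi h').symm
  · intro j _; exact measurableSet_Ioo

theorem lev_inter_Ioo (J : Finset ℕ) (y : ℕ → ℝ) (r : ℝ) (hr : 0 ≤ r) (M : ℕ) (hM : 0 < M)
    (h : ∀ j ∈ J, (j:ℝ) / M ≤ y j ∧ y j + r ≤ ((j:ℝ)+1) / M) (u ρ : ℝ) (hρ : 0 ≤ ρ) :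
    volume.real (Set.Ioo u (u + ρ) ∩ lev J y r) ≤ (ρ * M + 2) * r := by
  classical
  have hM0 : (0:ℝ) < M := by exact_mod_cast hM
  set F : Finset ℕ := J.filter (fun j : ℕ => u * M - 1 ≤ (j:ℝ) ∧ (j:ℝ) ≤ (u + ρ) * M) with hF
  have hsub : Set.Ioo u (u + ρ) ∩ lev J y r ⊆ ⋃ j ∈ F, Set.Ioo (y j) (y j + r) := by
    rintro α ⟨h1, h2⟩
    simp only [lev, Set.mem_iUnion] at h2 ⊢
    obtain ⟨j, hj, hα⟩ := h2
    refine ⟨j, Finset.mem_filter.2 ⟨hj, ?_, ?_⟩, hα⟩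
    · have : u < ((j:ℝ)+1)/M := by linarith [(h j hj).2, hα.2, h1.1]
      rw [lt_div_iff₀ hM0] at this
      linarith
    · have : (j:ℝ)/M < u + ρ := by linarith [(h j hj).1, hα.1, h1.2]
      rw [div_lt_iff₀ hM0] at this
      linarith
  have hcard : (F.card:ℝ) ≤ ρ * M + 2 := by
    have h1 : F.card ≤ (Finset.Icc ⌈u * M - 1⌉ ⌊(u+ρ)*M⌋).card := by
      apply Finset.card_le_card_of_injOn (fun j : ℕ => (j:ℤ))
      · intro j hj
        have hj := (Finset.mem_filter.1 (Finset.mem_coe.1 hj)).2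
        rw [Finset.mem_coe, Finset.mem_Icc]
        refine ⟨Int.ceil_le.2 (by exact_mod_cast hj.1), Int.le_floor.2 (by exact_mod_cast hj.2)⟩
      · intro a _ b _ hab
        simpa using hab
    rw [Int.card_Icc] at h1
    have h2 : ((⌊(u+ρ)*M⌋ + 1 - ⌈u * M - 1⌉).toNat : ℝ) ≤ ρ * M + 2 := by
      have a1 := Int.floor_le ((u+ρ)*M)
      have a2 := Int.le_ceil (u * M - 1)
      have a3 : (((⌊(u+ρ)*M⌋ + 1 - ⌈u * M - 1⌉).toNat : ℤ):ℝ) = max ((⌊(u+ρ)*M⌋ + 1 - ⌈u * M - 1⌉ : ℤ):ℝ) 0 := by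
        rw [Int.toNat_eq_max]; push_cast; rfl
      rw [Int.cast_natCast] at a3
      rw [a3]
      apply max_le
      · push_cast; linarith
      · positivity
    exact le_trans (by exact_mod_cast h1) h2
  calc volume.real (Set.Ioo u (u + ρ) ∩ lev J y r) ≤ volume.real (⋃ j ∈ F, Set.Ioo (y j) (y j + r)) := by
        refine measureReal_mono hsub ?_
        refine ((measure_biUnion_lt_top (Finset.finite_toSet _) ?_)).ne
        intro s _
        simp
    _ ≤ ∑ j ∈ F, volume.real (Set.Ioo (y j) (y j + r)) := measureReal_biUnion_finset_le _ _
    _ = F.card * r := by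
      rw [Finset.sum_congr rfl (g := fun _ => r)]
      · simp
      · intro j _
        rw [Real.volume_real_Ioo_of_le (by linarith)]; ring
    _ ≤ _ := by gcongr

theorem lev_inter_lev (J J' : Finset ℕ) (y y' : ℕ → ℝ) (r r' : ℝ) (hr : 0 ≤ r) (hr' : 0 ≤ r') (M M' : ℕ) 
    (hM' : 0 < M') (hJ : ∀ j ∈ J, j < M) 
    (h : ∀ j ∈ J', (j:ℝ) / M' ≤ y' j ∧ y' j + r' ≤ ((j:ℝ)+1) / M') :
    volume.real (lev J y r ∩ lev J' y' r') ≤ M * ((r * M' + 2) * r') := by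
  have hc : (J.card:ℝ) ≤ M := by
    have : J.card ≤ (Finset.range M).card := Finset.card_le_card fun j hj => Finset.mem_range.2 (hJ j hj)
    rw [Finset.card_range] at this
    exact_mod_cast this
  calc volume.real (lev J y r ∩ lev J' y' r') = volume.real (⋃ j ∈ J, (Set.Ioo (y j) (y j + r) ∩ lev J' y' r')) := by
        conv_lhs => rw [lev, Set.iUnion₂_inter]
    _ ≤ ∑ j ∈ J, volume.real (Set.Ioo (y j) (y j + r) ∩ lev J' y' r') := measureReal_biUnion_finset_le _ _
    _ ≤ ∑ j ∈ J, ((r * M' + 2) * r') := Finset.sum_le_sum fun j _ =>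
        lev_inter_Ioo J' y' r' hr' M' hM' h _ _ hr
    _ = J.card * ((r * M' + 2) * r') := by simp
    _ ≤ _ := by gcongr

/-- full (non-restricted) approximation set -/
def VSet (ψ : ℕ → ℝ) (γ : ℝ) : Set ℝ :=
  {α | {q : ℕ | 1 ≤ q ∧ ∃ a : ℤ, |q * α - γ - a| < ψ q}.Infinite}

theorem VSet_meas (ψ : ℕ → ℝ) (γ : ℝ) : MeasurableSet (VSet ψ γ) := by
  have : VSet ψ γ = ⋂ N : ℕ, ⋃ q : ℕ, ⋃ _ : N < q, ⋃ _ : 1 ≤ q, ⋃ a : ℤ, {α : ℝ | |q * α - γ - a| < ψ q} := by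
    ext α
    simp only [VSet, Set.mem_iInter, Set.mem_iUnion, Set.mem_ofPred_eq]
    constructor
    · intro h N
      obtain ⟨q, ⟨h1, a, ha⟩, h2⟩ := h.exists_gt N
      exact ⟨q, h2, h1, a, ha⟩
    · intro h
      apply Set.infinite_of_forall_exists_gt
      intro N
      obtain ⟨q, h2, h1, a, ha⟩ := h N
      exact ⟨q, ⟨h1, a, ha⟩, h2⟩
  rw [this]
  refine MeasurableSet.iInter fun N => MeasurableSet.iUnion fun q => MeasurableSet.iUnion fun _ =>
    MeasurableSet.iUnion fun _ => MeasurableSet.iUnion fun a => ?_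
  apply measurableSet_lt
  · fun_prop
  · fun_prop

theorem aux_div (ψ : ℕ → ℝ) (hψ0 : ∀ q, 0 ≤ ψ q)
    (hψdec : ∀ q r : ℕ, 1 ≤ q → q ≤ r → ψ r ≤ ψ q) (hdiv : ¬ Summable ψ) :
    ¬ Summable (fun n : ℕ => ((128 * 64 ^ n : ℕ) : ℝ) * ψ (128 * 64 ^ n)) := by
  intro h
  apply hdiv
  have hsm : StrictMono (fun n : ℕ => 128 * 64 ^ n) := by
    intro a b hab
    have : 64 ^ a < 64 ^ b := Nat.pow_lt_pow_right (by norm_num) hab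
    simp only; omega
  rw [← summable_schlomilch_iff_of_nonneg (C := 64) (u := fun n : ℕ => 128 * 64 ^ n) hψ0
    (fun m n hm hmn => hψdec m n hm hmn) (fun n => by positivity) hsm (by norm_num)]
  · refine (h.mul_left 63).congr ?_
    intro n
    push_cast
    ring
  · intro n
    simp only [pow_succ, smul_eq_mul]
    omega

theorem khin (ψ : ℕ → ℝ) (γ : ℝ) (hψ0 : ∀ q, 0 ≤ ψ q)
    (hψdec : ∀ q r : ℕ, 1 ≤ q → q ≤ r → ψ r ≤ ψ q) (hdiv : ¬ Summable ψ) :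
    (1:ℝ)/320000 ≤ volume.real (VSet ψ γ ∩ Set.Icc 0 1) := by
  let R : ℕ → ℕ := fun n => 4 * 64 ^ n
  have hR : ∀ n, 4 ≤ R n := fun n => by
    have : 1 ≤ 64 ^ n := Nat.one_le_pow _ _ (by norm_num)
    simp only [R]; omega
  let M : ℕ → ℕ := fun n => (16 * R n)^2
  have hM : ∀ n, (M n : ℝ) = 4096 ^ (n + 1) := by
    intro n
    simp only [M, R]
    push_cast
    rw [show (4096:ℝ) = 64^2 by norm_num, ← pow_mul, mul_comm 2 (n+1), pow_mul, pow_succ]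
    ring
  have hM0 : ∀ n, (0:ℝ) < M n := fun n => by rw [hM]; positivity
  have hM0' : ∀ n, 0 < M n := fun n => by exact_mod_cast hM0 n
  let r : ℕ → ℝ := fun n => min (ψ (2 * (16 * R n)) / (2 * (16 * R n))) (1 / (2 * (M n : ℕ)))
  have hr0 : ∀ n, 0 ≤ r n := fun n => le_min (div_nonneg (hψ0 _) (by positivity)) (by positivity)
  have hex := fun n => exists_intervals γ (R n) (hR n) (r n) (hr0 n) (min_le_right _ _)
  choose J y hJ hy using hex
  have hy' : ∀ n, ∀ j ∈ J n, (j:ℝ) / M n ≤ y n j ∧ y n j + r n ≤ ((j:ℝ)+1) / M n :=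
    fun n j hj => ⟨(hy n j hj).2.1, (hy n j hj).2.2.1⟩
  let A : ℕ → Set ℝ := fun n => lev (J n) (y n) (r n)
  let v : ℕ → ℝ := fun n => M n * r n
  have hv : ∀ n, 0 ≤ v n := fun n => mul_nonneg (hM0 n).le (hr0 n)
  have hsub : ∀ n, A n ⊆ Set.Icc 0 1 := by
    intro n α hα
    simp only [A, lev, Set.mem_iUnion] at hα
    obtain ⟨j, hj, h1, h2⟩ := hα
    have hj' := hy' n j hj
    have hjM : (j:ℝ) + 1 ≤ M n := by exact_mod_cast (hy n j hj).1
    have e1 : 0 ≤ (j:ℝ) / M n := by positivity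
    have e2 : ((j:ℝ)+1) / M n ≤ 1 := by rwa [div_le_one (hM0 n)]
    exact ⟨by linarith, by linarith⟩
  have hvdiv : ¬ Summable v := by
    intro hs
    apply aux_div ψ hψ0 hψdec hdiv
    have ht := hs.tendsto_atTop_zero
    have hev : ∀ᶠ n in Filter.atTop, v n < 1/2 := ht.eventually_lt_const (by norm_num)
    obtain ⟨N, hN⟩ := Filter.eventually_atTop.1 hev
    rw [← summable_nat_add_iff N]
    rw [← summable_nat_add_iff N] at hs
    refine (hs.mul_left 4).congr ?_
    intro k
    have hlt := hN (k + N) (by omega)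
    set n := k + N
    have hrn : r n = ψ (2 * (16 * R n)) / (2 * (16 * R n)) := by
      rcases min_choice (ψ (2 * (16 * R n)) / (2 * (16 * R n))) (1 / (2 * (M n : ℝ))) with h | h
      · exact h
      · exfalso
        have : r n = 1 / (2 * (M n : ℝ)) := h
        simp only [v, this] at hlt
        have h0 := hM0 n
        field_simp at hlt
        linarith
    have hu : 2 * (16 * R n) = 128 * 64 ^ n := by simp only [R]; ring
    have hRn : (R n : ℝ) = 4 * 64 ^ n := by simp [R]
    have hMn : (M n : ℝ) = (16 * R n)^2 := by simp [M]
    have : v n = M n * (ψ (2 * (16 * R n)) / (2 * (16 * R n))) := by rw [← hrn]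
    rw [this, hu, hMn, hRn]
    push_cast
    field_simp
    ring
  have h1 : ∀ n, v n / 200 ≤ volume.real (A n) := by
    intro n
    rw [lev_vol (J n) (y n) (r n) (hr0 n) (M n) (hM0' n) (hy' n)]
    calc v n / 200 = (M n / 200) * r n := by simp only [v]; ring
      _ ≤ _ := mul_le_mul_of_nonneg_right (hJ n) (hr0 n)
  have h2 : ∀ k n, k < n → volume.real (A k ∩ A n) ≤ v n * (v k + 2 / 4096 ^ (n - k)) := by
    intro k n hkn
    refine (lev_inter_lev (J k) (J n) (y k) (y n) (r k) (r n) (hr0 k) (hr0 n) (M k) (M n) (hM0' n)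
      (fun j hj => (hy k j hj).1) (hy' n)).trans (le_of_eq ?_)
    simp only [v]
    have e : (M n : ℝ) = M k * 4096 ^ (n - k) := by
      rw [hM, hM, ← pow_add]; congr 1; omega
    rw [e]
    field_simp
  have hlim := aux_limsup A (fun n => lev_meas _ _ _) hsub v hv hvdiv h1 h2
  have hincl : (⋂ m : ℕ, ⋃ k ≥ m, A k) ⊆ VSet ψ γ ∩ Set.Icc 0 1 := by
    intro α hα
    simp only [Set.mem_iInter, Set.mem_iUnion] at hα
    constructor
    · apply Set.infinite_of_forall_exists_gt
      intro N
      obtain ⟨k, hk, hα⟩ := hα N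
      simp only [A, lev, Set.mem_iUnion] at hα
      obtain ⟨j, hj, hα⟩ := hα
      obtain ⟨q, a, hq1, hq2, hqa⟩ := (hy k j hj).2.2.2 α hα
      have hk64 : k < 64 ^ k := Nat.lt_pow_self (by norm_num)
      have hRk : R k = 4 * 64 ^ k := rfl
      refine ⟨q, ⟨by omega, a, lt_of_lt_of_le hqa ?_⟩, by omega⟩
      have hRp : (0:ℝ) < R k := by exact_mod_cast (by omega : 0 < R k)
      calc 2 * (16 * (R k:ℝ)) * r k ≤ 2 * (16 * (R k:ℝ)) * (ψ (2 * (16 * R k)) / (2 * (16 * R k))) := by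
            gcongr; exact min_le_left _ _
        _ = ψ (2 * (16 * R k)) := by field_simp
        _ ≤ ψ q := hψdec _ _ (by omega) hq2
    · obtain ⟨k, _, hα⟩ := hα 0
      exact hsub k hα
  have hfin := hlim.trans (measure_mono hincl)
  rw [Measure.real]
  rwa [ENNReal.ofReal_le_iff_le_toReal] at hfin
  exact ne_top_of_le_ne_top (by simp) (measure_mono Set.inter_subset_right)

theorem VSet_periodic (φ : ℕ → ℝ) (γ α : ℝ) (b : ℤ) (h : α ∈ VSet φ γ) : α + b ∈ VSet φ γ := by
  refine Set.Infinite.mono ?_ h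
  rintro q ⟨h1, a, ha⟩
  refine ⟨h1, a + q * b, ?_⟩
  push_cast
  rwa [show (q:ℝ) * (α + b) - γ - (a + q * b) = q * α - γ - a by ring]

theorem VSet_scale (φ : ℕ → ℝ) (γ α : ℝ) (t : ℕ) (ht : 0 < t) 
    (h : t * α ∈ VSet (fun q => φ (t * q)) γ) : α ∈ VSet φ γ := by
  have hinj : Function.Injective (fun q : ℕ => t * q) := fun a b hab => Nat.eq_of_mul_eq_mul_left ht hab
  refine Set.Infinite.mono ?_ (h.image hinj.injOn)
  rintro _ ⟨q, ⟨h1, a, ha⟩, rfl⟩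
  refine ⟨Nat.mul_pos ht h1, a, ?_⟩
  push_cast
  rwa [show (t:ℝ) * q * α - γ - a = q * (t * α) - γ - a by ring]

theorem VSet_cell (φ : ℕ → ℝ) (γ : ℝ) (t : ℕ) (ht : 0 < t) (b : ℤ) (c : ℝ)
    (h : c ≤ volume.real (VSet (fun q => φ (t * q)) γ ∩ Set.Icc 0 1)) :
    c / t ≤ volume.real (VSet φ γ ∩ Set.Icc ((b:ℝ)/t) (((b:ℝ)+1)/t)) := by
  have htR : (0:ℝ) < t := by exact_mod_cast ht
  set S := VSet (fun q => φ (t * q)) γ ∩ Set.Icc 0 1 with hS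
  have hsub : (fun x : ℝ => (t:ℝ) * x) ⁻¹' ((fun x : ℝ => x + (-b:ℝ)) ⁻¹' S) ⊆ 
      VSet φ γ ∩ Set.Icc ((b:ℝ)/t) (((b:ℝ)+1)/t) := by
    rintro α ⟨h1, h2, h3⟩
    refine ⟨VSet_scale φ γ α t ht ?_, ?_, ?_⟩
    · have := VSet_periodic _ _ _ b h1
      simpa using this
    · rw [div_le_iff₀ htR]; linarith
    · rw [le_div_iff₀ htR]; linarith
  have hvol : volume.real ((fun x : ℝ => (t:ℝ) * x) ⁻¹' ((fun x : ℝ => x + (-b:ℝ)) ⁻¹' S)) = volume.real S / t := by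
    rw [Measure.real, Real.volume_preimage_mul_left htR.ne', measure_preimage_add_right, ENNReal.toReal_mul,
      ENNReal.toReal_ofReal (abs_nonneg _), abs_of_pos (by positivity), Measure.real]
    field_simp
  calc c / t ≤ volume.real S / t := by gcongr
    _ = _ := hvol.symm
    _ ≤ _ := measureReal_mono hsub (ne_top_of_le_ne_top (by simp) (measure_mono Set.inter_subset_right))

theorem null_of_cells (V : Set ℝ) (hV : MeasurableSet V) (c : ℝ) (hc : 0 < c)
    (h : ∃ᶠ t : ℕ in Filter.atTop, 0 < t ∧ ∀ b : ℤ, c / t ≤ volume.real (V ∩ Set.Icc ((b:ℝ)/t) (((b:ℝ)+1)/t))) :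
    volume Vᶜ = 0 := by
  by_contra hne
  have hae := Besicovitch.ae_tendsto_measure_inter_div (volume : Measure ℝ) Vᶜ
  have : (ae ((volume : Measure ℝ).restrict Vᶜ)).NeBot := by
    rw [ae_neBot]
    intro h0
    exact hne (Measure.restrict_eq_zero.1 h0)
  obtain ⟨x, hx⟩ := hae.exists
  have hto : Filter.Tendsto (fun t : ℕ => 1 / (t:ℝ)) Filter.atTop (nhdsWithin 0 (Set.Ioi 0)) := by
    apply tendsto_nhdsWithin_of_tendsto_nhds_of_eventually_within
    · exact tendsto_one_div_atTop_nhds_zero_nat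
    · filter_upwards [Filter.eventually_gt_atTop 0] with t ht
      have : (0:ℝ) < t := by exact_mod_cast ht
      exact one_div_pos.2 this
  have hx := hx.comp hto
  have hlt : ENNReal.ofReal (1 - c / 2) < 1 := by
    rw [ENNReal.ofReal_lt_one]; linarith
  have hev := hx.eventually_const_lt hlt
  obtain ⟨t, ⟨ht, hb⟩, hlt⟩ := (h.and_eventually hev).exists
  have htR : (0:ℝ) < t := by exact_mod_cast ht
  simp only [Function.comp] at hlt
  rw [Real.volume_closedBall, ENNReal.lt_div_iff_mul_lt (by left; simp [ht]) (Or.inl ENNReal.ofReal_ne_top)] at hlt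
  have hb := hb ⌊x * t⌋
  set b := ⌊x * t⌋
  have f1 : (b:ℝ)/t ≤ x := by rw [div_le_iff₀ htR]; exact Int.floor_le _
  have f2 : x ≤ ((b:ℝ)+1)/t := by rw [le_div_iff₀ htR]; exact (Int.lt_floor_add_one _).le
  have f3 : ((b:ℝ)+1)/t = b/t + 1/t := by ring
  have hcell : Set.Icc ((b:ℝ)/t) (((b:ℝ)+1)/t) ⊆ Metric.closedBall x (1/t) := by
    rw [Real.closedBall_eq_Icc]
    apply Set.Icc_subset_Icc <;> linarith
  have hfin : volume (Metric.closedBall x (1/t)) ≠ ⊤ := measure_closedBall_lt_top.ne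
  have e1 := measureReal_inter_add_sdiff (μ := volume) (s := Metric.closedBall x (1/t)) hV hfin
  have e2 : volume.real (V ∩ Set.Icc ((b:ℝ)/t) (((b:ℝ)+1)/t)) ≤ volume.real (Metric.closedBall x (1/t) ∩ V) :=
    measureReal_mono (fun z hz => ⟨hcell hz.2, hz.1⟩) (ne_top_of_le_ne_top hfin (measure_mono Set.inter_subset_left))
  have e3 : volume.real (Metric.closedBall x (1/t)) = 2 * (1/t) := by
    rw [Measure.real, Real.volume_closedBall, ENNReal.toReal_ofReal (by positivity)]
  have e4 : Metric.closedBall x (1/t) \ V = Vᶜ ∩ Metric.closedBall x (1/t) := by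
    rw [Set.sdiff_eq, Set.inter_comm]
  rw [e4] at e1
  have hne2 : volume (Vᶜ ∩ Metric.closedBall x (1/t)) ≠ ⊤ := 
    ne_top_of_le_ne_top hfin (measure_mono Set.inter_subset_right)
  rw [← ENNReal.ofReal_toReal hne2, ← ENNReal.ofReal_mul' (by positivity)] at hlt
  have hlt' := lt_of_not_ge (fun hge => absurd hlt (not_lt.2 (ENNReal.ofReal_le_ofReal hge)))
  change (1 - c/2) * (2 * (1/t)) < volume.real (Vᶜ ∩ Metric.closedBall x (1/t)) at hlt'
  have : (1 - c/2) * (2 * (1/(t:ℝ))) = 2 * (1/t) - c / t := by ring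
  linarith

theorem exists_part (γ : ℝ) (ℓ : ℕ) (π : Fin ℓ → Set ℕ)
    (hpart : ∀ q : ℕ, 1 ≤ q → ∃ k, q ∈ π k)
    (ψ : ℕ → ℝ) (hψ0 : ∀ q, 0 ≤ ψ q)
    (hψdec : ∀ q r : ℕ, 1 ≤ q → q ≤ r → ψ r ≤ ψ q)
    (hdiv : ¬ Summable ψ) (t : ℕ) (ht : 0 < t) :
    ∃ k : Fin ℓ, (1:ℝ)/320000/ℓ ≤ volume.real (VSet (fun q => (π k).indicator ψ (t * q)) γ ∩ Set.Icc 0 1) := by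
  have hk := khin (fun q => ψ (t * q)) γ (fun q => hψ0 _)
    (fun q r h1 h2 => hψdec _ _ (Nat.mul_pos ht h1) (Nat.mul_le_mul_left t h2)) (by
      intro hs
      apply hdiv
      rw [← summable_schlomilch_iff_of_nonneg (C := 1) (u := fun n : ℕ => t * (n + 1)) hψ0
        (fun m n hm hmn => hψdec m n hm hmn) (fun n => by positivity) 
        (fun a b hab => Nat.mul_lt_mul_of_pos_left (by omega) ht) (by norm_num)]
      · have h4 := ((summable_nat_add_iff 1).2 hs).mul_left (t:ℝ)
        refine h4.congr ?_
        intro n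
        push_cast
        ring
      · intro n
        simp only [mul_add, smul_eq_mul]
        omega)
  have hcov : VSet (fun q => ψ (t * q)) γ ∩ Set.Icc 0 1 ⊆ 
      ⋃ k ∈ (Finset.univ : Finset (Fin ℓ)), (VSet (fun q => (π k).indicator ψ (t * q)) γ ∩ Set.Icc 0 1) := by
    rintro α ⟨h1, h2⟩
    by_contra hcon
    simp only [Set.mem_iUnion, Set.mem_inter_iff, not_exists, not_and] at hcon
    apply h1
    refine Set.Finite.subset (Set.finite_iUnion (ι := Fin ℓ) 
      (f := fun k => {q : ℕ | 1 ≤ q ∧ ∃ a : ℤ, |q * α - γ - a| < (π k).indicator ψ (t * q)}) ?_) ?_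
    · intro k
      by_contra hinf
      exact hcon k (Finset.mem_univ _) hinf h2
    · rintro q ⟨hq, a, ha⟩
      obtain ⟨k, hk⟩ := hpart (t * q) (Nat.mul_pos ht hq)
      rw [Set.mem_iUnion]
      exact ⟨k, hq, a, by rwa [Set.indicator_of_mem hk]⟩
  have hle := (hk.trans (measureReal_mono hcov (by
      refine ((measure_biUnion_lt_top (Finset.finite_toSet _) ?_)).ne
      intro k _
      exact lt_of_le_of_lt (measure_mono Set.inter_subset_right) (by simp)))).trans
      (measureReal_biUnion_finset_le _ _)
  have hℓ : 0 < ℓ := by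
    obtain ⟨k, _⟩ := hpart 1 le_rfl
    exact k.pos
  have hℓR : (0:ℝ) < ℓ := by exact_mod_cast hℓ
  by_contra hcon
  push Not at hcon
  have : ∑ k : Fin ℓ, volume.real (VSet (fun q => (π k).indicator ψ (t * q)) γ ∩ Set.Icc 0 1) < 
      ∑ k : Fin ℓ, (1:ℝ)/320000/ℓ := by
    apply Finset.sum_lt_sum_of_nonempty
    · exact ⟨⟨0, hℓ⟩, Finset.mem_univ _⟩
    · intro k _; exact hcon k
  rw [Finset.sum_const, Finset.card_univ, Fintype.card_fin, nsmul_eq_mul, mul_div_cancel₀ _ hℓR.ne'] at this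
  linarith

theorem stmt4 (γ : ℝ) (ℓ : ℕ) (π : Fin ℓ → Set ℕ)
    (hpart : ∀ q : ℕ, 1 ≤ q → ∃! k, q ∈ π k)
    (ψ : ℕ → ℝ) (hψ0 : ∀ q, 0 ≤ ψ q)
    (hψdec : ∀ q r : ℕ, 1 ≤ q → q ≤ r → ψ r ≤ ψ q)
    (hdiv : ¬ Summable ψ) :
    ∃ k : Fin ℓ, volume (WSet ((π k).indicator ψ) (fun _ => γ)) = 1 := by
  have hex := fun t : ℕ => exists_part γ ℓ π (fun q hq => (hpart q hq).exists) ψ hψ0 hψdec hdiv (t + 1) (by omega)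
  choose f hf using hex
  obtain ⟨k, hk⟩ := Finite.exists_infinite_fiber f
  have hℓR : (0:ℝ) < ℓ := by exact_mod_cast k.pos
  refine ⟨k, ?_⟩
  have hnull : volume (VSet ((π k).indicator ψ) γ)ᶜ = 0 := by
    apply null_of_cells _ (VSet_meas _ _) ((1:ℝ)/320000/ℓ) (by positivity)
    rw [Filter.frequently_atTop]
    intro N
    obtain ⟨t, ht, hNt⟩ := (Set.infinite_coe_iff.1 hk).exists_gt N
    refine ⟨t + 1, by omega, by omega, fun b => ?_⟩
    apply VSet_cell _ _ _ (by omega)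
    have := hf t
    rwa [show f t = k from ht] at this
  have hW : WSet ((π k).indicator ψ) (fun _ => γ) = Set.Icc 0 1 ∩ VSet ((π k).indicator ψ) γ := by
    ext α
    have : ∀ (x e : ℝ), distNearestInt x < e ↔ ∃ a : ℤ, |x - a| < e := by
      intro x e
      constructor
      · intro h; exact ⟨round x, h⟩
      · rintro ⟨a, ha⟩; exact lt_of_le_of_lt (round_le x a) ha
    simp only [WSet, VSet, this, Set.mem_inter_iff, Set.mem_ofPred_eq]
  rw [hW, measure_inter_conull hnull]
  simp
end

section
/- Let ψ:ℕ→ℝ≥0 be decreasing, and suppose there exist δ>0 and c>0 such that ∑_{q≤Q} ψ(q) ≥ c·(log Q)(log log Q)^{3+δ} for infinitely many Q > 1. Then for every sequence γ=(γ_q)_{q≥1} of real numbers, meas(W(ψ,γ)) = 1. -/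
open MeasureTheory

/-- `log x = max {1, ln x}`. -/
noncomputable def log1 (x : ℝ) : ℝ := max 1 (Real.log x)

/-- For a decreasing sequence, the sum over multiples of `d` is at most `1/d` of the sum. -/
lemma sum_mult (f : ℕ → ℝ) (h0 : ∀ q, 0 ≤ f q)
    (hdec : ∀ q r : ℕ, 1 ≤ q → q ≤ r → f r ≤ f q) (d : ℕ) (hd : 1 ≤ d) (Q : ℕ) :
    (d : ℝ) * ∑ q ∈ Finset.Icc 1 Q, (if d ∣ q then f q else 0) + ((Q % d : ℕ) : ℝ) * f Q
      ≤ ∑ q ∈ Finset.Icc 1 Q, f q := by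
  induction Q with
  | zero => simp
  | succ Q ih =>
    rw [Finset.sum_Icc_succ_top (by omega), Finset.sum_Icc_succ_top (by omega)]
    have hle : ((Q % d : ℕ) : ℝ) * f (Q + 1) ≤ ((Q % d : ℕ) : ℝ) * f Q := by
      rcases Nat.eq_zero_or_pos Q with h | h
      · subst h; simp
      · exact mul_le_mul_of_nonneg_left (hdec Q (Q + 1) h (by omega)) (by positivity)
    by_cases hdv : d ∣ Q + 1
    · have h1 : (Q + 1) % d = 0 := Nat.mod_eq_zero_of_dvd hdv
      have h2 : Q % d + 1 = d := by
        have := Nat.mod_lt Q hd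
        by_contra hne
        have h3 : (Q + 1) % d = Q % d + 1 := by
          rw [Nat.add_mod]
          rcases Nat.lt_or_ge 1 d with h | h
          · rw [Nat.mod_eq_of_lt h]; exact Nat.mod_eq_of_lt (by omega)
          · omega
        omega
      have h2' : ((Q % d : ℕ) : ℝ) + 1 = d := by exact_mod_cast h2
      rw [if_pos hdv, h1]
      push_cast
      have : (d : ℝ) * f (Q + 1) = ((Q % d : ℕ) : ℝ) * f (Q + 1) + f (Q + 1) := by
        rw [← h2']; ring
      nlinarith
    · rw [if_neg hdv]
      have h3 : ((Q + 1) % d : ℕ) ≤ Q % d + 1 := by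
        rw [Nat.add_mod]
        refine (Nat.mod_le _ _).trans ?_
        have := Nat.mod_le 1 d
        omega
      have h3' : (((Q + 1) % d : ℕ) : ℝ) ≤ ((Q % d : ℕ) : ℝ) + 1 := by exact_mod_cast h3
      have := mul_le_mul_of_nonneg_right h3' (h0 (Q + 1))
      nlinarith

lemma sum_gcd (q : ℕ) (Q : ℕ) (hq1 : 1 ≤ q) (hq : q ≤ Q) :
    ∑ r ∈ Finset.Icc 1 q, (Nat.gcd q r : ℝ) ≤ q * ∑ d ∈ Finset.Icc 1 Q, (if d ∣ q then (1:ℝ) else 0) := by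
  have h1 : ∀ r ∈ Finset.Icc 1 q, (Nat.gcd q r : ℝ) ≤
      ∑ d ∈ Finset.Icc 1 Q, (if d ∣ q ∧ d ∣ r then (d:ℝ) else 0) := by
    intro r hr
    have hmem : Nat.gcd q r ∈ Finset.Icc 1 Q := by
      rw [Finset.mem_Icc]
      exact ⟨Nat.gcd_pos_of_pos_left _ hq1, (Nat.gcd_le_left _ hq1).trans hq⟩
    have := Finset.single_le_sum (f := fun d : ℕ => (if d ∣ q ∧ d ∣ r then (d:ℝ) else 0))
      (fun i _ => by positivity) hmem
    simpa [Nat.gcd_dvd_left, Nat.gcd_dvd_right] using this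
  refine (Finset.sum_le_sum h1).trans ?_
  rw [Finset.sum_comm, Finset.mul_sum]
  refine Finset.sum_le_sum fun d hd => ?_
  have hd1 := (Finset.mem_Icc.1 hd).1
  by_cases hdq : d ∣ q
  · have := sum_mult (fun _ => 1) (by simp) (by simp) d hd1 q
    simp only [hdq, true_and, if_true]
    have h2 : ((q % d : ℕ) : ℝ) ≥ 0 := by positivity
    have h3 : ∑ r ∈ Finset.Icc 1 q, (if d ∣ r then (d:ℝ) else 0)
        = d * ∑ r ∈ Finset.Icc 1 q, (if d ∣ r then (1:ℝ) else 0) := by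
      rw [Finset.mul_sum]; refine Finset.sum_congr rfl fun r _ => ?_
      split_ifs <;> simp
    rw [h3]
    simp at this ⊢
    linarith
  · simp [hdq]

lemma sum_err (f : ℕ → ℝ) (h0 : ∀ q, 0 ≤ f q)
    (hdec : ∀ q r : ℕ, 1 ≤ q → q ≤ r → f r ≤ f q) (Q : ℕ) :
    ∑ q ∈ Finset.Icc 1 Q, ∑ r ∈ Finset.Icc 1 q, f q * (Nat.gcd q r : ℝ) / q
      ≤ (1 + Real.log Q) * ∑ q ∈ Finset.Icc 1 Q, f q := by
  have h1 : ∀ q ∈ Finset.Icc 1 Q, ∑ r ∈ Finset.Icc 1 q, f q * (Nat.gcd q r : ℝ) / q ≤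
      ∑ d ∈ Finset.Icc 1 Q, (if d ∣ q then f q else 0) := by
    intro q hq
    obtain ⟨a, b⟩ := Finset.mem_Icc.1 hq
    have hq0 : (0:ℝ) < q := by exact_mod_cast a
    rw [← Finset.sum_div, ← Finset.mul_sum, div_le_iff₀ hq0]
    have := mul_le_mul_of_nonneg_left (sum_gcd q Q a b) (h0 q)
    refine this.trans (le_of_eq ?_)
    rw [mul_left_comm, mul_comm _ (q:ℝ), Finset.mul_sum]
    congr 1
    refine Finset.sum_congr rfl fun r _ => ?_
    split_ifs <;> simp
  refine (Finset.sum_le_sum h1).trans ?_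
  rw [Finset.sum_comm]
  have h2 : ∀ d ∈ Finset.Icc 1 Q, ∑ q ∈ Finset.Icc 1 Q, (if d ∣ q then f q else 0)
      ≤ (d:ℝ)⁻¹ * ∑ q ∈ Finset.Icc 1 Q, f q := by
    intro d hd
    have hd1 := (Finset.mem_Icc.1 hd).1
    have hd0 : (0:ℝ) < d := by exact_mod_cast hd1
    rw [inv_mul_eq_div, le_div_iff₀ hd0]
    have := sum_mult f h0 hdec d hd1 Q
    have h3 : 0 ≤ ((Q % d : ℕ) : ℝ) * f Q := mul_nonneg (by positivity) (h0 _)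
    linarith
  refine (Finset.sum_le_sum h2).trans ?_
  rw [← Finset.sum_mul]
  refine mul_le_mul_of_nonneg_right ?_ (Finset.sum_nonneg fun q _ => h0 q)
  have := harmonic_le_one_add_log Q
  rw [harmonic_eq_sum_Icc] at this
  push_cast at this
  exact this

lemma card_Ioo_int (T : Finset ℤ) (u v : ℝ) (huv : u ≤ v) (h : ∀ k ∈ T, u < k ∧ (k:ℝ) < v) :
    (T.card : ℝ) ≤ v - u + 1 := by
  have hs : T ⊆ Finset.Ioo ⌊u⌋ ⌈v⌉ := by
    intro k hk
    rw [Finset.mem_Ioo, Int.floor_lt, Int.lt_ceil]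
    exact h k hk
  have hc := Finset.card_le_card hs
  rw [Int.card_Ioo] at hc
  have h1 : (T.card : ℤ) ≤ max (⌈v⌉ - ⌊u⌋ - 1) 0 := by omega
  have h2 : (T.card : ℝ) ≤ max (⌈v⌉ - ⌊u⌋ - 1) 0 := by exact_mod_cast h1
  have := Int.ceil_lt_add_one v
  have := Int.lt_floor_add_one u
  push_cast at h2
  refine h2.trans (max_le ?_ ?_) <;> linarith

open Classical in
lemma count (q r : ℕ) (hq : 1 ≤ q) (s w : ℝ) (hw : 0 ≤ w) :
    (((Finset.range q).filter fun a : ℕ => distNearestInt (r * a / q + s) < w).card : ℝ)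
      ≤ 2 * w * q + Nat.gcd q r := by
  set d := Nat.gcd q r with hd
  have hdpos : 0 < d := Nat.gcd_pos_of_pos_left _ hq
  obtain ⟨q', hq'⟩ : d ∣ q := Nat.gcd_dvd_left _ _
  obtain ⟨r', hr'⟩ : d ∣ r := Nat.gcd_dvd_right _ _
  have hcop : Nat.Coprime q' r' := by
    have := Nat.gcd_mul_left d q' r'
    rw [← hq', ← hr', ← hd] at this
    exact Nat.eq_of_mul_eq_mul_left hdpos (by rw [mul_one]; exact this.symm)
  have hq'pos : 0 < q' := by
    rcases Nat.eq_zero_or_pos q' with h | h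
    · subst h; omega
    · exact h
  have hqR : (0:ℝ) < q := by exact_mod_cast hq
  have hdR : (0:ℝ) < d := by exact_mod_cast hdpos
  have hq'R : (0:ℝ) < q' := by exact_mod_cast hq'pos
  set S := (Finset.range q).filter fun a : ℕ => distNearestInt (r * a / q + s) < w
  let k : ℕ → ℤ := fun a => (r' : ℤ) * a - round ((r * a / q + s : ℝ)) * q'
  let T := S.image k
  have hT : (T.card : ℝ) ≤ 2 * w * q' + 1 := by
    have := card_Ioo_int T (-(s + w) * q') ((w - s) * q') (by nlinarith) (by
      intro z hz
      obtain ⟨a, ha, rfl⟩ := Finset.mem_image.1 hz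
      have ha2 := (Finset.mem_filter.1 ha).2
      unfold distNearestInt at ha2
      have e : (r * a / q : ℝ) = r' * a / q' := by
        rw [hr', hq']; push_cast; field_simp
      simp only [k]
      push_cast
      set m : ℝ := ((round ((r * a / q + s : ℝ)) : ℤ) : ℝ) with hm
      rw [abs_lt, e] at ha2
      have e2 : (r':ℝ) * a - m * q' = (r' * a / q' - m) * q' := by field_simp
      rw [e2]
      constructor
      · exact mul_lt_mul_of_pos_right (by linarith) hq'R
      · exact mul_lt_mul_of_pos_right (by linarith) hq'R)
    linarith
  have hc : S.card ≤ (T ×ˢ Finset.range d).card := by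
    refine Finset.card_le_card_of_injOn (fun a => (k a, a / q')) ?_ ?_
    · intro a ha
      have ha1 := Finset.mem_range.1 (Finset.mem_filter.1 ha).1
      simp only [Finset.coe_product, Set.mem_prod, Finset.mem_coe]
      refine ⟨Finset.mem_image_of_mem k ha, ?_⟩
      rw [Finset.mem_range]
      exact Nat.div_lt_of_lt_mul (by rw [mul_comm, ← hq']; exact ha1)
    · intro a _ b _ hab
      simp only [Prod.mk.injEq] at hab
      obtain ⟨h1, h2⟩ := hab
      have h3 : (q' : ℤ) ∣ (r' : ℤ) * (a - b) := by
        simp only [k] at h1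
        exact ⟨round ((r * a / q + s : ℝ)) - round ((r * b / q + s : ℝ)), by linarith⟩
      have h4 : (q' : ℤ) ∣ (a:ℤ) - b :=
        IsCoprime.dvd_of_dvd_mul_left (Nat.isCoprime_iff_coprime.2 hcop) h3
      have h5 : b % q' = a % q' := (Nat.modEq_iff_dvd.2 h4)
      rw [← Nat.div_add_mod a q', ← Nat.div_add_mod b q', h2, h5]
  rw [Finset.card_product, Finset.card_range] at hc
  have hc' : (S.card : ℝ) ≤ T.card * d := by exact_mod_cast hc
  have e : (q:ℝ) = d * q' := by exact_mod_cast hq'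
  calc (S.card : ℝ) ≤ T.card * d := hc'
    _ ≤ (2 * w * q' + 1) * d := by gcongr
    _ = _ := by rw [e]; ring

open Classical in
/-- Indicator of the event `‖x - c‖ < w`. -/
noncomputable def chi (c w : ℝ) (x : ℝ) : ℝ := if distNearestInt (x - c) < w then 1 else 0

lemma dni_meas : Measurable distNearestInt := by
  unfold distNearestInt
  simp only [round_eq]
  have : Measurable fun x : ℝ => ((⌊x + 1 / 2⌋ : ℤ) : ℝ) :=
    measurable_from_top.comp (Int.measurable_floor.comp (measurable_id.add_const _))
  exact (measurable_id.sub this).abs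

lemma dni_add (x : ℝ) (n : ℤ) : distNearestInt (x + n) = distNearestInt x := by
  unfold distNearestInt
  rw [round_add_intCast]; push_cast; congr 1; ring

lemma chi_meas (c w : ℝ) : Measurable (chi c w) := by
  unfold chi
  exact Measurable.ite (measurableSet_lt (dni_meas.comp (measurable_id.sub_const c))
    measurable_const) measurable_const measurable_const

lemma chi_add (c w x : ℝ) (n : ℤ) : chi c w (x + n) = chi c w x := by
  unfold chi
  rw [show x + n - c = (x - c) + n by ring, dni_add]

lemma chi_nonneg (c w x : ℝ) : 0 ≤ chi c w x := by unfold chi; split_ifs <;> norm_num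
lemma chi_le (c w x : ℝ) : chi c w x ≤ 1 := by unfold chi; split_ifs <;> norm_num

/-- bounded measurable functions are interval integrable -/
lemma bdd_ii {f : ℝ → ℝ} (hf : Measurable f) {C : ℝ} (hC : ∀ x, |f x| ≤ C) (a b : ℝ) :
    IntervalIntegrable f volume a b := by
  refine (intervalIntegrable_const (c := C)).mono_fun hf.aestronglyMeasurable ?_
  refine Filter.Eventually.of_forall fun x => ?_
  simp only [Real.norm_eq_abs]
  exact (hC x).trans (le_abs_self C)

lemma integral_split {h : ℝ → ℝ} (hf : Measurable h) {C : ℝ} (hC : ∀ x, |h x| ≤ C)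
    (q : ℕ) (hq : 1 ≤ q) :
    ∫ x in (0:ℝ)..1, h x = (q:ℝ)⁻¹ * ∫ t in (0:ℝ)..1, ∑ a ∈ Finset.range q, h ((t + a) / q) := by
  have hq0 : (q:ℝ) ≠ 0 := by positivity
  have h1 := intervalIntegral.inv_mul_integral_comp_div (f := h) (a := 0) (b := q) (c := (q:ℝ))
  rw [zero_div, div_self hq0] at h1
  rw [← h1]
  congr 1
  have hm : ∀ d : ℝ, Measurable fun t : ℝ => h ((t + d) / q) := fun d =>
    hf.comp ((measurable_id.add_const d).div_const _)
  have h2 := intervalIntegral.sum_integral_adjacent_intervals (μ := volume)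
    (f := fun x => h (x / q)) (a := fun k : ℕ => (k:ℝ)) (n := q)
    (fun k _ => bdd_ii (by simpa using hm 0) (fun x => hC _) _ _)
  simp only [Nat.cast_zero] at h2
  rw [← h2, intervalIntegral.integral_finsetSum (f := fun (a : ℕ) t => h ((t + a) / q))
    (fun a _ => bdd_ii (hm a) (fun x => hC _) _ _)]
  refine Finset.sum_congr rfl fun a _ => ?_
  have := intervalIntegral.integral_comp_add_right (fun x => h (x / q)) (a := 0) (b := 1) (a:ℝ)
  rw [this]
  push_cast
  rw [zero_add, add_comm]

lemma chi_int (c w : ℝ) (hw : 0 ≤ w) (hw2 : w ≤ 1 / 2) : ∫ x in (0:ℝ)..1, chi c w x = 2 * w := by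
  have hp : Function.Periodic (chi c w) 1 := fun x => by simpa using chi_add c w x 1
  have h1 := hp.intervalIntegral_add_eq 0 (c - 1 / 2)
  rw [zero_add] at h1
  rw [h1]
  have hle : c - 1 / 2 ≤ c - 1 / 2 + 1 := by linarith
  rw [intervalIntegral.integral_of_le hle, integral_Ioc_eq_integral_Ioo]
  have h2 : ∫ x in Set.Ioo (c - 1 / 2) (c - 1 / 2 + 1), chi c w x =
      ∫ x in Set.Ioo (c - 1 / 2) (c - 1 / 2 + 1), (Set.Ioo (c - w) (c + w)).indicator 1 x := by
    refine setIntegral_congr_fun measurableSet_Ioo fun x hx => ?_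
    have hr : round (x - c) = 0 := by
      rw [round_eq_zero_iff]; constructor <;> linarith [hx.1, hx.2]
    simp only [chi, distNearestInt, hr, Set.indicator, Set.mem_Ioo, Pi.one_apply]
    congr 1
    simp only [Int.cast_zero, sub_zero, abs_lt, eq_iff_iff]
    constructor <;> rintro ⟨a, b⟩ <;> constructor <;> linarith
  rw [h2, setIntegral_indicator measurableSet_Ioo, Set.inter_eq_self_of_subset_right]
  · simp [measureReal_def]
    rw [ENNReal.toReal_ofReal (by linarith)]; ring
  · exact Set.Ioo_subset_Ioo (by linarith) (by linarith)

lemma chi_abs (c w x : ℝ) : |chi c w x| ≤ 1 := by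
  rw [abs_of_nonneg (chi_nonneg c w x)]; exact chi_le c w x

lemma chi_mul_meas (c w k : ℝ) : Measurable fun x : ℝ => chi c w (k * x) :=
  (chi_meas c w).comp (measurable_id.const_mul k)

lemma mean_eq (c w : ℝ) (hw : 0 ≤ w) (hw2 : w ≤ 1 / 2) (q : ℕ) (hq : 1 ≤ q) :
    ∫ x in (0:ℝ)..1, chi c w (q * x) = 2 * w := by
  have hq0 : (q:ℝ) ≠ 0 := by positivity
  rw [integral_split (chi_mul_meas c w q) (fun x => chi_abs c w _) q hq]
  have : ∀ t : ℝ, ∑ a ∈ Finset.range q, chi c w (q * ((t + a) / q)) = q * chi c w t := by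
    intro t
    rw [Finset.sum_congr rfl (g := fun _ => chi c w t)]
    · simp
    · intro a _
      rw [mul_div_cancel₀ _ hq0]
      simpa using chi_add c w t a
  simp only [this, intervalIntegral.integral_const_mul, chi_int c w hw hw2]
  field_simp

lemma corr_le (c w c' w' : ℝ) (hw : 0 ≤ w) (hw2 : w ≤ 1 / 2) (hw' : 0 ≤ w')
    (q r : ℕ) (hq : 1 ≤ q) :
    ∫ x in (0:ℝ)..1, chi c w (q * x) * chi c' w' (r * x)
      ≤ 4 * w * w' + 2 * (w * (Nat.gcd q r : ℝ) / q) := by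
  have hq0 : (q:ℝ) ≠ 0 := by positivity
  have hm : Measurable fun x : ℝ => chi c w (q * x) * chi c' w' (r * x) :=
    (chi_mul_meas c w q).mul (chi_mul_meas c' w' r)
  have hb : ∀ x : ℝ, |chi c w (q * x) * chi c' w' (r * x)| ≤ 1 := fun x => by
    rw [abs_mul]
    exact mul_le_one₀ (chi_abs _ _ _) (abs_nonneg _) (chi_abs _ _ _)
  rw [integral_split hm hb q hq]
  have key : ∀ t : ℝ, ∑ a ∈ Finset.range q,
      chi c w (q * ((t + a) / q)) * chi c' w' (r * ((t + a) / q))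
        ≤ (2 * w' * q + Nat.gcd q r) * chi c w t := by
    intro t
    have h1 : ∀ a ∈ Finset.range q, chi c w (q * ((t + a) / q)) * chi c' w' (r * ((t + a) / q))
        = chi c w t * (if distNearestInt (r * a / q + (r * t / q - c')) < w' then 1 else 0) := by
      intro a _
      rw [mul_div_cancel₀ _ hq0]
      congr 1
      · simpa using chi_add c w t a
      · unfold chi
        congr 3
        ring
    rw [Finset.sum_congr rfl h1, ← Finset.mul_sum, mul_comm]
    refine mul_le_mul_of_nonneg_right ?_ (chi_nonneg _ _ _)
    have := count q r hq (r * t / q - c') w' hw'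
    rw [Finset.sum_ite]
    simpa using this
  have hi : ∫ t in (0:ℝ)..1, ∑ a ∈ Finset.range q,
      chi c w (q * ((t + a) / q)) * chi c' w' (r * ((t + a) / q))
        ≤ ∫ t in (0:ℝ)..1, (2 * w' * q + Nat.gcd q r) * chi c w t := by
    refine intervalIntegral.integral_mono_on (by norm_num) ?_ ?_ (fun t _ => key t)
    · refine bdd_ii (C := ∑ a ∈ Finset.range q, 1) ?_ ?_ _ _
      · exact Finset.measurable_sum _ fun a _ =>
          hm.comp ((measurable_id.add_const _).div_const _)
      · intro t
        exact (Finset.abs_sum_le_sum_abs _ _).trans (Finset.sum_le_sum fun a _ => hb _)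
    · exact (bdd_ii (chi_meas c w) (chi_abs c w) _ _).const_mul _
  rw [intervalIntegral.integral_const_mul, chi_int c w hw hw2] at hi
  have hq1 : (0:ℝ) ≤ (q:ℝ)⁻¹ := by positivity
  refine (mul_le_mul_of_nonneg_left hi hq1).trans (le_of_eq ?_)
  field_simp
  ring

/-- Counting function. -/
noncomputable def cnt (f γ : ℕ → ℝ) (Q : ℕ) (x : ℝ) : ℝ :=
  ∑ q ∈ Finset.Icc 1 Q, chi (γ q) (f q) (q * x)

lemma cnt_meas (f γ : ℕ → ℝ) (Q : ℕ) : Measurable (cnt f γ Q) :=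
  Finset.measurable_sum _ fun _ _ => chi_mul_meas _ _ _

lemma cnt_bd (f γ : ℕ → ℝ) (Q : ℕ) (x : ℝ) : |cnt f γ Q x| ≤ Q := by
  unfold cnt
  refine (Finset.abs_sum_le_sum_abs _ _).trans
    ((Finset.sum_le_sum fun a _ => chi_abs _ _ _).trans ?_)
  simp

lemma variance_le (f γ : ℕ → ℝ) (h0 : ∀ q, 0 ≤ f q) (h2 : ∀ q, 1 ≤ q → f q ≤ 1 / 2)
    (hdec : ∀ q r : ℕ, 1 ≤ q → q ≤ r → f r ≤ f q) (Q : ℕ) :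
    ∫ x in (0:ℝ)..1, (cnt f γ Q x - 2 * ∑ q ∈ Finset.Icc 1 Q, f q) ^ 2
      ≤ 4 * (1 + Real.log Q) * ∑ q ∈ Finset.Icc 1 Q, f q := by
  set P := ∑ q ∈ Finset.Icc 1 Q, f q with hP
  have hN : ∫ x in (0:ℝ)..1, cnt f γ Q x = 2 * P := by
    unfold cnt
    rw [intervalIntegral.integral_finsetSum
      (f := fun (q : ℕ) x => chi (γ q) (f q) (q * x))
      (fun a _ => bdd_ii (chi_mul_meas _ _ _) (fun x => chi_abs _ _ _) _ _), hP, Finset.mul_sum]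
    refine Finset.sum_congr rfl fun q hq => ?_
    have hq1 := (Finset.mem_Icc.1 hq).1
    exact mean_eq _ _ (h0 q) (h2 q hq1) q hq1
  let E : ℕ → ℕ → ℝ := fun q r => if r ≤ q then 2 * (f q * (Nat.gcd q r : ℝ) / q) else 0
  have hE0 : ∀ q r, 0 ≤ E q r := by
    intro q r
    simp only [E]
    split_ifs
    · have := h0 q
      positivity
    · exact le_rfl
  have hmm : ∀ q r : ℕ, Measurable fun x : ℝ =>
      chi (γ q) (f q) (q * x) * chi (γ r) (f r) (r * x) := fun q r =>
    (chi_mul_meas _ _ _).mul (chi_mul_meas _ _ _)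
  have hmb : ∀ (q r : ℕ) (x : ℝ),
      |chi (γ q) (f q) (q * x) * chi (γ r) (f r) (r * x)| ≤ 1 := fun q r x => by
    rw [abs_mul]
    exact mul_le_one₀ (chi_abs _ _ _) (abs_nonneg _) (chi_abs _ _ _)
  have hcorr : ∀ q ∈ Finset.Icc 1 Q, ∀ r ∈ Finset.Icc 1 Q,
      ∫ x in (0:ℝ)..1, chi (γ q) (f q) (q * x) * chi (γ r) (f r) (r * x)
        ≤ 4 * f q * f r + E q r + E r q := by
    intro q hq r hr
    have hq1 := (Finset.mem_Icc.1 hq).1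
    have hr1 := (Finset.mem_Icc.1 hr).1
    rcases le_total r q with h | h
    · have h3 := corr_le (γ q) (f q) (γ r) (f r) (h0 q) (h2 q hq1) (h0 r) q r hq1
      have h4 : E q r = 2 * (f q * (Nat.gcd q r : ℝ) / q) := if_pos h
      linarith [hE0 r q]
    · have h3 := corr_le (γ r) (f r) (γ q) (f q) (h0 r) (h2 r hr1) (h0 q) r q hr1
      have h4 : E r q = 2 * (f r * (Nat.gcd r q : ℝ) / r) := if_pos h
      have h5 : ∀ x : ℝ, chi (γ q) (f q) (q * x) * chi (γ r) (f r) (r * x) =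
        chi (γ r) (f r) (r * x) * chi (γ q) (f q) (q * x) := fun x => mul_comm _ _
      simp only [h5]
      linarith [hE0 q r]
  have hEs : ∑ q ∈ Finset.Icc 1 Q, ∑ r ∈ Finset.Icc 1 Q, E q r ≤ 2 * ((1 + Real.log Q) * P) := by
    refine le_trans (le_of_eq ?_) (mul_le_mul_of_nonneg_left (sum_err f h0 hdec Q) zero_le_two)
    rw [Finset.mul_sum]
    refine Finset.sum_congr rfl fun q hq => ?_
    have hq2 := (Finset.mem_Icc.1 hq).2
    simp only [E]
    rw [Finset.mul_sum, ← Finset.sum_filter]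
    refine Finset.sum_congr ?_ fun _ _ => rfl
    ext r
    simp only [Finset.mem_filter, Finset.mem_Icc]
    omega
  have hsq : ∫ x in (0:ℝ)..1, cnt f γ Q x ^ 2 ≤ 4 * P ^ 2 + 4 * (1 + Real.log Q) * P := by
    have e : ∀ x, cnt f γ Q x ^ 2 = ∑ q ∈ Finset.Icc 1 Q, ∑ r ∈ Finset.Icc 1 Q,
        chi (γ q) (f q) (q * x) * chi (γ r) (f r) (r * x) := by
      intro x
      rw [sq, cnt, Finset.sum_mul_sum]
    simp only [e]
    rw [intervalIntegral.integral_finsetSum (f := fun (q : ℕ) x => ∑ r ∈ Finset.Icc 1 Q,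
        chi (γ q) (f q) (q * x) * chi (γ r) (f r) (r * x))]
    · have h6 : ∀ q ∈ Finset.Icc 1 Q, ∫ x in (0:ℝ)..1, ∑ r ∈ Finset.Icc 1 Q,
          chi (γ q) (f q) (q * x) * chi (γ r) (f r) (r * x) ≤
          ∑ r ∈ Finset.Icc 1 Q, (4 * f q * f r + E q r + E r q) := by
        intro q hq
        rw [intervalIntegral.integral_finsetSum (f := fun (r : ℕ) x =>
          chi (γ q) (f q) (q * x) * chi (γ r) (f r) (r * x))
          (fun r _ => bdd_ii (hmm q r) (hmb q r) _ _)]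
        exact Finset.sum_le_sum fun r hr => hcorr q hq r hr
      refine (Finset.sum_le_sum h6).trans ?_
      simp only [Finset.sum_add_distrib]
      have h7 : ∑ q ∈ Finset.Icc 1 Q, ∑ r ∈ Finset.Icc 1 Q, E r q
        = ∑ q ∈ Finset.Icc 1 Q, ∑ r ∈ Finset.Icc 1 Q, E q r := Finset.sum_comm
      have h8 : ∑ q ∈ Finset.Icc 1 Q, ∑ r ∈ Finset.Icc 1 Q, 4 * f q * f r = 4 * P ^ 2 := by
        rw [sq, hP, Finset.sum_mul_sum, Finset.mul_sum]
        refine Finset.sum_congr rfl fun q _ => ?_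
        rw [Finset.mul_sum]
        exact Finset.sum_congr rfl fun r _ => by ring
      rw [h7, h8]
      linarith
    · intro q _
      refine bdd_ii (C := ∑ a ∈ Finset.Icc 1 Q, 1)
        (Finset.measurable_sum _ fun r _ => hmm q r) (fun x => ?_) _ _
      exact (Finset.abs_sum_le_sum_abs _ _).trans (Finset.sum_le_sum fun a _ => hmb _ _ _)
  have e2 : ∀ x, (cnt f γ Q x - 2 * P) ^ 2 = cnt f γ Q x ^ 2 - 4 * P * cnt f γ Q x + 4 * P ^ 2 :=
    fun x => by ring
  simp only [e2]
  have i1 : IntervalIntegrable (fun x => cnt f γ Q x ^ 2) volume 0 1 :=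
    bdd_ii (C := (Q:ℝ) ^ 2) ((cnt_meas f γ Q).pow_const 2) (fun x => by
      rw [abs_pow]; exact pow_le_pow_left₀ (abs_nonneg _) (cnt_bd f γ Q x) 2) _ _
  have i2 : IntervalIntegrable (fun x => 4 * P * cnt f γ Q x) volume 0 1 :=
    (bdd_ii (cnt_meas f γ Q) (cnt_bd f γ Q) _ _).const_mul _
  rw [intervalIntegral.integral_add (i1.sub i2) (by simp), intervalIntegral.integral_sub i1 i2,
    intervalIntegral.integral_const_mul, hN]
  simp
  linarith

lemma tail_le (f γ : ℕ → ℝ) (h0 : ∀ q, 0 ≤ f q) (h2 : ∀ q, 1 ≤ q → f q ≤ 1 / 2)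
    (hdec : ∀ q r : ℕ, 1 ≤ q → q ≤ r → f r ≤ f q) (Q : ℕ)
    (hpos : 0 < ∑ q ∈ Finset.Icc 1 Q, f q) :
    volume {x | x ∈ Set.Ioc (0:ℝ) 1 ∧ cnt f γ Q x ≤ ∑ q ∈ Finset.Icc 1 Q, f q} ≤
      ENNReal.ofReal (4 * (1 + Real.log Q) / ∑ q ∈ Finset.Icc 1 Q, f q) := by
  have hv := variance_le f γ h0 h2 hdec Q
  set P := ∑ q ∈ Finset.Icc 1 Q, f q with hP
  rw [intervalIntegral.integral_of_le zero_le_one] at hv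
  have hint : IntervalIntegrable (fun x => (cnt f γ Q x - 2 * P) ^ 2) volume 0 1 := by
    refine bdd_ii (C := ((Q:ℝ) + |2 * P|) ^ 2) (((cnt_meas f γ Q).sub_const _).pow_const 2)
      (fun x => ?_) _ _
    rw [abs_pow]
    refine pow_le_pow_left₀ (abs_nonneg _) ?_ 2
    exact (abs_sub _ _).trans (by linarith [cnt_bd f γ Q x])
  rw [intervalIntegrable_iff_integrableOn_Ioc_of_le zero_le_one] at hint
  have hm := mul_meas_ge_le_integral_of_nonneg (μ := volume.restrict (Set.Ioc (0:ℝ) 1))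
    (Filter.Eventually.of_forall fun x => sq_nonneg _) hint (P ^ 2)
  have h3 : (volume.restrict (Set.Ioc (0:ℝ) 1)).real {x | P ^ 2 ≤ (cnt f γ Q x - 2 * P) ^ 2}
      ≤ 4 * (1 + Real.log Q) / P := by
    rw [le_div_iff₀ hpos]
    have h4 := hm.trans hv
    refine le_of_mul_le_mul_right ?_ hpos
    linarith
  rw [measureReal_def] at h3
  have h5 := (ENNReal.le_ofReal_iff_toReal_le (measure_ne_top _ _)
    (ENNReal.toReal_nonneg.trans h3)).2 h3
  refine le_trans ?_ h5
  rw [Measure.restrict_apply']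
  · refine measure_mono fun x hx => ⟨?_, hx.1⟩
    have := hx.2
    simp only [Set.mem_setOf_eq]
    nlinarith
  · exact measurableSet_Ioc

lemma full_measure (f γ : ℕ → ℝ) (h0 : ∀ q, 0 ≤ f q) (h2 : ∀ q, 1 ≤ q → f q ≤ 1 / 2)
    (hdec : ∀ q r : ℕ, 1 ≤ q → q ≤ r → f r ≤ f q)
    (hbig : ∀ C : ℝ, ∃ Q : ℕ, C * (1 + Real.log Q) ≤ ∑ q ∈ Finset.Icc 1 Q, f q) :
    volume (WSet f γ) = 1 := by
  classical
  have hT : ∀ B : ℕ, volume {x | x ∈ Set.Ioc (0:ℝ) 1 ∧ ∀ Q, cnt f γ Q x ≤ B} = 0 := by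
    intro B
    refine le_antisymm (ENNReal.le_of_forall_pos_le_add ?_) zero_le
    intro ε hε _
    have hε' : (0:ℝ) < ε := hε
    obtain ⟨Q, hQ⟩ := hbig (max (B + 1) (4 / ε))
    have hl : (0:ℝ) ≤ Real.log Q := Real.log_natCast_nonneg Q
    set P := ∑ q ∈ Finset.Icc 1 Q, f q with hP
    have a1 : (B:ℝ) + 1 ≤ P := by
      have := le_max_left ((B:ℝ) + 1) (4 / ε)
      have hB : (0:ℝ) ≤ B := by positivity
      nlinarith
    have a2 : 4 / (ε:ℝ) * (1 + Real.log Q) ≤ P :=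
      (mul_le_mul_of_nonneg_right (le_max_right ((B:ℝ) + 1) (4 / ε)) (by linarith)).trans hQ
    have hpos : 0 < P := by
      have hB : (0:ℝ) ≤ B := by positivity
      linarith
    rw [zero_add]
    refine (measure_mono ?_).trans ((tail_le f γ h0 h2 hdec Q hpos).trans ?_)
    · rintro x ⟨hx, hx2⟩
      exact ⟨hx, (hx2 Q).trans (by linarith)⟩
    · rw [← ENNReal.ofReal_coe_nnreal]
      refine ENNReal.ofReal_le_ofReal ?_
      rw [div_le_iff₀ hpos]
      have := mul_le_mul_of_nonneg_left a2 hε'.le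
      have e : (ε:ℝ) * (4 / ε * (1 + Real.log Q)) = 4 * (1 + Real.log Q) := by
        field_simp
      linarith
  have hU : volume (⋃ B : ℕ, {x | x ∈ Set.Ioc (0:ℝ) 1 ∧ ∀ Q, cnt f γ Q x ≤ B}) = 0 :=
    measure_iUnion_null hT
  have hsub : Set.Ioc (0:ℝ) 1 ⊆ WSet f γ ∪
      ⋃ B : ℕ, {x | x ∈ Set.Ioc (0:ℝ) 1 ∧ ∀ Q, cnt f γ Q x ≤ B} := by
    intro x hx
    by_cases hw : x ∈ WSet f γ
    · exact Or.inl hw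
    · right
      have hfin : {q : ℕ | 1 ≤ q ∧ distNearestInt (q * x - γ q) < f q}.Finite := by
        by_contra hinf
        exact hw ⟨Set.Ioc_subset_Icc_self hx, hinf⟩
      refine Set.mem_iUnion.2 ⟨hfin.toFinset.card, hx, fun Q => ?_⟩
      unfold cnt chi
      rw [Finset.sum_ite]
      simp only [Finset.sum_const_zero, add_zero, Finset.sum_const, nsmul_eq_mul, mul_one]
      refine Nat.cast_le.2 (Finset.card_le_card fun q hq => ?_)
      rw [Finset.mem_filter, Finset.mem_Icc] at hq
      exact hfin.mem_toFinset.2 ⟨hq.1.1, hq.2⟩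
  refine le_antisymm ?_ ?_
  · have : WSet f γ ⊆ Set.Icc 0 1 := fun x hx => hx.1
    simpa using measure_mono (μ := volume) this
  · have h3 := (measure_mono (μ := volume) hsub).trans (measure_union_le _ _)
    rw [hU, add_zero] at h3
    simpa using h3

theorem stmt5 (ψ : ℕ → ℝ) (hψ0 : ∀ q, 0 ≤ ψ q)
    (hψdec : ∀ q r : ℕ, 1 ≤ q → q ≤ r → ψ r ≤ ψ q)
    (hfast : ∃ δ > (0:ℝ), ∃ c > (0:ℝ), ∀ N : ℕ, ∃ Q : ℕ, N ≤ Q ∧ 1 < Q ∧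
      c * log1 Q * log1 (log1 Q) ^ ((3:ℝ) + δ) ≤ ∑ q ∈ Finset.Icc 1 Q, ψ q)
    (γ : ℕ → ℝ) :
    volume (WSet ψ γ) = 1 := by
  obtain ⟨δ, hδ, c, hc, hfast⟩ := hfast
  set K : ℝ := 2 * ψ 1 + 1 with hK
  have hK1 : 1 ≤ K := by linarith [hψ0 1]
  have hK0 : 0 < K := by linarith
  have hle : ∀ q, ψ q / K ≤ ψ q := fun q => div_le_self (hψ0 q) hK1
  have hmain : volume (WSet (fun q => ψ q / K) γ) = 1 := by
    refine full_measure _ γ (fun q => div_nonneg (hψ0 q) hK0.le) (fun q hq => ?_)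
      (fun q r hq hr => div_le_div_of_nonneg_right (hψdec q r hq hr) hK0.le) ?_
    · have := hψdec 1 q le_rfl hq
      rw [div_le_iff₀ hK0]
      linarith
    · intro C
      have hA : Filter.Tendsto (fun n : ℕ => Real.log (Real.log n)) Filter.atTop Filter.atTop :=
        Real.tendsto_log_atTop.comp (Real.tendsto_log_atTop.comp tendsto_natCast_atTop_atTop)
      obtain ⟨N, hN⟩ := Filter.eventually_atTop.1
        (hA.eventually_ge_atTop (2 * K * |C| / c))
      obtain ⟨N', hN'⟩ := Filter.eventually_atTop.1
        ((Real.tendsto_log_atTop.comp tendsto_natCast_atTop_atTop).eventually_ge_atTop (1:ℝ))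
      obtain ⟨Q, hQN, hQ1, hQ⟩ := hfast (max N N')
      refine ⟨Q, ?_⟩
      have b1 := hN Q ((le_max_left _ _).trans hQN)
      have b2 : 1 ≤ Real.log Q := hN' Q ((le_max_right _ _).trans hQN)
      have e1 : log1 Q = Real.log Q := max_eq_right b2
      rw [e1] at hQ
      set L := Real.log Q with hL
      have b3 : 1 ≤ log1 L := le_max_left _ _
      have b4 : 2 * K * |C| / c ≤ log1 L := b1.trans (le_max_right _ _)
      have b5 : log1 L ≤ log1 L ^ ((3:ℝ) + δ) := by
        have := Real.rpow_le_rpow_of_exponent_le b3 (show (1:ℝ) ≤ 3 + δ by linarith)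
        rwa [Real.rpow_one] at this
      rw [← Finset.sum_div, le_div_iff₀ hK0]
      refine le_trans ?_ hQ
      have b6 := b4.trans b5
      rw [div_le_iff₀ hc] at b6
      have b7 := mul_le_mul_of_nonneg_right b6 (show 0 ≤ L by linarith)
      have b8 : C * (1 + L) * K ≤ |C| * (2 * L) * K := by
        have : C * (1 + L) ≤ |C| * (2 * L) :=
          mul_le_mul (le_abs_self C) (by linarith) (by linarith) (abs_nonneg C)
        exact mul_le_mul_of_nonneg_right this hK0.le
      linarith
  refine le_antisymm ?_ ?_
  · have : WSet ψ γ ⊆ Set.Icc 0 1 := fun x hx => hx.1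
    simpa using measure_mono (μ := volume) this
  · rw [← hmain]
    refine measure_mono fun x hx => ⟨hx.1, hx.2.mono fun q hq => ⟨hq.1, hq.2.trans_le (hle q)⟩⟩
end

section
/- Let (X,μ) be a finite measure space and let (A_q)_{q∈ℕ} be a sequence of measurable subsets of X such that 0 < ∑_{q=1}^∞ μ(A_q) < ∞. Then μ(⋃_{q=1}^∞ A_q) ≥ (∑_{q=1}^∞ μ(A_q))² / (∑_{q,r=1}^∞ μ(A_q ∩ A_r)). -/
open MeasureTheory

theorem stmt7 {X : Type*} [MeasurableSpace X] (μ : Measure X) [IsFiniteMeasure μ]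
    (A : ℕ → Set X) (hA : ∀ q, MeasurableSet (A q))
    (hpos : 0 < ∑' q : ℕ, μ (A q)) (hfin : ∑' q : ℕ, μ (A q) < ⊤) :
    (∑' q : ℕ, μ (A q)) ^ 2 / (∑' q : ℕ, ∑' r : ℕ, μ (A q ∩ A r)) ≤ μ (⋃ q : ℕ, A q) := by
  apply ENNReal.div_le_of_le_mul
  have hm : ∀ q, Measurable ((A q).indicator (fun _ => (1 : ENNReal))) :=
    fun q => measurable_const.indicator (hA q)
  have hU : MeasurableSet (⋃ q, A q) := MeasurableSet.iUnion hA
  set f : X → ENNReal := fun x => ∑' q, (A q).indicator (fun _ => (1 : ENNReal)) x with hf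
  have hfm : Measurable f := Measurable.ennreal_tsum hm
  set g : X → ENNReal := (⋃ q, A q).indicator (fun _ => (1 : ENNReal)) with hg
  have hgm : Measurable g := measurable_const.indicator hU
  have h1 : ∑' q, μ (A q) = ∫⁻ x, f x ∂μ := by
    rw [hf, lintegral_tsum (fun q => (hm q).aemeasurable)]
    exact tsum_congr fun q => by rw [lintegral_indicator_const (hA q), one_mul]
  have h2 : ∑' q, ∑' r, μ (A q ∩ A r) = ∫⁻ x, f x ^ (2 : ℝ) ∂μ := by
    have e : ∀ x, f x ^ (2 : ℝ) = ∑' q, ∑' r, (A q ∩ A r).indicator (fun _ => (1 : ENNReal)) x := by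
      intro x
      rw [ENNReal.rpow_two, sq, hf]
      simp only
      rw [← ENNReal.tsum_mul_right]
      refine tsum_congr fun q => ?_
      rw [← ENNReal.tsum_mul_left]
      refine tsum_congr fun r => ?_
      by_cases h : x ∈ A q <;> by_cases h' : x ∈ A r <;> simp [h, h']
    have hm2 : ∀ q r, Measurable ((A q ∩ A r).indicator (fun _ => (1 : ENNReal))) :=
      fun q r => measurable_const.indicator ((hA q).inter (hA r))
    simp_rw [e]
    rw [lintegral_tsum (fun q => (Measurable.ennreal_tsum (hm2 q)).aemeasurable)]
    refine tsum_congr fun q => ?_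
    rw [lintegral_tsum (fun r => (hm2 q r).aemeasurable)]
    exact tsum_congr fun r => by
      rw [lintegral_indicator_const ((hA q).inter (hA r)), one_mul]
  have h3 : μ (⋃ q, A q) = ∫⁻ x, g x ^ (2 : ℝ) ∂μ := by
    have e : ∀ x, g x ^ (2 : ℝ) = g x := by
      intro x
      by_cases h : x ∈ ⋃ q, A q
      · simp only [hg, Set.indicator_of_mem h, ENNReal.one_rpow]
      · simp only [hg, Set.indicator_of_notMem h]
        simp
    simp_rw [e]
    rw [hg, lintegral_indicator_const hU, one_mul]
  have h4 : ∀ x, f x = (f * g) x := by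
    intro x
    by_cases h : x ∈ ⋃ q, A q
    · simp only [Pi.mul_apply, hg, Set.indicator_of_mem h, mul_one]
    · have : f x = 0 := by
        simp only [Set.mem_iUnion, not_exists] at h
        simp [hf, h]
      simp [this]
  have h5 := ENNReal.lintegral_mul_le_Lp_mul_Lq μ Real.HolderConjugate.two_two
    hfm.aemeasurable hgm.aemeasurable
  simp_rw [← h4] at h5
  rw [← h1, ← h2, ← h3] at h5
  have h6 : ∀ a : ENNReal, (a ^ (1 / 2 : ℝ)) ^ 2 = a := by
    intro a
    rw [← ENNReal.rpow_two, ← ENNReal.rpow_mul]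
    norm_num
  calc _ ≤ _ := pow_le_pow_left' h5 2
    _ = _ := by rw [mul_pow, h6, h6, mul_comm]
end

section
/- Let d(n) denote the number of divisors of n and let f:[1,∞)→[1,∞) be any increasing function. Then there exist constants c > 0 and x₀ ≥ 1 (possibly depending on f) such that for all x ≥ x₀, ∑_{n≤x} 1/( f(log d(n)) · d(n) ) ≥ c · x / ( f((log 2)·log log x) · √(log x) ). -/
open MeasureTheory

lemma aux_sq (Y : ℕ) (hY : 1 ≤ Y) :
    ∑ b ∈ Finset.Icc 1 Y, 1 / (b : ℝ) ^ 2 ≤ 2 - 1 / (Y : ℝ) := by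
  induction Y, hY using Nat.le_induction with
  | base => norm_num
  | succ n hn ih =>
    rw [Finset.sum_Icc_succ_top (by omega)]
    have h0 : (0:ℝ) < n := by exact_mod_cast hn
    have : 1 / ((n:ℝ) + 1) ^ 2 ≤ 1 / (n:ℝ) - 1 / ((n:ℝ) + 1) := by
      rw [div_sub_div _ _ h0.ne' (by positivity), div_le_div_iff₀ (by positivity) (by positivity)]
      nlinarith
    push_cast
    linarith

noncomputable def sqf (Y : ℕ) : Finset ℕ := (Finset.Icc 1 Y).filter Squarefree

lemma aux_harm (Y : ℕ) :
    ∑ n ∈ Finset.Icc 1 Y, 1 / (n : ℝ) ≤ 2 * ∑ m ∈ sqf Y, 1 / (m : ℝ) := by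
  rcases Nat.eq_zero_or_pos Y with rfl | hY
  · simp [sqf]
  have hex : ∀ n : ℕ, ∃ q : ℕ × ℕ, 0 < n → (0 < q.2 ∧ 0 < q.1 ∧ q.1 ^ 2 * q.2 = n ∧ Squarefree q.2) := by
    intro n
    rcases Nat.eq_zero_or_pos n with rfl | hn
    · exact ⟨(0,0), fun h => absurd h (lt_irrefl _)⟩
    · obtain ⟨a, b, h1, h2, h3, h4⟩ := Nat.sq_mul_squarefree_of_pos hn
      exact ⟨(b, a), fun _ => ⟨h1, h2, h3, h4⟩⟩
  choose q hq using hex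
  have hS : (0:ℝ) ≤ ∑ m ∈ sqf Y, 1 / (m : ℝ) := Finset.sum_nonneg fun _ _ => by positivity
  calc ∑ n ∈ Finset.Icc 1 Y, 1 / (n : ℝ)
      = ∑ n ∈ Finset.Icc 1 Y, (1 / ((q n).1 : ℝ) ^ 2) * (1 / ((q n).2 : ℝ)) := by
        refine Finset.sum_congr rfl fun n hn => ?_
        obtain ⟨h1, h2, h3, h4⟩ := hq n (Finset.mem_Icc.1 hn).1
        have : (n : ℝ) = ((q n).1 : ℝ) ^ 2 * (q n).2 := by exact_mod_cast h3.symm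
        rw [this]; field_simp
    _ = ∑ r ∈ (Finset.Icc 1 Y).image q, (1 / (r.1 : ℝ) ^ 2) * (1 / (r.2 : ℝ)) := by
        rw [Finset.sum_image]
        intro n hn n' hn' h
        have hn := hq n (Finset.mem_Icc.1 hn).1
        have hn' := hq n' (Finset.mem_Icc.1 hn').1
        rw [← hn.2.2.1, ← hn'.2.2.1]
        rw [h]
    _ ≤ ∑ r ∈ Finset.Icc 1 Y ×ˢ sqf Y, (1 / (r.1 : ℝ) ^ 2) * (1 / (r.2 : ℝ)) := by
        refine Finset.sum_le_sum_of_subset_of_nonneg ?_ fun _ _ _ => by positivity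
        intro r hr
        obtain ⟨n, hn, rfl⟩ := Finset.mem_image.1 hr
        have hn := Finset.mem_Icc.1 hn
        obtain ⟨h1, h2, h3, h4⟩ := hq n hn.1
        have h5 : (q n).1 ≤ n := by
          have : (q n).1 ∣ n := ⟨(q n).1 * (q n).2, by rw [← mul_assoc, ← sq, h3]⟩
          exact Nat.le_of_dvd hn.1 this
        have h6 : (q n).2 ≤ n := Nat.le_of_dvd hn.1 ⟨(q n).1 ^ 2, by rw [mul_comm, h3]⟩
        simp only [sqf, Finset.mem_product, Finset.mem_filter, Finset.mem_Icc]
        exact ⟨⟨h2, h5.trans hn.2⟩, ⟨h1, h6.trans hn.2⟩, h4⟩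
    _ = (∑ b ∈ Finset.Icc 1 Y, 1 / (b : ℝ) ^ 2) * ∑ m ∈ sqf Y, 1 / (m : ℝ) := by
        rw [Finset.sum_mul_sum, Finset.sum_product]
    _ ≤ 2 * ∑ m ∈ sqf Y, 1 / (m : ℝ) := by
        refine mul_le_mul_of_nonneg_right ((aux_sq Y hY).trans ?_) hS
        have : (0:ℝ) ≤ 1 / (Y:ℝ) := by positivity
        linarith

lemma aux_conv (Y : ℕ) :
    ∑ n ∈ sqf Y, 1 / (n : ℝ) ≤ (∑ m ∈ sqf Y, 1 / ((m : ℝ) * m.divisors.card)) ^ 2 := by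
  set g : ℕ → ℝ := fun m => 1 / ((m : ℝ) * m.divisors.card) with hg
  have hg0 : ∀ m, 0 ≤ g m := fun m => by positivity
  calc ∑ n ∈ sqf Y, 1 / (n : ℝ)
      ≤ ∑ n ∈ sqf Y, ∑ r ∈ (sqf Y ×ˢ sqf Y) with r.1 * r.2 = n, g r.1 * g r.2 := by
        refine Finset.sum_le_sum fun n hn => ?_
        simp only [sqf, Finset.mem_filter, Finset.mem_Icc] at hn
        obtain ⟨⟨hn1, hn2⟩, hn3⟩ := hn
        have hd : (0:ℝ) < n.divisors.card := by
          exact_mod_cast Finset.card_pos.2 ⟨1, by simp; omega⟩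
        have hn0 : (0:ℝ) < n := by exact_mod_cast hn1
        calc 1 / (n : ℝ) = ∑ r ∈ n.divisorsAntidiagonal, 1 / ((n : ℝ) * n.divisors.card) := by
              rw [Finset.sum_const, nsmul_eq_mul]
              rw [← Nat.map_div_right_divisors, Finset.card_map]
              field_simp
          _ = ∑ r ∈ n.divisorsAntidiagonal, g r.1 * g r.2 := by
              refine Finset.sum_congr rfl fun r hr => ?_
              have hr := (Nat.mem_divisorsAntidiagonal.1 hr).1
              have hc : r.1.Coprime r.2 := Nat.coprime_of_squarefree_mul (by rw [hr]; exact hn3)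
              have := Nat.Coprime.card_divisors_mul hc
              rw [hr] at this
              simp only [hg]
              rw [this, ← hr]
              push_cast
              rw [div_mul_div_comm]
              congr 1 <;> ring
          _ ≤ _ := by
              refine Finset.sum_le_sum_of_subset_of_nonneg ?_ fun r _ _ =>
                mul_nonneg (hg0 _) (hg0 _)
              intro r hr
              have hr := (Nat.mem_divisorsAntidiagonal.1 hr).1
              have h1 : r.1 ∣ n := ⟨r.2, hr.symm⟩
              have h2 : r.2 ∣ n := ⟨r.1, by rw [mul_comm, hr]⟩
              simp only [sqf, Finset.mem_product, Finset.mem_filter, Finset.mem_Icc]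
              exact ⟨⟨⟨⟨Nat.pos_of_dvd_of_pos h1 hn1, (Nat.le_of_dvd hn1 h1).trans hn2⟩,
                hn3.squarefree_of_dvd h1⟩, ⟨⟨Nat.pos_of_dvd_of_pos h2 hn1,
                (Nat.le_of_dvd hn1 h2).trans hn2⟩, hn3.squarefree_of_dvd h2⟩⟩, hr⟩
    _ ≤ ∑ r ∈ (sqf Y ×ˢ sqf Y), g r.1 * g r.2 := by
        refine Finset.sum_fiberwise_le_sum_of_sum_fiber_nonneg fun n _ => ?_
        exact Finset.sum_nonneg fun r _ => mul_nonneg (hg0 _) (hg0 _)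
    _ = _ := by
        rw [sq, Finset.sum_mul_sum, Finset.sum_product]

lemma harm_eq (Y : ℕ) : ((harmonic Y : ℚ) : ℝ) = ∑ n ∈ Finset.Icc 1 Y, 1 / (n : ℝ) := by
  rw [harmonic_eq_sum_Icc]; push_cast; simp

lemma aux_restr (Y : ℕ) (D : ℝ) (hD : 0 < D) :
    Real.sqrt (Real.log (Y + 1) / 2) - (1 + Real.log Y) / D ≤
      ∑ m ∈ (sqf Y).filter (fun m => (m.divisors.card : ℝ) ≤ D),
        1 / ((m : ℝ) * m.divisors.card) := by
  have h1 := Finset.sum_filter_add_sum_filter_not (sqf Y)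
    (fun m => (m.divisors.card : ℝ) ≤ D) (fun m => 1 / ((m : ℝ) * m.divisors.card))
  have h2 : ∑ m ∈ (sqf Y).filter (fun m => ¬ (m.divisors.card : ℝ) ≤ D),
        1 / ((m : ℝ) * m.divisors.card) ≤ (1 + Real.log Y) / D := by
    calc _ ≤ ∑ m ∈ (sqf Y).filter (fun m => ¬ (m.divisors.card : ℝ) ≤ D), (1 / (m : ℝ)) / D := by
          refine Finset.sum_le_sum fun m hm => ?_
          simp only [sqf, Finset.mem_filter, Finset.mem_Icc, not_le] at hm
          have hm0 : (0:ℝ) < m := by exact_mod_cast hm.1.1.1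
          rw [div_div]
          have := hm.2.le
          gcongr
      _ ≤ ∑ m ∈ Finset.Icc 1 Y, (1 / (m : ℝ)) / D := by
          refine Finset.sum_le_sum_of_subset_of_nonneg ?_ fun _ _ _ => by positivity
          exact (Finset.filter_subset _ _).trans (Finset.filter_subset _ _)
      _ ≤ _ := by
          rw [← Finset.sum_div, ← harm_eq]
          have := harmonic_le_one_add_log Y
          gcongr
  have h3 : Real.sqrt (Real.log (Y + 1) / 2) ≤ ∑ m ∈ sqf Y, 1 / ((m : ℝ) * m.divisors.card) := by
    refine Real.sqrt_le_iff.2 ⟨Finset.sum_nonneg fun _ _ => by positivity, ?_⟩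
    have := aux_conv Y
    have h4 := aux_harm Y
    have h5 := log_add_one_le_harmonic Y
    rw [harm_eq] at h5
    push_cast at h5
    linarith
  linarith

lemma aux_primes : ∃ t₀ : ℝ, 2 ≤ t₀ ∧ ∀ t ≥ t₀, ∀ Y : ℕ, (Y : ℝ) ^ 2 ≤ t →
    t / (4 * Real.log t) ≤ (((Finset.Ioc Y ⌊t⌋₊).filter Nat.Prime).card : ℝ) := by
  have e1 : ∀ᶠ t : ℝ in Filter.atTop, Real.log t ≤ (1/100) * t := by
    have := Real.isLittleO_log_id_atTop.bound (c := 1/100) (by norm_num)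
    filter_upwards [this, Filter.eventually_ge_atTop 1] with t ht h1
    simp only [id, Real.norm_eq_abs] at ht
    rw [abs_of_nonneg (by linarith : 0 ≤ t)] at ht
    exact (le_abs_self _).trans ht
  have e2 : ∀ᶠ t : ℝ in Filter.atTop, Real.log t ≤ (1/100) * t ^ (1/2 : ℝ) := by
    have := (isLittleO_log_rpow_atTop (r := 1/2) (by norm_num)).bound (c := 1/100) (by norm_num)
    filter_upwards [this, Filter.eventually_ge_atTop 1] with t ht h1
    simp only [Real.norm_eq_abs] at ht
    rw [abs_of_nonneg (by positivity : 0 ≤ t ^ (1/2:ℝ))] at ht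
    exact (le_abs_self _).trans ht
  obtain ⟨t₀, ht₀⟩ := Filter.eventually_atTop.1 (e1.and e2)
  refine ⟨max t₀ 200, (by norm_num : (2:ℝ) ≤ 200).trans (le_max_right _ _), fun t ht Y hY => ?_⟩
  have ht1 : t ≥ 200 := (le_max_right _ _).trans ht
  obtain ⟨h1, h2⟩ := ht₀ t ((le_max_left _ _).trans ht)
  rw [← Real.sqrt_eq_rpow] at h2
  have hlog : 0 < Real.log t := Real.log_pos (by linarith)
  have hpi := Chebyshev.pi_ge' (x := t) (by linarith)
  have hYs : (Y:ℝ) ≤ Real.sqrt t := Real.le_sqrt_of_sq_le hY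
  have hcard : (Nat.primeCounting ⌊t⌋₊ : ℝ) ≤
      (((Finset.Ioc Y ⌊t⌋₊).filter Nat.Prime).card : ℝ) + Y := by
    have hsub : Nat.primesLE ⌊t⌋₊ ⊆
        ((Finset.Ioc Y ⌊t⌋₊).filter Nat.Prime) ∪ Finset.Icc 1 Y := by
      intro p hp
      have hp1 := Nat.prime_of_mem_primesLE hp
      have hp2 : p ≤ ⌊t⌋₊ := by
        rw [Nat.primesLE_eq_filter_Icc_zero] at hp
        simp only [Finset.mem_filter, Finset.mem_Icc] at hp
        exact hp.1.2
      simp only [Finset.mem_union, Finset.mem_filter, Finset.mem_Ioc, Finset.mem_Icc]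
      by_cases h : Y < p
      · exact Or.inl ⟨⟨h, hp2⟩, hp1⟩
      · exact Or.inr ⟨hp1.one_le, not_lt.1 h⟩
    have := (Finset.card_le_card hsub).trans (Finset.card_union_le _ _)
    rw [Nat.primesLE_card_eq_primeCounting, Nat.card_Icc, Nat.add_sub_cancel] at this
    exact_mod_cast this
  have hlog2 : Real.log (t + 2) ≤ 2 * Real.log t := by
    rw [← Real.log_rpow (by linarith)]
    apply Real.log_le_log (by linarith)
    norm_num; nlinarith
  have h7 : t / (2 * Real.log t) ≤ ((t - 1) * Real.log 2 - Real.log (t + 2)) / Real.log t := by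
    rw [div_le_div_iff₀ (by positivity) hlog]
    have := Real.log_two_gt_d9
    have h8 : t / 2 ≤ ((t - 1) * Real.log 2 - Real.log (t + 2)) := by nlinarith
    nlinarith
  have h9 : Real.sqrt t ≤ t / (4 * Real.log t) := by
    rw [le_div_iff₀ (by positivity)]
    have := Real.mul_self_sqrt (by linarith : 0 ≤ t)
    nlinarith [Real.sqrt_nonneg t]
  have h10 : t / (2 * Real.log t) = t / (4 * Real.log t) + t / (4 * Real.log t) := by
    field_simp; ring
  linarith

lemma aux_comb (w : ℕ → ℝ) (hw : ∀ n, 0 ≤ w n) (x : ℝ) (hx : 0 ≤ x) (Y : ℕ) (M : Finset ℕ)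
    (hM : M ⊆ Finset.Icc 1 Y) :
    ∑ m ∈ M, ∑ p ∈ (Finset.Ioc Y ⌊x / m⌋₊).filter Nat.Prime, w (m * p) ≤
      ∑ n ∈ Finset.Icc 1 ⌊x⌋₊, w n := by
  rw [Finset.sum_sigma']
  rw [← Finset.sum_image (f := w) (g := fun r : (Σ _ : ℕ, ℕ) => r.1 * r.2)]
  · refine Finset.sum_le_sum_of_subset_of_nonneg ?_ fun _ _ _ => hw _
    intro n hn
    obtain ⟨⟨m, p⟩, hr, rfl⟩ := Finset.mem_image.1 hn
    simp only [Finset.mem_sigma, Finset.mem_filter, Finset.mem_Ioc] at hr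
    obtain ⟨hm, ⟨h1, h2⟩, h3⟩ := hr
    have hm := Finset.mem_Icc.1 (hM hm)
    have hm0 : (0:ℝ) < m := by exact_mod_cast hm.1
    rw [Nat.le_floor_iff (by positivity), le_div_iff₀ hm0] at h2
    rw [Finset.mem_Icc]
    refine ⟨Nat.mul_pos hm.1 h3.pos, Nat.le_floor ?_⟩
    push_cast; linarith
  · rintro ⟨m, p⟩ hr ⟨m', p'⟩ hr' h
    simp only [Finset.coe_sigma, Set.mem_sigma_iff, Finset.mem_coe, Finset.mem_filter, Finset.mem_Ioc] at hr hr' h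
    obtain ⟨hm, ⟨h1, h2⟩, h3⟩ := hr
    obtain ⟨hm', ⟨h1', h2'⟩, h3'⟩ := hr'
    have hm := Finset.mem_Icc.1 (hM hm)
    have hm' := Finset.mem_Icc.1 (hM hm')
    have hdv : p ∣ m' * p' := ⟨m, by rw [← h, mul_comm]⟩
    have hpp : p = p' := by
      rcases h3.dvd_mul.1 hdv with h4 | h4
      · have := Nat.le_of_dvd hm'.1 h4
        omega
      · exact (Nat.prime_dvd_prime_iff_eq h3 h3').1 h4
    subst hpp
    have := Nat.eq_of_mul_eq_mul_right h3.pos h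
    subst this
    rfl

theorem stmt8 (f : ℝ → ℝ) (hmono : MonotoneOn f (Set.Ici 1))
    (hf : ∀ x ≥ (1:ℝ), 1 ≤ f x) :
    ∃ c > (0:ℝ), ∃ x₀ ≥ (1:ℝ), ∀ x ≥ x₀,
      c * x / (f (max 1 (Real.log 2 * log1 (log1 x))) * Real.sqrt (log1 x)) ≤
        ∑ n ∈ Finset.Icc 1 ⌊x⌋₊,
          1 / (f (log1 (n.divisors.card)) * (n.divisors.card : ℝ)) := by
  obtain ⟨t₀, ht2, ht₀⟩ := aux_primes
  -- growth condition
  have e1 : ∀ᶠ L : ℝ in Filter.atTop, 2 * (1 + L) / L ^ Real.log 2 ≤ (1/10) * Real.sqrt L := by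
    have hl := Real.log_two_gt_d9
    have h := (tendsto_rpow_atTop (y := Real.log 2 - 1/2) (by linarith)).eventually_ge_atTop
      (40 : ℝ)
    have h' := (tendsto_rpow_atTop (y := Real.log 2 + 1/2 - 1) (by linarith)).eventually_ge_atTop
      (40 : ℝ)
    filter_upwards [h', Filter.eventually_ge_atTop 1] with L h2 h3
    have hL : 0 < L := by linarith
    rw [div_le_iff₀ (by positivity), Real.sqrt_eq_rpow, mul_assoc, ← Real.rpow_add hL]
    have : L ^ (1/2 + Real.log 2) = L * L ^ (Real.log 2 + 1/2 - 1) := by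
      rw [← Real.rpow_one_add' hL.le (by linarith)]
      congr 1; ring
    rw [this]
    nlinarith
  obtain ⟨L₀, hL₀⟩ := Filter.eventually_atTop.1 e1
  have e2 : ∀ᶠ x : ℝ in Filter.atTop, max L₀ 3 ≤ Real.log x :=
    Real.tendsto_log_atTop.eventually_ge_atTop _
  have e3 : ∀ᶠ x : ℝ in Filter.atTop, t₀ + 1 ≤ x ^ (1/3 : ℝ) :=
    (tendsto_rpow_atTop (by norm_num)).eventually_ge_atTop _
  obtain ⟨x₀, hx₀⟩ := Filter.eventually_atTop.1 (e2.and e3)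
  refine ⟨1/40, by norm_num, max x₀ 1, le_max_right _ _, fun x hx => ?_⟩
  have hx1 : 1 ≤ x := (le_max_right _ _).trans hx
  obtain ⟨hL, hY⟩ := hx₀ x ((le_max_left _ _).trans hx)
  have hL3 : 3 ≤ Real.log x := (le_max_right _ _).trans hL
  have hgrow := hL₀ _ ((le_max_left _ _).trans hL)
  have hlog1 : log1 x = Real.log x := max_eq_right (by linarith)
  have hloglog : log1 (Real.log x) = Real.log (Real.log x) := by
    refine max_eq_right ?_
    rw [Real.le_log_iff_exp_le (by linarith)]
    have := Real.exp_one_lt_d9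
    linarith
  rw [hlog1, hloglog]
  set L := Real.log x with hLdef
  set F := f (max 1 (Real.log 2 * Real.log L)) with hF
  have hF1 : 1 ≤ F := hf _ (le_max_left _ _)
  have hLpos : 0 < L := by linarith
  set y := x ^ (1/3 : ℝ) with hy
  have hy0 : 0 ≤ y := by positivity
  have hy3 : y ^ 3 = x := by
    rw [hy, ← Real.rpow_natCast, ← Real.rpow_mul (by linarith)]; norm_num
  set Y := ⌊y⌋₊ with hYdef
  have hYy : (Y : ℝ) ≤ y := Nat.floor_le hy0
  have hyY : y < Y + 1 := Nat.lt_floor_add_one y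
  have hlogy : Real.log y = L / 3 := by
    rw [hy, Real.log_rpow (by linarith)]; ring
  set D := L ^ Real.log 2 / 2 with hD
  have hDpos : 0 < D := by positivity
  set M := (sqf Y).filter (fun m => (m.divisors.card : ℝ) ≤ D) with hMdef
  have hMsub : M ⊆ Finset.Icc 1 Y :=
    (Finset.filter_subset _ _).trans (Finset.filter_subset _ _)
  have hw : ∀ n : ℕ, 0 ≤ 1 / (f (log1 (n.divisors.card)) * (n.divisors.card : ℝ)) := by
    intro n
    have : 1 ≤ f (log1 (n.divisors.card)) := hf _ (le_max_left _ _)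
    positivity
  refine le_trans ?_ (aux_comb _ hw x (by linarith) Y M hMsub)
  have hrestr := aux_restr Y D hDpos
  have hsum : 3/10 * Real.sqrt L ≤ ∑ m ∈ M, 1 / ((m : ℝ) * m.divisors.card) := by
    refine le_trans ?_ hrestr
    have h1 : 4/10 * Real.sqrt L ≤ Real.sqrt (Real.log (Y + 1) / 2) := by
      apply Real.le_sqrt_of_sq_le
      rw [mul_pow, Real.sq_sqrt hLpos.le]
      have : Real.log y ≤ Real.log (Y + 1) := Real.log_le_log (by linarith) hyY.le
      linarith
    have h2 : (1 + Real.log Y) / D ≤ 1/10 * Real.sqrt L := by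
      refine le_trans ?_ hgrow
      have h3 : Real.log Y ≤ L := by
        have : Real.log Y ≤ Real.log y := Real.log_le_log (by linarith) hYy
        linarith
      rw [hD, div_div_eq_mul_div, mul_comm]
      gcongr
    linarith
  have hterm : ∀ m ∈ M, (x / (8 * F * L)) * (1 / ((m : ℝ) * m.divisors.card)) ≤
      ∑ p ∈ (Finset.Ioc Y ⌊x / m⌋₊).filter Nat.Prime,
        1 / (f (log1 ((m * p).divisors.card)) * ((m * p).divisors.card : ℝ)) := by
    intro m hm
    have hmI := Finset.mem_Icc.1 (hMsub hm)
    have hmD : (m.divisors.card : ℝ) ≤ D := (Finset.mem_filter.1 hm).2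
    have hm0 : (0:ℝ) < m := by exact_mod_cast hmI.1
    have hmY : (m:ℝ) ≤ Y := by exact_mod_cast hmI.2
    have hm1 : (1:ℝ) ≤ m := by exact_mod_cast hmI.1
    have hd : (0:ℝ) < m.divisors.card := by
      exact_mod_cast Finset.card_pos.2 ⟨1, by simp; omega⟩
    have hYt : (Y:ℝ) ^ 2 ≤ x / m := by
      rw [le_div_iff₀ hm0]
      calc (Y:ℝ) ^ 2 * m ≤ y ^ 2 * y := by gcongr; linarith
        _ = x := by rw [← hy3]; ring
    have htt : t₀ ≤ x / m := by
      refine le_trans ?_ hYt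
      nlinarith
    have hc := ht₀ _ htt Y hYt
    have hlogt : Real.log (x / m) ≤ L :=
      Real.log_le_log (by positivity) (div_le_self (by linarith) hm1)
    have hlogt0 : 0 < Real.log (x / m) := Real.log_pos (by linarith)
    calc (x / (8 * F * L)) * (1 / ((m : ℝ) * m.divisors.card))
        = (x / m) / (4 * L) * (1 / (F * (2 * m.divisors.card))) := by
          field_simp; ring
      _ ≤ (((Finset.Ioc Y ⌊x / m⌋₊).filter Nat.Prime).card : ℝ) *
            (1 / (F * (2 * m.divisors.card))) := by
          refine mul_le_mul_of_nonneg_right (le_trans ?_ hc) (by positivity)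
          gcongr
      _ = ∑ p ∈ (Finset.Ioc Y ⌊x / m⌋₊).filter Nat.Prime, (1 / (F * (2 * m.divisors.card))) := by
          rw [Finset.sum_const, nsmul_eq_mul]
      _ ≤ _ := by
          refine Finset.sum_le_sum fun p hp => ?_
          simp only [Finset.mem_filter, Finset.mem_Ioc] at hp
          obtain ⟨⟨hp1, hp2⟩, hp3⟩ := hp
          have hcop : m.Coprime p := by
            rw [Nat.coprime_comm, hp3.coprime_iff_not_dvd]
            intro h
            have := Nat.le_of_dvd hmI.1 h
            omega
          have hcard : ((m * p).divisors.card : ℝ) = 2 * m.divisors.card := by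
            rw [Nat.Coprime.card_divisors_mul hcop, hp3.divisors,
              Finset.card_pair hp3.one_lt.ne]
            push_cast; ring
          rw [hcard]
          have hfF : f (log1 (2 * m.divisors.card)) ≤ F := by
            refine hmono (Set.mem_Ici.2 (le_max_left _ _)) (Set.mem_Ici.2 (le_max_left _ _)) ?_
            refine max_le_max le_rfl ?_
            rw [← Real.log_rpow hLpos]
            refine Real.log_le_log (by positivity) ?_
            linarith
          have hf0 : 1 ≤ f (log1 (2 * m.divisors.card)) := hf _ (le_max_left _ _)
          gcongr
  refine le_trans ?_ (Finset.sum_le_sum hterm)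
  rw [← Finset.mul_sum]
  have hs : 0 < Real.sqrt L := Real.sqrt_pos.2 hLpos
  calc 1 / 40 * x / (F * Real.sqrt L) ≤ (x / (8 * F * L)) * (3/10 * Real.sqrt L) := by
        have hLs : L = Real.sqrt L * Real.sqrt L := (Real.mul_self_sqrt hLpos.le).symm
        have : (x / (8 * F * L)) * (3/10 * Real.sqrt L) = 3/80 * x / (F * Real.sqrt L) := by
          nth_rewrite 1 [hLs]
          field_simp; ring
        rw [this]
        refine div_le_div_of_nonneg_right ?_ (by positivity)
        linarith
    _ ≤ _ := by gcongr
end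

section
/- Suppose ψ:ℕ→ℝ≥0 is decreasing and ∑_{q=1}^∞ ψ(q) = ∞. Then ∑_{q=1}^∞ min{ψ(q), 1/q} = ∞. -/
theorem stmt10 (ψ : ℕ → ℝ) (hψ0 : ∀ q, 0 ≤ ψ q)
    (hψdec : ∀ q r : ℕ, 1 ≤ q → q ≤ r → ψ r ≤ ψ q)
    (hdiv : ¬ Summable ψ) :
    ¬ Summable (fun q : ℕ => min (ψ q) (1 / (q : ℝ))) := by
  intro h
  apply hdiv
  rw [← summable_condensed_iff_of_nonneg (fun n => le_min (hψ0 n) (by positivity))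
    (fun m n hm hmn => min_le_min (hψdec m n hm hmn)
      (one_div_le_one_div_of_le (by exact_mod_cast hm) (by exact_mod_cast hmn)))] at h
  rw [← summable_condensed_iff_of_nonneg hψ0 (fun m n hm hmn => hψdec m n hm hmn)]
  have key : ∀ k : ℕ, (2:ℝ) ^ k * min (ψ (2 ^ k)) (1 / ((2 ^ k : ℕ) : ℝ))
      = min ((2:ℝ) ^ k * ψ (2 ^ k)) 1 := by
    intro k
    rw [mul_min_of_nonneg _ _ (by positivity)]
    congr 1
    push_cast
    field_simp
  have ht := h.tendsto_atTop_zero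
  have hev := ht.eventually (gt_mem_nhds (zero_lt_one : (0:ℝ) < 1))
  refine h.congr_atTop ?_
  filter_upwards [hev] with k hk
  rw [key] at hk ⊢
  rcases min_lt_iff.1 hk with h1 | h1
  · exact min_eq_left h1.le
  · exact absurd h1 (lt_irrefl _)
end

section
/- Let γ=(γ_q)_{q≥1} be a sequence of real numbers and let ψ:ℕ→[0,1/2]. For each q∈ℕ define A_q = {α ∈ [0,1] : ‖qα − γ_q‖ < ψ(q)}. Then for all integers 1 ≤ r < q, meas(A_q ∩ A_r) ≤ 2·meas(A_q)·meas(A_r) + (gcd(q,r)/q)·meas(A_q). -/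
open MeasureTheory ENNReal

lemma dni_lt_iff (x e : ℝ) : distNearestInt x < e ↔ ∃ m : ℤ, |x - m| < e := by
  constructor
  · intro h
    exact ⟨round x, h⟩
  · rintro ⟨m, hm⟩
    exact lt_of_le_of_lt (round_le x m) hm

/-- the periodic version of the sets -/
def perSet (n : ℕ) (g e : ℝ) : Set ℝ := {x : ℝ | ∃ m : ℤ, |n * x - g - m| < e}

lemma perSet_meas (n : ℕ) (g e : ℝ) : MeasurableSet (perSet n g e) := by
  apply IsOpen.measurableSet
  have : perSet n g e = ⋃ m : ℤ, {x : ℝ | |n * x - g - m| < e} := by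
    ext x; simp [perSet]
  rw [this]
  refine isOpen_iUnion fun m => isOpen_lt (by fun_prop) (by fun_prop)

lemma perSet_shift (n : ℕ) (g e x y : ℝ) (z : ℤ) (h : n * y = z) :
    (y + x) ∈ perSet n g e ↔ x ∈ perSet n g e := by
  constructor
  · rintro ⟨m, hm⟩
    refine ⟨m - z, ?_⟩
    push_cast
    rw [← h]
    convert hm using 2
    ring
  · rintro ⟨m, hm⟩
    refine ⟨m + z, ?_⟩
    push_cast
    rw [← h]
    convert hm using 2
    ring

lemma per_vol (E : Set ℝ) (hE : MeasurableSet E) (hp : ∀ (z : ℤ) x, (z : ℝ) + x ∈ E ↔ x ∈ E)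
    (s t : ℝ) : volume (E ∩ Set.Ioc s (s+1)) = volume (E ∩ Set.Ioc t (t+1)) := by
  refine IsAddFundamentalDomain.measure_set_eq (G := AddSubgroup.zmultiples (1:ℝ))
    (isAddFundamentalDomain_Ioc zero_lt_one s) (isAddFundamentalDomain_Ioc zero_lt_one t) hE ?_
  rintro ⟨g, hg⟩
  obtain ⟨z, rfl⟩ := AddSubgroup.mem_zmultiples_iff.1 hg
  ext x
  have := hp z x
  simpa [AddSubgroup.vadd_def] using this

lemma shift_vol (E : Set ℝ) (hE : MeasurableSet E) (hp : ∀ (z : ℤ) x, (z : ℝ) + x ∈ E ↔ x ∈ E)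
    (y : ℝ) : volume ({x | y + x ∈ E} ∩ Set.Ioc 0 1) = volume (E ∩ Set.Ioc 0 1) := by
  have h1 : {x | y + x ∈ E} ∩ Set.Ioc 0 1 = (fun x => y + x) ⁻¹' (E ∩ Set.Ioc y (y+1)) := by
    ext x; simp
  rw [h1, measure_preimage_add, per_vol E hE hp y 0, zero_add]

lemma perSet_vol_ge (n : ℕ) (hn : 1 ≤ n) (g e : ℝ) (he0 : 0 ≤ e) (he : e ≤ 1/2) :
    ENNReal.ofReal (2 * e) ≤ volume (perSet n g e ∩ Set.Ioc 0 1) := by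
  have hn0 : (0:ℝ) < n := by exact_mod_cast hn
  have h0 := per_vol (perSet n g e) (perSet_meas n g e)
    (fun z x => perSet_shift n g e x z (n * z) (by push_cast; ring)) 0 ((g - 1/2)/n)
  rw [zero_add] at h0
  rw [h0]
  let B : ℕ → Set ℝ := fun j => Set.Ioo ((g + j - e)/n) ((g + j + e)/n)
  have hd : (↑(Finset.range n) : Set ℕ).PairwiseDisjoint B := by
    have key : ∀ i j : ℕ, i < j → Disjoint (B i) (B j) := by
      intro i j hij
      rw [Set.disjoint_left]
      rintro x ⟨_, h2⟩ ⟨h3, _⟩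
      rw [lt_div_iff₀ hn0] at h2
      rw [div_lt_iff₀ hn0] at h3
      have : (i:ℝ) + 1 ≤ j := by exact_mod_cast hij
      linarith
    intro i _ j _ hij
    rcases lt_or_gt_of_ne hij with h | h
    · exact key i j h
    · exact (key j i h).symm
  have hsub : (⋃ j ∈ Finset.range n, B j) ⊆
      perSet n g e ∩ Set.Ioc ((g - 1/2)/n) ((g - 1/2)/n + 1) := by
    intro x hx
    simp only [Set.mem_iUnion, Finset.mem_range] at hx
    obtain ⟨j, hj, h1, h2⟩ := hx
    have hj' : (j:ℝ) + 1 ≤ n := by exact_mod_cast hj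
    have hj0 : (0:ℝ) ≤ j := by positivity
    rw [div_lt_iff₀ hn0] at h1
    rw [lt_div_iff₀ hn0] at h2
    refine ⟨⟨j, ?_⟩, ?_, ?_⟩
    · rw [abs_lt]; push_cast; constructor <;> linarith
    · rw [div_lt_iff₀ hn0]; linarith
    · rw [div_add_one hn0.ne', le_div_iff₀ hn0]; linarith
  refine le_trans ?_ (measure_mono hsub)
  rw [measure_biUnion_finset hd (fun _ _ => measurableSet_Ioo)]
  have : ∀ j ∈ Finset.range n, volume (B j) = ENNReal.ofReal (2 * e / n) := by
    intro j _
    simp only [B, Real.volume_Ioo]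
    congr 1; ring
  rw [Finset.sum_congr rfl this, Finset.sum_const, Finset.card_range, nsmul_eq_mul,
    ← ENNReal.ofReal_natCast, ← ENNReal.ofReal_mul hn0.le]
  apply le_of_eq
  congr 1
  field_simp

open Classical in
lemma count_bound (q r : ℕ) (hr : 1 ≤ r) (hq : 1 ≤ q) (g e x : ℝ) (he0 : 0 ≤ e) :
    (((Finset.range q).filter (fun k : ℕ => (k:ℝ)/q + x ∈ perSet r g e)).card : ℝ)
      ≤ 2 * e * q + Nat.gcd q r := by
  set d := Nat.gcd q r with hd
  have hdpos : 0 < d := Nat.gcd_pos_of_pos_left _ hq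
  obtain ⟨q', r', hcop, hq', hr'⟩ : ∃ q' r' : ℕ, Nat.Coprime q' r' ∧ q = q' * d ∧ r = r' * d :=
    ⟨q / d, r / d, Nat.coprime_div_gcd_div_gcd hdpos, (Nat.div_mul_cancel (Nat.gcd_dvd_left _ _)).symm,
      (Nat.div_mul_cancel (Nat.gcd_dvd_right _ _)).symm⟩
  have hq'pos : 0 < q' := by
    rcases Nat.eq_zero_or_pos q' with h | h
    · simp [h] at hq'; omega
    · exact h
  have hdR : (0:ℝ) < d := by exact_mod_cast hdpos
  have hqR : (0:ℝ) < q' := by exact_mod_cast hq'pos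
  clear_value d
  set y : ℝ := r * x - g with hy
  set a : ℝ := - (q' * y) - e * q' with ha
  set b : ℝ := - (q' * y) + e * q' with hb
  set S := (Finset.range q).filter (fun k : ℕ => (k:ℝ)/q + x ∈ perSet r g e) with hS
  have hex : ∀ k ∈ S, ∃ n : ℤ, n ∈ Finset.Ioo ⌊a⌋ ⌈b⌉ ∧ ∃ m : ℤ, n = r' * k - q' * m := by
    intro k hk
    obtain ⟨m, hm⟩ := (Finset.mem_filter.1 hk).2
    refine ⟨r' * k - q' * m, ?_, m, rfl⟩
    have e1 : (r:ℝ) * (k / q + x) - g - m = (q' * y + (r' * k - q' * m)) / q' := by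
      rw [hy, hq', hr']; push_cast; field_simp; ring
    rw [e1, abs_lt, div_lt_iff₀ hqR, lt_div_iff₀ hqR] at hm
    rw [Finset.mem_Ioo, Int.floor_lt, Int.lt_ceil]
    push_cast
    constructor <;> linarith [hm.1, hm.2]
  choose! f hf hf2 using hex
  have hcard := Finset.card_le_mul_card_image_of_maps_to (s := S) (t := Finset.Ioo ⌊a⌋ ⌈b⌉)
    (f := f) hf d (by
      intro n _
      have : (Finset.filter (fun k => f k = n) S).card ≤ (Finset.range d).card := by
        apply Finset.card_le_card_of_injOn (fun k => k / q')
        · intro k hk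
          simp only [Finset.coe_filter, Set.mem_setOf_eq, hS, Finset.mem_filter, Finset.mem_range] at hk
          simp only [Finset.coe_range, Set.mem_Iio]
          rw [Nat.div_lt_iff_lt_mul hq'pos, mul_comm, ← hq']
          exact hk.1.1
        · intro k hk l hl hkl
          simp only [Finset.coe_filter, Set.mem_setOf_eq] at hk hl
          obtain ⟨m, hm⟩ := hf2 k hk.1
          obtain ⟨m', hm'⟩ := hf2 l hl.1
          rw [hk.2] at hm
          rw [hl.2] at hm'
          have h1 : (q':ℤ) ∣ r' * ((k:ℤ) - l) := ⟨m - m', by linear_combination hm' - hm⟩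
          have h2 : (q':ℤ) ∣ (k:ℤ) - l :=
            (Int.isCoprime_iff_gcd_eq_one.2 (by simpa using hcop)).dvd_of_dvd_mul_left h1
          have h3 : l ≡ k [MOD q'] := (Nat.modEq_iff_dvd).2 h2
          have h4 : l % q' = k % q' := h3
          have hkl' : k / q' = l / q' := hkl
          rw [← Nat.div_add_mod k q', ← Nat.div_add_mod l q', hkl', h4]
      simpa using this)
  have hI : ((Finset.Ioo ⌊a⌋ ⌈b⌉).card : ℝ) ≤ 2 * e * q' + 1 := by
    rw [Int.card_Ioo]
    have h5 : (0:ℝ) ≤ 2 * e * q' := by positivity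
    have h1 := Int.lt_floor_add_one a
    have h2 := Int.ceil_lt_add_one b
    rcases le_total 0 (⌈b⌉ - ⌊a⌋ - 1) with h | h
    · have : (((⌈b⌉ - ⌊a⌋ - 1).toNat : ℤ) : ℝ) = ((⌈b⌉ - ⌊a⌋ - 1 : ℤ) : ℝ) := by
        rw [Int.toNat_of_nonneg h]
      rw [Int.cast_natCast] at this
      rw [this]; push_cast; linarith
    · rw [Int.toNat_of_nonpos h]; push_cast; linarith
  have hc : (S.card : ℝ) ≤ d * ((Finset.Ioo ⌊a⌋ ⌈b⌉).card : ℝ) := by exact_mod_cast hcard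
  have hqq : (q:ℝ) = q' * d := by exact_mod_cast hq'
  rw [hqq]
  nlinarith

lemma main_bound (q r : ℕ) (hr : 1 ≤ r) (hq : 1 ≤ q) (g g' e e' : ℝ) (he0 : 0 ≤ e) :
    (q : ℝ≥0∞) * volume (perSet q g' e' ∩ perSet r g e ∩ Set.Ioc 0 1) ≤
      ENNReal.ofReal (2 * e * q + Nat.gcd q r) * volume (perSet q g' e' ∩ Set.Ioc 0 1) := by
  classical
  have hqR : (q:ℝ) ≠ 0 := by positivity
  set P := perSet q g' e'
  set R := perSet r g e
  have hP : MeasurableSet P := perSet_meas _ _ _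
  have hR : MeasurableSet R := perSet_meas _ _ _
  have hk : ∀ k : ℕ, volume (P ∩ R ∩ Set.Ioc 0 1) =
      ∫⁻ x in P ∩ Set.Ioc 0 1, ({x | (k:ℝ)/q + x ∈ R}).indicator 1 x := by
    intro k
    have hm : MeasurableSet {x | (k:ℝ)/q + x ∈ R} :=
      (measurable_const_add ((k:ℝ)/q)) hR
    rw [lintegral_indicator_one hm, Measure.restrict_apply hm,
      ← shift_vol (P ∩ R) (hP.inter hR) ?_ ((k:ℝ)/q)]
    · congr 1
      ext x
      have := perSet_shift q g' e' x ((k:ℝ)/q) k (by push_cast; field_simp)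
      simp only [Set.mem_inter_iff, Set.mem_setOf_eq]
      change _ ∈ P ↔ _ ∈ P at this
      rw [this]; tauto
    · intro z x
      exact and_congr (perSet_shift q g' e' x z (q * z) (by push_cast; ring))
        (perSet_shift r g e x z (r * z) (by push_cast; ring))
  calc (q : ℝ≥0∞) * volume (P ∩ R ∩ Set.Ioc 0 1)
      = ∑ k ∈ Finset.range q, volume (P ∩ R ∩ Set.Ioc 0 1) := by simp
    _ = ∑ k ∈ Finset.range q,
        ∫⁻ x in P ∩ Set.Ioc 0 1, ({x | (k:ℝ)/q + x ∈ R}).indicator 1 x :=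
        Finset.sum_congr rfl fun k _ => hk k
    _ = ∫⁻ x in P ∩ Set.Ioc 0 1,
          ∑ k ∈ Finset.range q, ({x | (k:ℝ)/q + x ∈ R}).indicator 1 x := by
        rw [lintegral_finsetSum]
        intro k _
        exact measurable_one.indicator ((measurable_const_add ((k:ℝ)/q)) hR)
    _ ≤ ∫⁻ x in P ∩ Set.Ioc 0 1, ENNReal.ofReal (2 * e * q + Nat.gcd q r) := by
        apply lintegral_mono
        intro x
        have := count_bound q r hr hq g e x he0
        simp only [Set.indicator_apply, Set.mem_setOf_eq, Pi.one_apply, Finset.sum_boole]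
        rw [← ENNReal.ofReal_natCast]
        exact ENNReal.ofReal_le_ofReal this
    _ = _ := by rw [setLIntegral_const]

theorem stmt11 (γ : ℕ → ℝ) (ψ : ℕ → ℝ) (hψ : ∀ q, ψ q ∈ Set.Icc (0:ℝ) (1/2))
    (A : ℕ → Set ℝ)
    (hA : ∀ q, A q = {α ∈ Set.Icc (0:ℝ) 1 | distNearestInt (q * α - γ q) < ψ q})
    (q r : ℕ) (hr : 1 ≤ r) (hrq : r < q) :
    volume (A q ∩ A r) ≤
      2 * volume (A q) * volume (A r) +
        ((Nat.gcd q r : ℝ≥0∞) / (q : ℝ≥0∞)) * volume (A q) := by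
  have hA' : ∀ n, A n = perSet n (γ n) (ψ n) ∩ Set.Icc 0 1 := by
    intro n
    rw [hA]
    ext x
    simp only [dni_lt_iff, perSet, Set.mem_inter_iff, Set.mem_setOf_eq]
    tauto
  have hae : ∀ E : Set ℝ, volume (E ∩ Set.Icc 0 1) = volume (E ∩ Set.Ioc 0 1) := fun E =>
    measure_congr ((ae_eq_refl E).inter Ioc_ae_eq_Icc.symm)
  have hq : 1 ≤ q := by omega
  have hq0 : (q : ℝ≥0∞) ≠ 0 := by simp; omega
  have hqt : (q : ℝ≥0∞) ≠ ⊤ := ENNReal.natCast_ne_top q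
  have hinter : A q ∩ A r = perSet q (γ q) (ψ q) ∩ perSet r (γ r) (ψ r) ∩ Set.Icc 0 1 := by
    rw [hA', hA']; ext x; simp only [Set.mem_inter_iff]; tauto
  have hm := main_bound q r hr hq (γ r) (γ q) (ψ r) (ψ q) (hψ r).1
  have hv := perSet_vol_ge r hr (γ r) (ψ r) (hψ r).1 (hψ r).2
  rw [hinter, hA', hA', hae, hae, hae]
  set V := volume (perSet q (γ q) (ψ q) ∩ perSet r (γ r) (ψ r) ∩ Set.Ioc 0 1)
  set a := volume (perSet q (γ q) (ψ q) ∩ Set.Ioc 0 1)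
  set b := volume (perSet r (γ r) (ψ r) ∩ Set.Ioc 0 1)
  have h2 : (0:ℝ) ≤ 2 * ψ r := by linarith [(hψ r).1]
  rw [ENNReal.ofReal_add (by positivity) (by positivity), ENNReal.ofReal_mul h2,
    ENNReal.ofReal_natCast, ENNReal.ofReal_natCast] at hm
  have hm2 : V ≤ ((b * q + Nat.gcd q r) * a) / q := by
    rw [ENNReal.le_div_iff_mul_le (Or.inl hq0) (Or.inl hqt), mul_comm]
    refine hm.trans ?_
    gcongr
  refine hm2.trans ?_
  have e1 : ((b * q + Nat.gcd q r) * a) / q = a * b + ((Nat.gcd q r : ℝ≥0∞) / q) * a := by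
    have : (q : ℝ≥0∞) * (q : ℝ≥0∞)⁻¹ = 1 := ENNReal.mul_inv_cancel hq0 hqt
    simp only [div_eq_mul_inv]
    calc _ = a * b * ((q : ℝ≥0∞) * (q : ℝ≥0∞)⁻¹) + (Nat.gcd q r : ℝ≥0∞) * (q : ℝ≥0∞)⁻¹ * a := by ring
      _ = _ := by rw [this, mul_one]
  rw [e1]
  gcongr
  exact le_mul_of_one_le_left zero_le (by norm_num)
end
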